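/- arXiv:2601.20018 — 3 statements merged into one kernel-verified Lean document; each statement's English description precedes it below -/
import Mathlib

section
/- There exists a universal constant K > 0 such that the following holds. Let N ≥ 20, let C = [c_{ij}] ∈ R^{N×N} be doubly centered, and let A = [a_{ij}] ∈ R^{N×N} have all entries in [−1,1]. Let Q_QF := Σ_{i,j∈[N]} c_{ij} a_{π(i)π(j)}. Then for every t > 0, P( Q_QF − E[Q_QF] ≥ t ) ≤ exp( − K t² / ( ‖C‖_F² + ( ‖C‖_op + max_{σ∈S_N} ‖C ∘ A^σ‖_op ) t ) ). -/
open scoped BigOperators Classical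

/-- Spectral (operator) norm of a real matrix, viewed as a linear map
between Euclidean spaces. -/
noncomputable def opNorm {m n : ℕ} (M : Matrix (Fin m) (Fin n) ℝ) : ℝ :=
  ‖LinearMap.toContinuousLinearMap (Matrix.toEuclideanLin M)‖

/-- Frobenius norm of a real matrix. -/
noncomputable def frobNorm {m n : ℕ} (M : Matrix (Fin m) (Fin n) ℝ) : ℝ :=
  Real.sqrt (∑ i, ∑ j, (M i j) ^ 2)

/-- Expectation of `f` under the uniform distribution on `S_N`. -/
noncomputable def permExp (N : ℕ) (f : Equiv.Perm (Fin N) → ℝ) : ℝ :=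
  (∑ σ : Equiv.Perm (Fin N), f σ) / (Nat.factorial N : ℝ)

/-- Probability of an event under the uniform distribution on `S_N`. -/
noncomputable def permProb (N : ℕ) (p : Equiv.Perm (Fin N) → Prop) : ℝ :=
  ((Finset.univ.filter p).card : ℝ) / (Nat.factorial N : ℝ)


lemma exists_perm_ext {α κ : Type} [Fintype α] [DecidableEq α] (p q : κ → α) (hp : Function.Injective p)
    (hq : Function.Injective q) : ∃ σ : Equiv.Perm α, ∀ k, σ (p k) = q k := by
  classical
  let e : {a // a ∈ Set.range p} ≃ {a // a ∈ Set.range q} :=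
    (Equiv.ofInjective p hp).symm.trans (Equiv.ofInjective q hq)
  refine ⟨e.extendSubtype, fun k => ?_⟩
  have h := Equiv.extendSubtype_apply_of_mem e (p k) ⟨k, rfl⟩
  rw [h]
  have : (Equiv.ofInjective p hp).symm ⟨p k, ⟨k, rfl⟩⟩ = k := by
    rw [Equiv.symm_apply_eq]; rfl
  simp [e, this]

noncomputable def sg (b : Bool) : ℝ := if b then 1 else -1

lemma rad_lin (n : ℕ) (w : Fin n → ℝ) :
    ∑ ε : Fin n → Bool, Real.exp (∑ i, sg (ε i) * w i) ≤ 2 ^ n * Real.exp ((∑ i, w i ^ 2) / 2) := by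
  have h1 : ∑ ε : Fin n → Bool, Real.exp (∑ i, sg (ε i) * w i)
      = ∏ i, ∑ b : Bool, Real.exp (sg b * w i) := by
    rw [Finset.prod_univ_sum, Fintype.piFinset_univ]
    simp only [Real.exp_sum]
  rw [h1]
  have h2 : (2:ℝ) ^ n * Real.exp ((∑ i, w i ^ 2) / 2) = ∏ i, (2 * Real.exp (w i ^ 2 / 2)) := by
    rw [Finset.prod_mul_distrib, ← Real.exp_sum, Finset.sum_div]; simp
  rw [h2]
  apply Finset.prod_le_prod
  · intro i _; positivity
  · intro i _
    have := Real.cosh_le_exp_half_sq (w i)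
    rw [Real.cosh_eq] at this
    simp [sg]
    linarith

lemma rad_quad : ∀ (n : ℕ) (R : Fin n → Fin n → ℝ), (∀ i j, R i j = R j i) →
    (∀ x : Fin n → ℝ, 0 ≤ ∑ i, ∑ j, x i * R i j * x j) →
    (∀ x : Fin n → ℝ, 4 * ∑ i, ∑ j, x i * R i j * x j ≤ ∑ i, x i ^ 2) →
    ∑ ε : Fin n → Bool, Real.exp (∑ i, ∑ j, sg (ε i) * R i j * sg (ε j))
      ≤ 2 ^ n * Real.exp (2 * ∑ i, R i i) := by
  intro n
  induction n with
  | zero => intro R _ _ _; simp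
  | succ n ih =>
    intro R hs h0 h1
    set r := R 0 0 with hr
    set v : Fin n → ℝ := fun i => R 0 i.succ with hv
    have key : ∀ (a : ℝ) (y : Fin n → ℝ),
        ∑ i, ∑ j, (Fin.cons a y : Fin (n+1) → ℝ) i * R i j * (Fin.cons a y : Fin (n+1) → ℝ) j
        = a ^ 2 * r + 2 * a * (∑ i, v i * y i) + ∑ i, ∑ j, y i * R i.succ j.succ * y j := by
      intro a y
      simp only [Fin.sum_univ_succ, Fin.cons_zero, Fin.cons_succ, Finset.sum_add_distrib]
      have e1 : ∑ i : Fin n, a * R 0 i.succ * y i = a * ∑ i, v i * y i := by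
        rw [Finset.mul_sum]; exact Finset.sum_congr rfl (fun i _ => by simp [hv]; ring)
      have e2 : ∑ i : Fin n, y i * R i.succ 0 * a = a * ∑ i, v i * y i := by
        rw [Finset.mul_sum]; exact Finset.sum_congr rfl (fun i _ => by simp [hv, hs i.succ 0]; ring)
      rw [e1, e2]; ring
    have nrm : ∀ (a : ℝ) (y : Fin n → ℝ), ∑ i, (Fin.cons a y : Fin (n+1) → ℝ) i ^ 2 = a ^ 2 + ∑ i, y i ^ 2 := by
      intro a y; simp [Fin.sum_univ_succ]
    have r0 : 0 ≤ r := by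
      have := h0 (Fin.cons 1 0); rw [key] at this; simpa using this
    have H0 : ∀ (a : ℝ) (y : Fin n → ℝ), 0 ≤ a ^ 2 * r + 2 * a * (∑ i, v i * y i) + ∑ i, ∑ j, y i * R i.succ j.succ * y j := by
      intro a y; rw [← key]; exact h0 _
    have H1 : ∀ (a : ℝ) (y : Fin n → ℝ), 4 * (a ^ 2 * r + 2 * a * (∑ i, v i * y i) + ∑ i, ∑ j, y i * R i.succ j.succ * y j) ≤ a ^ 2 + ∑ i, y i ^ 2 := by
      intro a y; rw [← key, ← nrm]; exact h1 _
    let R' : Fin n → Fin n → ℝ := fun i j => R i.succ j.succ + 2 * v i * v j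
    have quad : ∀ y : Fin n → ℝ, ∑ i, ∑ j, y i * R' i j * y j
        = ∑ i, ∑ j, y i * R i.succ j.succ * y j + 2 * (∑ i, v i * y i) ^ 2 := by
      intro y
      rw [pow_two, Finset.sum_mul_sum, Finset.mul_sum, ← Finset.sum_add_distrib]
      refine Finset.sum_congr rfl (fun i _ => ?_)
      rw [Finset.mul_sum, ← Finset.sum_add_distrib]
      exact Finset.sum_congr rfl (fun j _ => by simp [R']; ring)
    have ih' := ih R' (fun i j => by simp only [R']; rw [hs]; ring)
      (fun y => by rw [quad]; have := H0 0 y; nlinarith [sq_nonneg (∑ i, v i * y i)])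
      (fun y => by
        rw [quad]
        have := H1 (4 * ∑ i, v i * y i) y
        nlinarith [sq_nonneg (∑ i, v i * y i), mul_nonneg r0 (sq_nonneg (∑ i, v i * y i))])
    have hvv : ∑ i, v i * v i ≤ r / 4 := by
      have a1 := H0 (-1/4) v
      have a2 := H1 0 v
      have a3 : ∑ i, v i ^ 2 = ∑ i, v i * v i := Finset.sum_congr rfl (fun i _ => by ring)
      rw [a3] at a2
      nlinarith
    have split : ∑ ε : Fin (n+1) → Bool, Real.exp (∑ i, ∑ j, sg (ε i) * R i j * sg (ε j))
        = ∑ ε : Fin n → Bool, ∑ b : Bool, Real.exp (r + 2 * sg b * (∑ i, v i * sg (ε i)) + ∑ i, ∑ j, sg (ε i) * R i.succ j.succ * sg (ε j)) := by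
      rw [← (Fin.consEquiv (fun _ : Fin (n+1) => Bool)).sum_comp, Fintype.sum_prod_type, Finset.sum_comm]
      refine Finset.sum_congr rfl (fun ε _ => Finset.sum_congr rfl (fun b _ => ?_))
      congr 1
      have := key (sg b) (fun i => sg (ε i))
      have hb : sg b ^ 2 = 1 := by cases b <;> simp [sg]
      rw [hb, one_mul] at this
      rw [← this]
      refine Finset.sum_congr rfl (fun i _ => Finset.sum_congr rfl (fun j _ => ?_))
      congr 1
      · congr 1
        refine Fin.cases ?_ (fun i => ?_) i <;> simp [Fin.consEquiv]
      · refine Fin.cases ?_ (fun i => ?_) j <;> simp [Fin.consEquiv]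
    rw [split]
    calc _ ≤ ∑ ε : Fin n → Bool, 2 * Real.exp r * Real.exp (∑ i, ∑ j, sg (ε i) * R' i j * sg (ε j)) := by
          refine Finset.sum_le_sum (fun ε _ => ?_)
          rw [quad]
          set q := ∑ i, v i * sg (ε i)
          set z := ∑ i, ∑ j, sg (ε i) * R i.succ j.succ * sg (ε j)
          have := Real.cosh_le_exp_half_sq (2 * q)
          rw [Real.cosh_eq] at this
          have e : Real.exp ((2*q)^2/2) = Real.exp (2 * q^2) := by congr 1; ring
          rw [e] at this
          simp only [Fintype.sum_bool, sg, if_true, Real.exp_add]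
          simp
          have := Real.exp_pos r
          have := Real.exp_pos z
          have : 0 < Real.exp r * Real.exp z := by positivity
          nlinarith
      _ = 2 * Real.exp r * ∑ ε : Fin n → Bool, Real.exp (∑ i, ∑ j, sg (ε i) * R' i j * sg (ε j)) := by
          rw [Finset.mul_sum]
      _ ≤ 2 * Real.exp r * (2 ^ n * Real.exp (2 * ∑ i, R' i i)) := by gcongr
      _ = 2 ^ (n+1) * Real.exp (r + 2 * ∑ i, R' i i) := by rw [Real.exp_add]; ring
      _ ≤ _ := by
          gcongr
          rw [Fin.sum_univ_succ]
          simp only [R', Finset.sum_add_distrib]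
          have : ∑ i, 2 * v i * v i = 2 * ∑ i, v i * v i := by
            rw [Finset.mul_sum]; exact Finset.sum_congr rfl (fun i _ => by ring)
          rw [this, ← hr]; linarith

lemma rad_bilin (m : ℕ) (H : Fin m → Fin m → ℝ) (hH : ∀ x : Fin m → ℝ,
      2 * ∑ e, (∑ f, H e f * x f) ^ 2 ≤ ∑ f, x f ^ 2) :
    ∑ ε' : Fin m → Bool, ∑ ε : Fin m → Bool, Real.exp (∑ e, ∑ f, sg (ε e) * sg (ε' f) * H e f)
      ≤ 2 ^ m * 2 ^ m * Real.exp (∑ e, ∑ f, H e f ^ 2) := by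
  let R : Fin m → Fin m → ℝ := fun i j => (∑ e, H e i * H e j) / 2
  have quad : ∀ x : Fin m → ℝ, ∑ i, ∑ j, x i * R i j * x j = (∑ e, (∑ f, H e f * x f) ^ 2) / 2 := by
    intro x
    have e1 : ∀ i j, x i * R i j * x j = ∑ e, (H e i * x i) * (H e j * x j) / 2 := by
      intro i j
      simp only [R]
      rw [Finset.sum_div, Finset.mul_sum, Finset.sum_mul]
      exact Finset.sum_congr rfl (fun e _ => by ring)
    simp only [e1, pow_two, Finset.sum_mul_sum, Finset.sum_div]
    have e2 : ∀ i, ∑ j, ∑ e, (H e i * x i) * (H e j * x j) / 2 = ∑ e, ∑ j, (H e i * x i) * (H e j * x j) / 2 :=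
      fun i => Finset.sum_comm
    simp only [e2]
    rw [Finset.sum_comm]
  have := rad_quad m R (fun i j => by simp only [R]; congr 1; exact Finset.sum_congr rfl (fun e _ => mul_comm _ _))
    (fun x => by rw [quad]; positivity) (fun x => by rw [quad]; linarith [hH x])
  calc _ ≤ ∑ ε' : Fin m → Bool, 2 ^ m * Real.exp (∑ i, ∑ j, sg (ε' i) * R i j * sg (ε' j)) := by
        refine Finset.sum_le_sum (fun ε' _ => ?_)
        rw [quad]
        refine le_trans (le_of_eq ?_) (rad_lin m (fun e => ∑ f, H e f * sg (ε' f)))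
        refine Finset.sum_congr rfl (fun ε _ => ?_)
        congr 1
        refine Finset.sum_congr rfl (fun e _ => ?_)
        rw [Finset.mul_sum]
        exact Finset.sum_congr rfl (fun f _ => by ring)
    _ = 2 ^ m * ∑ ε' : Fin m → Bool, Real.exp (∑ i, ∑ j, sg (ε' i) * R i j * sg (ε' j)) := by rw [Finset.mul_sum]
    _ ≤ 2 ^ m * (2 ^ m * Real.exp (2 * ∑ i, R i i)) := by gcongr
    _ = _ := by
        rw [← mul_assoc]
        congr 2
        simp only [R]
        rw [← Finset.sum_div, mul_div_cancel₀ _ (by norm_num : (2:ℝ) ≠ 0), Finset.sum_comm]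
        exact Finset.sum_congr rfl (fun f _ => Finset.sum_congr rfl (fun e _ => by ring))


def dd {N : ℕ} (c : Fin N → Fin N → ℝ) (i i' j j' : Fin N) : ℝ :=
  c i j - c i' j - c i j' + c i' j'

def dst {N : ℕ} (i i' j j' : Fin N) : Prop :=
  i ≠ i' ∧ i ≠ j ∧ i ≠ j' ∧ i' ≠ j ∧ i' ≠ j' ∧ j ≠ j'

noncomputable def n4 (N : ℕ) : ℝ :=
  ∑ i : Fin N, ∑ i' : Fin N, ∑ j : Fin N, ∑ j' : Fin N, if dst i i' j j' then (1:ℝ) else 0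

lemma n4_le (N : ℕ) : n4 N ≤ (N:ℝ)^4 := by
  have : n4 N ≤ ∑ i : Fin N, ∑ i' : Fin N, ∑ j : Fin N, ∑ j' : Fin N, (1:ℝ) := by
    unfold n4
    gcongr
    split_ifs <;> norm_num
  refine this.trans (le_of_eq ?_)
  simp; ring

lemma n4_nonneg (N : ℕ) : 0 ≤ n4 N := by
  unfold n4
  refine Finset.sum_nonneg fun _ _ => Finset.sum_nonneg fun _ _ => Finset.sum_nonneg fun _ _ => Finset.sum_nonneg fun _ _ => ?_
  split_ifs <;> norm_num

lemma dst_inj {N : ℕ} {i i' j j' : Fin N} (h : dst i i' j j') : Function.Injective ![i, i', j, j'] := by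
  obtain ⟨h1, h2, h3, h4, h5, h6⟩ := h
  intro a b hab
  fin_cases a <;> fin_cases b <;> simp_all

lemma sum_perm_tuple {N : ℕ} (φ : Fin N → Fin N → Fin N → Fin N → ℝ) (p q r s : Fin N) (h : dst p q r s) :
    n4 N * ∑ ρ : Equiv.Perm (Fin N), φ (ρ p) (ρ q) (ρ r) (ρ s) =
      (Nat.factorial N : ℝ) * ∑ i, ∑ i', ∑ j, ∑ j', if dst i i' j j' then φ i i' j j' else 0 := by
  set T := ∑ ρ : Equiv.Perm (Fin N), φ (ρ p) (ρ q) (ρ r) (ρ s) with hT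
  have h1 : ∀ i i' j j', dst i i' j j' → ∑ ρ : Equiv.Perm (Fin N), φ (ρ i) (ρ i') (ρ j) (ρ j') = T := by
    intro i i' j j' hd
    obtain ⟨σ, hσ⟩ := exists_perm_ext _ _ (dst_inj h) (dst_inj hd)
    have a0 := hσ 0
    have a1 := hσ 1
    have a2 := hσ 2
    have a3 := hσ 3
    simp at a0 a1 a2 a3
    rw [hT]
    refine Fintype.sum_equiv (Equiv.mulRight σ) _ _ fun ρ => ?_
    simp [a0, a1, a2, a3]
  have h2 : n4 N * T = ∑ i, ∑ i', ∑ j, ∑ j', ∑ ρ : Equiv.Perm (Fin N), if dst (ρ i) (ρ i') (ρ j) (ρ j') then φ (ρ i) (ρ i') (ρ j) (ρ j') else 0 := by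
    unfold n4
    simp only [Finset.sum_mul]
    refine Finset.sum_congr rfl fun i _ => Finset.sum_congr rfl fun i' _ => Finset.sum_congr rfl fun j _ => Finset.sum_congr rfl fun j' _ => ?_
    by_cases hd : dst i i' j j'
    · rw [if_pos hd, one_mul, ← h1 i i' j j' hd]
      refine Finset.sum_congr rfl fun ρ _ => ?_
      rw [if_pos]
      simpa [dst] using hd
    · rw [if_neg hd, zero_mul]
      symm
      refine Finset.sum_eq_zero fun ρ _ => ?_
      rw [if_neg]
      simpa [dst] using hd
  have h3 : ∀ ψ : Fin N → Fin N → Fin N → Fin N → ℝ, ∑ i, ∑ i', ∑ j, ∑ j', ∑ ρ : Equiv.Perm (Fin N), ψ (ρ i) (ρ i') (ρ j) (ρ j')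
      = (Nat.factorial N : ℝ) * ∑ i, ∑ i', ∑ j, ∑ j', ψ i i' j j' := by
    intro ψ
    have c1 : ∑ i, ∑ i', ∑ j, ∑ j', ∑ ρ : Equiv.Perm (Fin N), ψ (ρ i) (ρ i') (ρ j) (ρ j')
      = ∑ ρ : Equiv.Perm (Fin N), ∑ i, ∑ i', ∑ j, ∑ j', ψ (ρ i) (ρ i') (ρ j) (ρ j') := by
      rw [Finset.sum_comm (s := (Finset.univ : Finset (Equiv.Perm (Fin N))))]
      refine Finset.sum_congr rfl fun i _ => ?_
      rw [Finset.sum_comm (s := (Finset.univ : Finset (Equiv.Perm (Fin N))))]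
      refine Finset.sum_congr rfl fun i _ => ?_
      rw [Finset.sum_comm (s := (Finset.univ : Finset (Equiv.Perm (Fin N))))]
      refine Finset.sum_congr rfl fun i _ => ?_
      rw [Finset.sum_comm (s := (Finset.univ : Finset (Equiv.Perm (Fin N))))]
    rw [c1]
    have c2 : ∀ ρ : Equiv.Perm (Fin N), ∑ i, ∑ i', ∑ j, ∑ j', ψ (ρ i) (ρ i') (ρ j) (ρ j') = ∑ i, ∑ i', ∑ j, ∑ j', ψ i i' j j' := by
      intro ρ
      exact Fintype.sum_equiv ρ _ _ fun i => Fintype.sum_equiv ρ _ _ fun i' =>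
        Fintype.sum_equiv ρ _ _ fun j => Fintype.sum_equiv ρ _ _ fun j' => rfl
    simp only [c2]
    simp [Fintype.card_perm]
  rw [h2, h3 (fun i i' j j' => if dst i i' j j' then φ i i' j j' else 0)]

lemma dst_expand {N : ℕ} (c a : Fin N → Fin N → ℝ) (i i' j j' : Fin N) :
    (if dst i i' j j' then dd c i i' j j' * dd a i i' j j' else 0) =
      dd c i i' j j' * dd a i i' j j'
       - (if i = j then dd c i i' j j' * dd a i i' j j' else 0)
       - (if i = j' then dd c i i' j j' * dd a i i' j j' else 0)
       - (if i' = j then dd c i i' j j' * dd a i i' j j' else 0)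
       - (if i' = j' then dd c i i' j j' * dd a i i' j j' else 0)
       + (if i = j then (if i' = j' then dd c i i' j j' * dd a i i' j j' else 0) else 0)
       + (if i = j' then (if i' = j then dd c i i' j j' * dd a i i' j j' else 0) else 0) := by
  have z1 : i = i' → dd c i i' j j' = 0 := by rintro rfl; simp [dd]
  have z2 : j = j' → dd c i i' j j' = 0 := by rintro rfl; simp [dd]
  by_cases h1 : i = i'
  · simp [z1 h1]
  by_cases h2 : j = j'
  · simp [z2 h2]
  by_cases h3 : i = j <;> by_cases h4 : i = j' <;> by_cases h5 : i' = j <;> by_cases h6 : i' = j' <;>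
    simp_all [dst]

lemma prod_sum1 {N : ℕ} (x y : ℝ) (u v : Fin N → ℝ) :
    ∑ k, (x - u k) * (y - v k) = N * (x * y) - x * ∑ k, v k - y * ∑ k, u k + ∑ k, u k * v k := by
  have : ∀ k, (x - u k) * (y - v k) = x * y - x * v k - y * u k + u k * v k := fun k => by ring
  simp only [this, Finset.sum_add_distrib, Finset.sum_sub_distrib, ← Finset.mul_sum]
  simp; ring

lemma prod_sum2 {N : ℕ} (u v : Fin N → ℝ) (hu : ∑ k, u k = 0) :
    ∑ l, ∑ k, (u l - u k) * (v l - v k) = 2 * N * ∑ k, u k * v k := by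
  simp only [prod_sum1, hu, Finset.sum_add_distrib, Finset.sum_sub_distrib, ← Finset.mul_sum, ← Finset.sum_mul]
  simp; ring

lemma full_sum {N : ℕ} (c a : Fin N → Fin N → ℝ) (hc : ∀ k, ∑ i, c i k = 0) (hr : ∀ k, ∑ j, c k j = 0) :
   ∑ i, ∑ i', ∑ j, ∑ j', dd c i i' j j' * dd a i i' j j' = 4 * N^2 * ∑ i, ∑ j, c i j * a i j := by
  have e1 : ∀ i i', ∑ j, ∑ j', dd c i i' j j' * dd a i i' j j'
      = 2 * N * ∑ j, (c i j - c i' j) * (a i j - a i' j) := by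
    intro i i'
    rw [← prod_sum2 (fun j => c i j - c i' j) (fun j => a i j - a i' j) (by simp [Finset.sum_sub_distrib, hr])]
    refine Finset.sum_congr rfl fun j _ => Finset.sum_congr rfl fun j' _ => ?_
    simp only [dd]; ring
  simp only [e1, ← Finset.mul_sum]
  have e2 : ∑ i, ∑ i', ∑ j, (c i j - c i' j) * (a i j - a i' j) = ∑ j, ∑ i, ∑ i', (c i j - c i' j) * (a i j - a i' j) := by
    rw [Finset.sum_comm (t := (Finset.univ : Finset (Fin N)))]
    conv_rhs => rw [Finset.sum_comm]
    rw [Finset.sum_comm]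
    refine Finset.sum_congr rfl fun i _ => ?_
    rw [Finset.sum_comm]
  rw [e2]
  have e3 : ∀ j, ∑ i, ∑ i', (c i j - c i' j) * (a i j - a i' j) = 2 * N * ∑ i, c i j * a i j :=
    fun j => prod_sum2 (fun i => c i j) (fun i => a i j) (hc j)
  simp only [e3, ← Finset.mul_sum]
  rw [Finset.sum_comm]; ring

lemma E1_sum {N : ℕ} (c a : Fin N → Fin N → ℝ) (hc : ∀ k, ∑ i, c i k = 0) (hr : ∀ k, ∑ j, c k j = 0) :
   ∑ i, ∑ i', ∑ j', dd c i i' i j' * dd a i i' i j' = 3 * N * ∑ i, ∑ j, c i j * a i j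
     + N^2 * ∑ i, c i i * a i i - N * ∑ i, c i i * (∑ j, a i j + ∑ j, a j i) + (∑ i, c i i) * ∑ i, ∑ j, a i j := by
  have e1 : ∀ i i', ∑ j', dd c i i' i j' * dd a i i' i j'
      = N * ((c i i - c i' i) * (a i i - a i' i)) - (c i i - c i' i) * ((∑ j, a i j) - (∑ j, a i' j))
        + ∑ j, (c i j - c i' j) * (a i j - a i' j) := by
    intro i i'
    have := prod_sum1 (c i i - c i' i) (a i i - a i' i) (fun j => c i j - c i' j) (fun j => a i j - a i' j)
    simp only [Finset.sum_sub_distrib, hr, sub_zero, mul_zero] at this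
    rw [← this]
    refine Finset.sum_congr rfl fun j' _ => ?_
    simp only [dd]; ring
  simp only [e1, Finset.sum_add_distrib, Finset.sum_sub_distrib, ← Finset.mul_sum]
  have e2 : ∑ i, ∑ i', ∑ j, (c i j - c i' j) * (a i j - a i' j) = ∑ j, ∑ i, ∑ i', (c i j - c i' j) * (a i j - a i' j) := by
    conv_rhs => rw [Finset.sum_comm]
    refine Finset.sum_congr rfl fun i _ => ?_
    rw [Finset.sum_comm]
  have e3 : ∀ j, ∑ i, ∑ i', (c i j - c i' j) * (a i j - a i' j) = 2 * N * ∑ i, c i j * a i j :=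
    fun j => prod_sum2 (fun i => c i j) (fun i => a i j) (hc j)
  have e4 : ∑ j, ∑ i, c i j * a i j = ∑ i, ∑ j, c i j * a i j := Finset.sum_comm
  rw [e2]
  simp only [e3, ← Finset.mul_sum, e4]
  have e5 : ∀ i, ∑ i', (c i i - c i' i) * (a i i - a i' i) = N * (c i i * a i i) - c i i * ∑ j, a j i + ∑ j, c j i * a j i := by
    intro i
    rw [prod_sum1 (c i i) (a i i) (fun k => c k i) (fun k => a k i), hc]; ring
  have e6 : ∀ i, ∑ i', (c i i - c i' i) * ((∑ j, a i j) - (∑ j, a i' j)) = N * (c i i * ∑ j, a i j) - c i i * ∑ i, ∑ j, a i j + ∑ k, c k i * ∑ j, a k j := by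
    intro i
    rw [prod_sum1 (c i i) (∑ j, a i j) (fun k => c k i) (fun k => ∑ j, a k j), hc]; ring
  have e7 : ∑ i, ∑ k, c k i * ∑ j, a k j = 0 := by
    rw [Finset.sum_comm]
    simp only [← Finset.sum_mul, hr, zero_mul]; simp
  simp only [e5, e6, mul_add, Finset.sum_add_distrib, Finset.sum_sub_distrib, e7, ← Finset.mul_sum, ← Finset.sum_mul, e4]
  ring

lemma E2_sum {N : ℕ} (c a : Fin N → Fin N → ℝ) (hc : ∀ k, ∑ i, c i k = 0) (hr : ∀ k, ∑ j, c k j = 0) :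
   ∑ i, ∑ i', dd c i i' i i' * dd a i i' i i' = 2 * (∑ i, ∑ j, c i j * a i j) + 2 * (∑ i, ∑ j, c i j * a j i)
     + 2 * (N * ∑ i, c i i * a i i - ∑ i, c i i * (∑ j, a i j + ∑ j, a j i) + (∑ i, c i i) * ∑ i, a i i) := by
  have p : ∀ i i', dd c i i' i i' * dd a i i' i i' =
     c i i * a i i - c i i * a i i' - c i i * a i' i + c i i * a i' i'
     + (c i' i' * a i' i' - c i' i' * a i' i - c i' i' * a i i' + c i' i' * a i i)
     + (c i i' * a i i' + c i' i * a i' i) + (c i i' * a i' i + c i' i * a i i')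
     - c i i' * a i i - c i i' * a i' i' - c i' i * a i i - c i' i * a i' i' := by
    intro i i'; simp only [dd]; ring
  simp only [p, Finset.sum_add_distrib, Finset.sum_sub_distrib]
  rw [Finset.sum_comm (f := fun i i' => c i' i' * a i' i'), Finset.sum_comm (f := fun i i' => c i' i' * a i' i),
    Finset.sum_comm (f := fun i i' => c i' i' * a i i'), Finset.sum_comm (f := fun i i' => c i' i' * a i i),
    Finset.sum_comm (f := fun i i' => c i' i * a i' i), Finset.sum_comm (f := fun i i' => c i' i * a i i'),
    Finset.sum_comm (f := fun i i' => c i i' * a i' i'), Finset.sum_comm (f := fun i i' => c i' i * a i' i')]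
  simp only [mul_add, Finset.sum_add_distrib, ← Finset.mul_sum, ← Finset.sum_mul, hc, hr]
  have q1 : ∑ x, c x x * ((N:ℝ) * a x x) = N * ∑ x, c x x * a x x := by
    rw [Finset.mul_sum]; exact Finset.sum_congr rfl fun x _ => by ring
  simp
  simp only [q1, mul_assoc, ← Finset.mul_sum]
  ring

lemma dd_sym1 {N : ℕ} (c a : Fin N → Fin N → ℝ) (i i' j j' : Fin N) :
    dd c i i' j' j * dd a i i' j' j = dd c i i' j j' * dd a i i' j j' := by simp only [dd]; ring
lemma dd_sym2 {N : ℕ} (c a : Fin N → Fin N → ℝ) (i i' j j' : Fin N) :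
    dd c i' i j j' * dd a i' i j j' = dd c i i' j j' * dd a i i' j j' := by simp only [dd]; ring

lemma dst_sum {N : ℕ} (c a : Fin N → Fin N → ℝ) (hc : ∀ k, ∑ i, c i k = 0) (hr : ∀ k, ∑ j, c k j = 0) :
   (∑ i, ∑ i', ∑ j, ∑ j', if dst i i' j j' then dd c i i' j j' * dd a i i' j j' else 0) =
    (4 * N^2 - 12 * N + 4) * (∑ i, ∑ j, c i j * a i j) + 4 * (∑ i, ∑ j, c i j * a j i)
     + ∑ i, c i i * ((4 * N - 4 * N^2) * a i i + (4 * N - 4) * (∑ j, a i j + ∑ j, a j i))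
     + 4 * (∑ i, c i i) * (∑ i, a i i - ∑ i, ∑ j, a i j) := by
  have f0 := full_sum c a hc hr
  have f1 := E1_sum c a hc hr
  have f2 := E2_sum c a hc hr
  simp only [dst_expand, Finset.sum_add_distrib, Finset.sum_sub_distrib]
  have g1 : (∑ i, ∑ i', ∑ j, ∑ j', if i = j then dd c i i' j j' * dd a i i' j j' else 0)
     = ∑ i, ∑ i', ∑ j', dd c i i' i j' * dd a i i' i j' := by
    refine Finset.sum_congr rfl fun i _ => Finset.sum_congr rfl fun i' _ => ?_
    rw [Finset.sum_comm]
    simp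
  have g2 : (∑ i, ∑ i', ∑ j, ∑ j', if i = j' then dd c i i' j j' * dd a i i' j j' else 0)
     = ∑ i, ∑ i', ∑ j', dd c i i' i j' * dd a i i' i j' := by
    refine Finset.sum_congr rfl fun i _ => Finset.sum_congr rfl fun i' _ => ?_
    simp
    exact Finset.sum_congr rfl fun j _ => dd_sym1 _ _ _ _ _ _
  have g3 : (∑ i, ∑ i', ∑ j, ∑ j', if i' = j then dd c i i' j j' * dd a i i' j j' else 0)
     = ∑ i, ∑ i', ∑ j', dd c i i' i j' * dd a i i' i j' := by
    rw [Finset.sum_comm, ← g1]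
    refine Finset.sum_congr rfl fun i _ => Finset.sum_congr rfl fun i' _ => 
      Finset.sum_congr rfl fun j _ => Finset.sum_congr rfl fun j' _ => ?_
    rw [dd_sym2]
  have g4 : (∑ i, ∑ i', ∑ j, ∑ j', if i' = j' then dd c i i' j j' * dd a i i' j j' else 0)
     = ∑ i, ∑ i', ∑ j', dd c i i' i j' * dd a i i' i j' := by
    rw [Finset.sum_comm, ← g2]
    refine Finset.sum_congr rfl fun i _ => Finset.sum_congr rfl fun i' _ => 
      Finset.sum_congr rfl fun j _ => Finset.sum_congr rfl fun j' _ => ?_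
    rw [dd_sym2]
  have g5 : (∑ i, ∑ i', ∑ j, ∑ j', if i = j then (if i' = j' then dd c i i' j j' * dd a i i' j j' else 0) else 0)
     = ∑ i, ∑ i', dd c i i' i i' * dd a i i' i i' := by
    refine Finset.sum_congr rfl fun i _ => Finset.sum_congr rfl fun i' _ => ?_
    rw [Finset.sum_comm]
    simp
  have g6 : (∑ i, ∑ i', ∑ j, ∑ j', if i = j' then (if i' = j then dd c i i' j j' * dd a i i' j j' else 0) else 0)
     = ∑ i, ∑ i', dd c i i' i i' * dd a i i' i i' := by
    refine Finset.sum_congr rfl fun i _ => Finset.sum_congr rfl fun i' _ => ?_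
    simp
    exact dd_sym1 _ _ _ _ _ _
  rw [g1, g2, g3, g4, g5, g6, f0, f1, f2]
  have l : ∑ i, c i i * ((4 * (N:ℝ) - 4 * N^2) * a i i + (4 * N - 4) * (∑ j, a i j + ∑ j, a j i))
     = (4 * (N:ℝ) - 4 * N^2) * ∑ i, c i i * a i i + (4 * N - 4) * ∑ i, c i i * (∑ j, a i j + ∑ j, a j i) := by
    rw [Finset.mul_sum, Finset.mul_sum, ← Finset.sum_add_distrib]
    exact Finset.sum_congr rfl fun i _ => by ring
  rw [l]; ring

lemma fact_pos' (N : ℕ) : (0:ℝ) < (Nat.factorial N : ℝ) := by exact_mod_cast Nat.factorial_pos N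

lemma permExp_mono {N : ℕ} {f g : Equiv.Perm (Fin N) → ℝ} (h : ∀ σ, f σ ≤ g σ) : permExp N f ≤ permExp N g := by
  unfold permExp
  have := fact_pos' N
  gcongr
  exact h _

lemma permExp_const (N : ℕ) (c : ℝ) : permExp N (fun _ => c) = c := by
  unfold permExp
  have := (fact_pos' N).ne'
  simp [Fintype.card_perm]
  field_simp

lemma permExp_add {N : ℕ} (f g : Equiv.Perm (Fin N) → ℝ) :
    permExp N (fun σ => f σ + g σ) = permExp N f + permExp N g := by
  unfold permExp; rw [Finset.sum_add_distrib, add_div]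

lemma permExp_mul {N : ℕ} (c : ℝ) (f : Equiv.Perm (Fin N) → ℝ) :
    permExp N (fun σ => c * f σ) = c * permExp N f := by
  unfold permExp; rw [← Finset.mul_sum, mul_div_assoc]

lemma permExp_sum {N : ℕ} {ι : Type} (s : Finset ι) (f : ι → Equiv.Perm (Fin N) → ℝ) :
    permExp N (fun σ => ∑ i ∈ s, f i σ) = ∑ i ∈ s, permExp N (f i) := by
  unfold permExp; rw [Finset.sum_comm, Finset.sum_div]

lemma permExp_comm {N : ℕ} (f : Equiv.Perm (Fin N) → Equiv.Perm (Fin N) → ℝ) :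
    permExp N (fun σ => permExp N (fun ρ => f σ ρ)) = permExp N (fun ρ => permExp N (fun σ => f σ ρ)) := by
  unfold permExp; rw [← Finset.sum_div, ← Finset.sum_div, Finset.sum_comm]

lemma permExp_mulRight {N : ℕ} (f : Equiv.Perm (Fin N) → ℝ) (τ : Equiv.Perm (Fin N)) :
    permExp N (fun σ => f (σ * τ)) = permExp N f := by
  unfold permExp
  congr 1
  exact Fintype.sum_equiv (Equiv.mulRight τ) _ _ fun _ => rfl

lemma permExp_jensen {N : ℕ} (f : Equiv.Perm (Fin N) → ℝ) :
    Real.exp (permExp N f) ≤ permExp N (fun σ => Real.exp (f σ)) := by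
  have h := fact_pos' N
  have := convexOn_exp.map_sum_le (t := Finset.univ) (w := fun _ : Equiv.Perm (Fin N) => 1 / (Nat.factorial N : ℝ))
    (p := f) (fun _ _ => by positivity) (by simp [Fintype.card_perm]; field_simp) (fun _ _ => trivial)
  simp only [smul_eq_mul, ← Finset.mul_sum] at this
  unfold permExp
  rw [one_div, inv_mul_eq_div, inv_mul_eq_div] at this
  exact this

lemma opNorm_sq {n : ℕ} (M : Matrix (Fin n) (Fin n) ℝ) (z : Fin n → ℝ) :
    ∑ i, (∑ j, M i j * z j) ^ 2 ≤ opNorm M ^ 2 * ∑ j, z j ^ 2 := by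
  have h := (LinearMap.toContinuousLinearMap (Matrix.toEuclideanLin M)).le_opNorm (WithLp.toLp 2 z)
  have h2 := pow_le_pow_left₀ (norm_nonneg _) h 2
  rw [mul_pow, EuclideanSpace.norm_sq_eq, EuclideanSpace.norm_sq_eq] at h2
  simpa [opNorm, Matrix.toEuclideanLin, Matrix.mulVec, dotProduct] using h2

lemma inj_sum_le {α β : Type} [Fintype α] [Fintype β] (p : α → β) (hp : Function.Injective p) (g : β → ℝ)
    (hg : ∀ b, 0 ≤ g b) : ∑ e, g (p e) ≤ ∑ i, g i := by
  have : ∑ e, g (p e) = ∑ i ∈ Finset.univ.map ⟨p, hp⟩, g i := by simp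
  rw [this]
  exact Finset.sum_le_univ_sum_of_nonneg hg

lemma flip_exists {N m : ℕ} (pt : Bool × Bool × Fin m → Fin N) (hpt : Function.Injective pt)
    (ε ε' : Fin m → Bool) : ∃ τ : Equiv.Perm (Fin N), ∀ (a : Fin N → Fin N → ℝ) (ω : Equiv.Perm (Fin N)) (e f : Fin m),
      dd a ((ω * τ) (pt (false, true, e))) ((ω * τ) (pt (false, false, e)))
         ((ω * τ) (pt (true, true, f))) ((ω * τ) (pt (true, false, f)))
       = sg (ε e) * sg (ε' f) * dd a (ω (pt (false, true, e))) (ω (pt (false, false, e)))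
         (ω (pt (true, true, f))) (ω (pt (true, false, f))) := by
  let q : Bool × Bool × Fin m → Bool × Bool × Fin m := fun k =>
    (k.1, (if (if k.1 then ε' k.2.2 else ε k.2.2) then k.2.1 else !k.2.1), k.2.2)
  have hq : Function.Injective q := by
    rintro ⟨a, b, e⟩ ⟨a', b', e'⟩ h
    simp only [q, Prod.mk.injEq] at h
    obtain ⟨rfl, h2, rfl⟩ := h
    have : b = b' := by
      by_cases hh : (if a = true then ε' e else ε e) = true
      · simpa [hh] using h2
      · simpa [hh] using h2
    rw [this]
  obtain ⟨τ, hτ⟩ := exists_perm_ext pt (fun k => pt (q k)) hpt (hpt.comp hq)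
  refine ⟨τ, fun a ω e f => ?_⟩
  simp only [Equiv.Perm.mul_apply, hτ, q]
  rcases h1 : ε e <;> rcases h2 : ε' f <;> simp [h1, h2, sg, dd] <;> ring

lemma sym_chaos {N m : ℕ} (pt : Bool × Bool × Fin m → Fin N) (hpt : Function.Injective pt)
    (D : Fin m → Fin m → ℝ) (a : Fin N → Fin N → ℝ) (S : ℝ) (B : Equiv.Perm (Fin N) → Fin m → Fin m → ℝ)
    (hB : ∀ ω e f, B ω e f = dd a (ω (pt (false, true, e))) (ω (pt (false, false, e)))
         (ω (pt (true, true, f))) (ω (pt (true, false, f))))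
    (h : ∀ ω (x : Fin m → ℝ), 2 * ∑ e, (∑ f, D e f * B ω e f * x f) ^ 2 ≤ ∑ f, x f ^ 2)
    (hS : ∀ ω, ∑ e, ∑ f, (D e f * B ω e f) ^ 2 ≤ S) :
    permExp N (fun ω => Real.exp (∑ e, ∑ f, D e f * B ω e f)) ≤ Real.exp S := by
  have h1 : ∀ ε ε' : Fin m → Bool, permExp N (fun ω => Real.exp (∑ e, ∑ f, sg (ε e) * sg (ε' f) * (D e f * B ω e f)))
      = permExp N (fun ω => Real.exp (∑ e, ∑ f, D e f * B ω e f)) := by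
    intro ε ε'
    obtain ⟨τ, hτ⟩ := flip_exists pt hpt ε ε'
    rw [← permExp_mulRight (fun ω => Real.exp (∑ e, ∑ f, D e f * B ω e f)) τ]
    congr 1; funext ω; congr 1
    refine Finset.sum_congr rfl fun e _ => Finset.sum_congr rfl fun f _ => ?_
    rw [hB (ω * τ), hτ, ← hB]; ring
  have h2 : permExp N (fun ω => ∑ ε' : Fin m → Bool, ∑ ε : Fin m → Bool, Real.exp (∑ e, ∑ f, sg (ε e) * sg (ε' f) * (D e f * B ω e f)))
      = 2 ^ m * 2 ^ m * permExp N (fun ω => Real.exp (∑ e, ∑ f, D e f * B ω e f)) := by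
    rw [permExp_sum]
    simp only [permExp_sum, h1]
    simp; ring
  have h3 : permExp N (fun ω => ∑ ε' : Fin m → Bool, ∑ ε : Fin m → Bool, Real.exp (∑ e, ∑ f, sg (ε e) * sg (ε' f) * (D e f * B ω e f)))
      ≤ permExp N (fun _ => 2 ^ m * 2 ^ m * Real.exp S) := by
    refine permExp_mono fun ω => ?_
    refine (rad_bilin m (fun e f => D e f * B ω e f) (h ω)).trans ?_
    gcongr
    exact hS ω
  rw [h2, permExp_const] at h3
  exact le_of_mul_le_mul_left h3 (by positivity)

lemma dd_eq_sum {N : ℕ} (c : Fin N → Fin N → ℝ) (x y : Bool → Fin N) :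
    dd c (x true) (x false) (y true) (y false) = ∑ s : Bool, ∑ t : Bool, sg s * sg t * c (x s) (y t) := by
  simp [dd, sg]; ring

lemma dd_mul_eq {N : ℕ} (c a : Fin N → Fin N → ℝ) (x y x' y' : Bool → Fin N) :
    dd c (x true) (x false) (y true) (y false) * dd a (x' true) (x' false) (y' true) (y' false) =
      ∑ k : Bool × Bool × Bool × Bool, sg k.1 * sg k.2.1 * sg k.2.2.1 * sg k.2.2.2 *
        (c (x k.1) (y k.2.1) * a (x' k.2.2.1) (y' k.2.2.2)) := by
  simp only [dd_eq_sum, Fintype.sum_prod_type, Fintype.sum_bool]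
  ring

lemma sg_sq (b : Bool) : sg b ^ 2 = 1 := by cases b <;> simp [sg]

lemma sum16 (w : Bool × Bool × Bool × Bool → ℝ) :
    (∑ k : Bool × Bool × Bool × Bool, sg k.1 * sg k.2.1 * sg k.2.2.1 * sg k.2.2.2 * w k) ^ 2 ≤ 16 * ∑ k, w k ^ 2 := by
  refine (sq_sum_le_card_mul_sum_sq).trans (le_of_eq ?_)
  simp [mul_pow, sg_sq]

lemma op_piece {N m : ℕ} (pt : Bool × Bool × Fin m → Fin N) (hpt : Function.Injective pt)
    (C A : Matrix (Fin N) (Fin N) ℝ) (M : ℝ)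
    (hM : ∀ σ : Equiv.Perm (Fin N), opNorm (Matrix.hadamard C (A.submatrix σ σ)) ≤ M)
    (ρ ω : Equiv.Perm (Fin N)) (s t u v : Bool) (x : Fin m → ℝ) :
    ∑ e, (∑ f, C (ρ (pt (false, s, e))) (ρ (pt (true, t, f))) * A (ω (pt (false, u, e))) (ω (pt (true, v, f))) * x f) ^ 2
      ≤ M ^ 2 * ∑ f, x f ^ 2 := by
  have inj : ∀ s t : Bool, Function.Injective (fun k : Bool × Fin m => pt (k.1, (if k.1 then t else s), k.2)) := by
    intro s t k k' h
    have := hpt h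
    simp only [Prod.mk.injEq] at this
    exact Prod.ext this.1 this.2.2
  obtain ⟨σ, hσ⟩ := exists_perm_ext (fun k : Bool × Fin m => ρ (pt (k.1, (if k.1 then t else s), k.2)))
    (fun k : Bool × Fin m => ω (pt (k.1, (if k.1 then v else u), k.2)))
    (ρ.injective.comp (inj s t)) (ω.injective.comp (inj u v))
  have hx : ∀ e, σ (ρ (pt (false, s, e))) = ω (pt (false, u, e)) := fun e => by simpa using hσ (false, e)
  have hy : ∀ f, σ (ρ (pt (true, t, f))) = ω (pt (true, v, f)) := fun f => by simpa using hσ (true, f)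
  let q : Fin m → Fin N := fun f => ρ (pt (true, t, f))
  let p : Fin m → Fin N := fun f => ρ (pt (false, s, f))
  have hq : Function.Injective q := fun f f' h => by
    have := hpt (ρ.injective h); simpa using this
  have hp : Function.Injective p := fun f f' h => by
    have := hpt (ρ.injective h); simpa using this
  let z : Fin N → ℝ := Function.extend q x 0
  have hz : ∀ f, z (q f) = x f := fun f => hq.extend_apply _ _ _
  have hz0 : ∀ j, j ∉ Set.range q → z j = 0 := fun j hj => by
    simp only [z]; rw [Function.extend_apply' _ _ _ (by simpa using hj)]; rfl
  set T := Matrix.hadamard C (A.submatrix σ σ) with hT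
  have e1 : ∀ i, ∑ f, T i (q f) * x f = ∑ j, T i j * z j := fun i =>
    Fintype.sum_of_injective q hq _ _ (fun j hj => by rw [hz0 j hj, mul_zero]) (fun f => by rw [hz])
  have e2 : ∑ f, x f ^ 2 = ∑ j, z j ^ 2 :=
    Fintype.sum_of_injective q hq _ _ (fun j hj => by rw [hz0 j hj]; simp) (fun f => by rw [hz])
  calc _ = ∑ e, (∑ f, T (p e) (q f) * x f) ^ 2 := by
        refine Finset.sum_congr rfl fun e _ => ?_
        congr 1
        refine Finset.sum_congr rfl fun f _ => ?_
        simp [hT, Matrix.hadamard_apply, p, q, hx, hy]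
    _ = ∑ e, (∑ j, T (p e) j * z j) ^ 2 := by simp only [e1]
    _ ≤ ∑ i, (∑ j, T i j * z j) ^ 2 := inj_sum_le p hp (fun i => (∑ j, T i j * z j) ^ 2) (fun _ => sq_nonneg _)
    _ ≤ opNorm T ^ 2 * ∑ j, z j ^ 2 := opNorm_sq T z
    _ ≤ M ^ 2 * ∑ f, x f ^ 2 := by
        rw [e2]
        have : 0 ≤ opNorm T := norm_nonneg _
        have := hM σ
        gcongr

lemma op_full {N m : ℕ} (pt : Bool × Bool × Fin m → Fin N) (hpt : Function.Injective pt)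
    (C A : Matrix (Fin N) (Fin N) ℝ) (M : ℝ)
    (hM : ∀ σ : Equiv.Perm (Fin N), opNorm (Matrix.hadamard C (A.submatrix σ σ)) ≤ M)
    (ρ ω : Equiv.Perm (Fin N)) (x : Fin m → ℝ) :
    ∑ e, (∑ f, dd C (ρ (pt (false, true, e))) (ρ (pt (false, false, e))) (ρ (pt (true, true, f))) (ρ (pt (true, false, f)))
      * dd A (ω (pt (false, true, e))) (ω (pt (false, false, e))) (ω (pt (true, true, f))) (ω (pt (true, false, f))) * x f) ^ 2
      ≤ 256 * M ^ 2 * ∑ f, x f ^ 2 := by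
  let w : Fin m → Bool × Bool × Bool × Bool → ℝ := fun e k =>
    ∑ f, C (ρ (pt (false, k.1, e))) (ρ (pt (true, k.2.1, f))) * A (ω (pt (false, k.2.2.1, e))) (ω (pt (true, k.2.2.2, f))) * x f
  calc _ = ∑ e, (∑ k : Bool × Bool × Bool × Bool, sg k.1 * sg k.2.1 * sg k.2.2.1 * sg k.2.2.2 * w e k) ^ 2 := by
        refine Finset.sum_congr rfl fun e _ => ?_
        congr 1
        simp only [w, Finset.mul_sum]
        rw [Finset.sum_comm]
        refine Finset.sum_congr rfl fun f _ => ?_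
        rw [dd_mul_eq C A (fun b => ρ (pt (false, b, e))) (fun b => ρ (pt (true, b, f))) (fun b => ω (pt (false, b, e))) (fun b => ω (pt (true, b, f))), Finset.sum_mul]
        exact Finset.sum_congr rfl fun k _ => by ring
    _ ≤ ∑ e, 16 * ∑ k, w e k ^ 2 := Finset.sum_le_sum fun e _ => sum16 _
    _ = 16 * ∑ k, ∑ e, w e k ^ 2 := by rw [← Finset.mul_sum, Finset.sum_comm]
    _ ≤ 16 * ∑ k : Bool × Bool × Bool × Bool, M ^ 2 * ∑ f, x f ^ 2 := by
        gcongr with k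
        exact op_piece pt hpt C A M hM ρ ω _ _ _ _ x
    _ = _ := by simp; ring

lemma frob_full {N m : ℕ} (pt : Bool × Bool × Fin m → Fin N) (hpt : Function.Injective pt)
    (C A : Matrix (Fin N) (Fin N) ℝ) (hA : ∀ i j, A i j ^ 2 ≤ 1)
    (ρ ω : Equiv.Perm (Fin N)) :
    ∑ e, ∑ f, (dd C (ρ (pt (false, true, e))) (ρ (pt (false, false, e))) (ρ (pt (true, true, f))) (ρ (pt (true, false, f)))
      * dd A (ω (pt (false, true, e))) (ω (pt (false, false, e))) (ω (pt (true, true, f))) (ω (pt (true, false, f)))) ^ 2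
      ≤ 256 * ∑ i, ∑ j, C i j ^ 2 := by
  have piece : ∀ s t : Bool, ∑ e, ∑ f, C (ρ (pt (false, s, e))) (ρ (pt (true, t, f))) ^ 2 ≤ ∑ i, ∑ j, C i j ^ 2 := by
    intro s t
    calc _ ≤ ∑ e, ∑ j, C (ρ (pt (false, s, e))) j ^ 2 := by
          refine Finset.sum_le_sum fun e _ => ?_
          exact inj_sum_le (fun f => ρ (pt (true, t, f))) (fun f f' h => by simpa using hpt (ρ.injective h))
            (fun j => C (ρ (pt (false, s, e))) j ^ 2) (fun _ => sq_nonneg _)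
      _ ≤ _ := inj_sum_le (fun f => ρ (pt (false, s, f))) (fun f f' h => by simpa using hpt (ρ.injective h))
            (fun i => ∑ j, C i j ^ 2) (fun _ => Finset.sum_nonneg fun _ _ => sq_nonneg _)
  calc _ ≤ ∑ e, ∑ f, 16 * ∑ k : Bool × Bool × Bool × Bool, C (ρ (pt (false, k.1, e))) (ρ (pt (true, k.2.1, f))) ^ 2 := by
        refine Finset.sum_le_sum fun e _ => Finset.sum_le_sum fun f _ => ?_
        rw [dd_mul_eq C A (fun b => ρ (pt (false, b, e))) (fun b => ρ (pt (true, b, f))) (fun b => ω (pt (false, b, e))) (fun b => ω (pt (true, b, f)))]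
        refine (sum16 (fun k => C (ρ (pt (false, k.1, e))) (ρ (pt (true, k.2.1, f))) * A (ω (pt (false, k.2.2.1, e))) (ω (pt (true, k.2.2.2, f))))).trans ?_
        refine mul_le_mul_of_nonneg_left (Finset.sum_le_sum fun k _ => ?_) (by norm_num)
        rw [mul_pow]
        exact mul_le_of_le_one_right (sq_nonneg _) (hA _ _)
    _ = 16 * ∑ k : Bool × Bool × Bool × Bool, ∑ e, ∑ f, C (ρ (pt (false, k.1, e))) (ρ (pt (true, k.2.1, f))) ^ 2 := by
        simp only [← Finset.mul_sum]
        congr 1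
        rw [Finset.sum_comm]
        conv_rhs => rw [Finset.sum_comm]
        rw [Finset.sum_comm]
        exact Finset.sum_congr rfl fun e _ => Finset.sum_comm
    _ ≤ 16 * ∑ k : Bool × Bool × Bool × Bool, ∑ i, ∑ j, C i j ^ 2 := by
        gcongr with k
        exact piece _ _
    _ = _ := by simp; ring

lemma avg_bound {N : ℕ} (g : Equiv.Perm (Fin N) → Equiv.Perm (Fin N) → ℝ) (S : ℝ)
    (h : ∀ ρ, permExp N (fun ω => Real.exp (g ω ρ)) ≤ S) :
    permExp N (fun π => Real.exp (permExp N (fun ρ => g (π * ρ) ρ))) ≤ S := by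
  calc _ ≤ permExp N (fun π => permExp N (fun ρ => Real.exp (g (π * ρ) ρ))) :=
        permExp_mono fun π => permExp_jensen _
    _ = permExp N (fun ρ => permExp N (fun π => Real.exp (g (π * ρ) ρ))) := permExp_comm _
    _ = permExp N (fun ρ => permExp N (fun ω => Real.exp (g ω ρ))) := by
        congr 1; funext ρ
        exact permExp_mulRight (fun ω => Real.exp (g ω ρ)) ρ
    _ ≤ permExp N (fun _ => S) := permExp_mono h
    _ = S := permExp_const _ _

lemma center_bound {N : ℕ} (X : Equiv.Perm (Fin N) → ℝ) (k l S : ℝ)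
    (h1 : permExp N (fun π => Real.exp (l * (X π - k))) ≤ Real.exp S)
    (h2 : permExp N (fun π => Real.exp (-l * (X π - k))) ≤ Real.exp S) :
    permExp N (fun π => Real.exp (l * (X π - permExp N X))) ≤ Real.exp (2 * S) := by
  have e1 : permExp N (fun π => -l * (X π - k)) = -l * (permExp N X - k) := by
    rw [permExp_mul]
    congr 1
    have := permExp_add X (fun _ => -k)
    rw [permExp_const] at this
    exact this
  have j := permExp_jensen (fun π => -l * (X π - k))
  rw [e1] at j
  have e2 : ∀ π, Real.exp (l * (X π - permExp N X)) = Real.exp (-l * (permExp N X - k)) * Real.exp (l * (X π - k)) := by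
    intro π; rw [← Real.exp_add]; congr 1; ring
  simp only [e2]
  rw [permExp_mul, two_mul, Real.exp_add]
  refine mul_le_mul (j.trans h2) h1 ?_ (Real.exp_pos _).le
  rw [← permExp_const N 0]
  exact permExp_mono fun _ => (Real.exp_pos _).le

lemma bdd_mgf {N : ℕ} (Y : Equiv.Perm (Fin N) → ℝ) (V l : ℝ) (hY : ∀ π, Y π ^ 2 ≤ V) :
    permExp N (fun π => Real.exp (l * (Y π - permExp N Y))) ≤ Real.exp (2 * l ^ 2 * V) := by
  have e1 : ∀ π, l * (Y π - permExp N Y) = permExp N (fun ρ => l * (Y π - Y ρ)) := by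
    intro π
    rw [permExp_mul]
    congr 1
    have := permExp_add (fun _ => Y π) (fun ρ => -1 * Y ρ)
    rw [permExp_const, permExp_mul] at this
    simp only [neg_one_mul, ← sub_eq_add_neg] at this
    exact this.symm
  set T := permExp N (fun π => permExp N (fun ρ => Real.exp (l * (Y π - Y ρ)))) with hT
  have h1 : permExp N (fun π => Real.exp (l * (Y π - permExp N Y))) ≤ T := by
    refine permExp_mono fun π => ?_
    rw [e1]; exact permExp_jensen _
  have h2 : T = permExp N (fun π => permExp N (fun ρ => Real.exp (-(l * (Y π - Y ρ))))) := by
    rw [hT, permExp_comm]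
    congr 1; funext π; congr 1; funext ρ; congr 1; ring
  have h3 : T + T ≤ permExp N (fun π => permExp N (fun ρ => 2 * Real.exp (2 * l ^ 2 * V))) := by
    nth_rewrite 2 [h2]
    rw [hT, ← permExp_add]
    refine permExp_mono fun π => ?_
    rw [← permExp_add]
    refine permExp_mono fun ρ => ?_
    have := Real.cosh_le_exp_half_sq (l * (Y π - Y ρ))
    rw [Real.cosh_eq] at this
    have h4 : Real.exp ((l * (Y π - Y ρ)) ^ 2 / 2) ≤ Real.exp (2 * l ^ 2 * V) := by
      rw [Real.exp_le_exp]
      have : (Y π - Y ρ) ^ 2 ≤ 4 * V := by nlinarith [hY π, hY ρ, sq_nonneg (Y π + Y ρ)]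
      nlinarith [mul_le_mul_of_nonneg_left this (sq_nonneg l)]
    linarith
  simp only [permExp_const] at h3
  linarith

noncomputable def n2 (N : ℕ) : ℝ := ∑ i : Fin N, ∑ i' : Fin N, if i ≠ i' then (1:ℝ) else 0

lemma n2_le (N : ℕ) : n2 N ≤ (N:ℝ)^2 := by
  have : n2 N ≤ ∑ i : Fin N, ∑ i' : Fin N, (1:ℝ) := by
    unfold n2
    gcongr
    split_ifs <;> norm_num
  refine this.trans (le_of_eq ?_)
  simp; ring

lemma n2_nonneg (N : ℕ) : 0 ≤ n2 N := by
  unfold n2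
  refine Finset.sum_nonneg fun _ _ => Finset.sum_nonneg fun _ _ => ?_
  split_ifs <;> norm_num

lemma sum_perm_pair {N : ℕ} (φ : Fin N → Fin N → ℝ) (h0 : ∀ i, φ i i = 0) (p q : Fin N) (h : p ≠ q) :
    n2 N * ∑ ρ : Equiv.Perm (Fin N), φ (ρ p) (ρ q) =
      (Nat.factorial N : ℝ) * ∑ i, ∑ i', φ i i' := by
  set T := ∑ ρ : Equiv.Perm (Fin N), φ (ρ p) (ρ q) with hT
  have inj : ∀ i j : Fin N, i ≠ j → Function.Injective ![i, j] := by
    intro i j hij a b hab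
    fin_cases a <;> fin_cases b <;> simp_all
  have h1 : ∀ i i', i ≠ i' → ∑ ρ : Equiv.Perm (Fin N), φ (ρ i) (ρ i') = T := by
    intro i i' hd
    obtain ⟨σ, hσ⟩ := exists_perm_ext _ _ (inj _ _ h) (inj _ _ hd)
    have a0 := hσ 0
    have a1 := hσ 1
    simp at a0 a1
    rw [hT]
    refine Fintype.sum_equiv (Equiv.mulRight σ) _ _ fun ρ => ?_
    simp [a0, a1]
  have h2 : n2 N * T = ∑ i, ∑ i', ∑ ρ : Equiv.Perm (Fin N), φ (ρ i) (ρ i') := by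
    unfold n2
    simp only [Finset.sum_mul]
    refine Finset.sum_congr rfl fun i _ => Finset.sum_congr rfl fun i' _ => ?_
    by_cases hd : i = i'
    · subst hd; simp [h0]
    · rw [if_pos hd, one_mul, ← h1 i i' hd]
  have c1 : ∑ i, ∑ i', ∑ ρ : Equiv.Perm (Fin N), φ (ρ i) (ρ i')
      = ∑ ρ : Equiv.Perm (Fin N), ∑ i, ∑ i', φ (ρ i) (ρ i') := by
    rw [Finset.sum_comm (s := (Finset.univ : Finset (Equiv.Perm (Fin N))))]
    refine Finset.sum_congr rfl fun i _ => ?_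
    rw [Finset.sum_comm (s := (Finset.univ : Finset (Equiv.Perm (Fin N))))]
  have c2 : ∀ ρ : Equiv.Perm (Fin N), ∑ i, ∑ i', φ (ρ i) (ρ i') = ∑ i, ∑ i', φ i i' := fun ρ =>
    Fintype.sum_equiv ρ _ _ fun i => Fintype.sum_equiv ρ _ _ fun i' => rfl
  rw [h2, c1]
  simp only [c2]
  simp [Fintype.card_perm]

lemma flip_exists1 {N m : ℕ} (pt : Bool × Fin m → Fin N) (hpt : Function.Injective pt)
    (ε : Fin m → Bool) : ∃ τ : Equiv.Perm (Fin N), ∀ (b : Fin N → ℝ) (ω : Equiv.Perm (Fin N)) (e : Fin m),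
      b ((ω * τ) (pt (true, e))) - b ((ω * τ) (pt (false, e)))
       = sg (ε e) * (b (ω (pt (true, e))) - b (ω (pt (false, e)))) := by
  let q : Bool × Fin m → Bool × Fin m := fun k => ((if ε k.2 then k.1 else !k.1), k.2)
  have hq : Function.Injective q := by
    rintro ⟨b, e⟩ ⟨b', e'⟩ h
    simp only [q, Prod.mk.injEq] at h
    obtain ⟨h2, rfl⟩ := h
    have : b = b' := by
      by_cases hh : ε e = true
      · simpa [hh] using h2
      · simpa [hh] using h2
    rw [this]
  obtain ⟨τ, hτ⟩ := exists_perm_ext pt (fun k => pt (q k)) hpt (hpt.comp hq)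
  refine ⟨τ, fun a ω e => ?_⟩
  simp only [Equiv.Perm.mul_apply, hτ, q]
  rcases h1 : ε e <;> simp [sg]

lemma sym_lin {N m : ℕ} (pt : Bool × Fin m → Fin N) (hpt : Function.Injective pt)
    (D : Fin m → ℝ) (b : Fin N → ℝ) (S : ℝ)
    (hS : ∀ ω : Equiv.Perm (Fin N), (∑ e, (D e * (b (ω (pt (true, e))) - b (ω (pt (false, e))))) ^ 2) / 2 ≤ S) :
    permExp N (fun ω => Real.exp (∑ e, D e * (b (ω (pt (true, e))) - b (ω (pt (false, e)))))) ≤ Real.exp S := by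
  set T := permExp N (fun ω => Real.exp (∑ e, D e * (b (ω (pt (true, e))) - b (ω (pt (false, e)))))) with hT
  have h1 : ∀ ε : Fin m → Bool, permExp N (fun ω => Real.exp (∑ e, sg (ε e) * (D e * (b (ω (pt (true, e))) - b (ω (pt (false, e))))))) = T := by
    intro ε
    obtain ⟨τ, hτ⟩ := flip_exists1 pt hpt ε
    rw [hT, ← permExp_mulRight (fun ω => Real.exp (∑ e, D e * (b (ω (pt (true, e))) - b (ω (pt (false, e)))))) τ]
    congr 1; funext ω; congr 1
    refine Finset.sum_congr rfl fun e _ => ?_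
    rw [hτ]; ring
  have h2 : permExp N (fun ω => ∑ ε : Fin m → Bool, Real.exp (∑ e, sg (ε e) * (D e * (b (ω (pt (true, e))) - b (ω (pt (false, e)))))))
      = 2 ^ m * T := by
    rw [permExp_sum]
    simp only [h1]
    simp
  have h3 : permExp N (fun ω => ∑ ε : Fin m → Bool, Real.exp (∑ e, sg (ε e) * (D e * (b (ω (pt (true, e))) - b (ω (pt (false, e)))))))
      ≤ permExp N (fun _ => 2 ^ m * Real.exp S) := by
    refine permExp_mono fun ω => ?_
    refine (rad_lin m (fun e => D e * (b (ω (pt (true, e))) - b (ω (pt (false, e)))))).trans ?_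
    gcongr
    exact hS ω
  rw [h2, permExp_const] at h3
  exact le_of_mul_le_mul_left h3 (by positivity)

lemma lin_mgf {N m : ℕ} (pt : Bool × Fin m → Fin N) (hpt : Function.Injective pt) (hN : 0 < N) (hm : N ≤ 8 * m)
    (d b : Fin N → ℝ) (β l : ℝ) (hb : ∀ p, |b p| ≤ β) :
    permExp N (fun π => Real.exp (l * (∑ i, d i * b (π i) - (∑ i, d i) * (∑ i, b i) / N)))
      ≤ Real.exp (128 * l ^ 2 * β ^ 2 * ∑ i, d i ^ 2) := by
  have hN' : (0:ℝ) < N := by exact_mod_cast hN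
  have hm' : (N:ℝ) ≤ 8 * m := by exact_mod_cast hm
  have hm0 : (0:ℝ) < m := by linarith
  set θ : ℝ := n2 N / (2 * N * m) with hθ
  have θ0 : 0 ≤ θ := div_nonneg (n2_nonneg N) (by positivity)
  have θ4 : θ ≤ 4 := by
    rw [hθ, div_le_iff₀ (by positivity)]
    have := n2_le N
    nlinarith
  let g : Equiv.Perm (Fin N) → Equiv.Perm (Fin N) → ℝ := fun ω ρ =>
    ∑ e, (l * θ * (d (ρ (pt (true, e))) - d (ρ (pt (false, e))))) * (b (ω (pt (true, e))) - b (ω (pt (false, e))))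
  have key : ∀ π : Equiv.Perm (Fin N), l * (∑ i, d i * b (π i) - (∑ i, d i) * (∑ i, b i) / N) = permExp N (fun ρ => g (π * ρ) ρ) := by
    intro π
    have s1 : ∀ e, n2 N * ∑ ρ : Equiv.Perm (Fin N), (d (ρ (pt (true, e))) - d (ρ (pt (false, e)))) * (b (π (ρ (pt (true, e)))) - b (π (ρ (pt (false, e)))))
       = (Nat.factorial N : ℝ) * (2 * N * (∑ i, d i * b (π i)) - 2 * (∑ i, d i) * ∑ i, b i) := by
      intro e
      rw [sum_perm_pair (fun i i' => (d i - d i') * (b (π i) - b (π i'))) (by simp) _ _ (fun h => by simpa using hpt h)]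
      congr 1
      have hb' : ∑ i, b (π i) = ∑ i, b i := Equiv.sum_comp π b
      have : ∀ i, ∑ i', (d i - d i') * (b (π i) - b (π i')) = N * (d i * b (π i)) - d i * ∑ i, b i - b (π i) * ∑ i, d i + ∑ i, d i * b (π i) := by
        intro i; rw [prod_sum1 (d i) (b (π i)) d (fun i => b (π i)), hb']
      simp only [this, Finset.sum_add_distrib, Finset.sum_sub_distrib, ← Finset.mul_sum, ← Finset.sum_mul, hb']
      simp; ring
    have s2 : permExp N (fun ρ => g (π * ρ) ρ) * (Nat.factorial N : ℝ) = l * θ * ∑ e : Fin m, ∑ ρ : Equiv.Perm (Fin N), (d (ρ (pt (true, e))) - d (ρ (pt (false, e)))) * (b (π (ρ (pt (true, e)))) - b (π (ρ (pt (false, e))))) := by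
      have := (fact_pos' N).ne'
      unfold permExp
      rw [div_mul_cancel₀ _ this, Finset.sum_comm]
      rw [Finset.mul_sum]
      refine Finset.sum_congr rfl fun ρ _ => ?_
      rw [Finset.mul_sum]
      refine Finset.sum_congr rfl fun e _ => ?_
      simp; ring
    have hf := (fact_pos' N)
    refine mul_right_cancel₀ hf.ne' ?_
    rw [s2, hθ]
    have s3 : ∑ e : Fin m, n2 N * ∑ ρ : Equiv.Perm (Fin N), (d (ρ (pt (true, e))) - d (ρ (pt (false, e)))) * (b (π (ρ (pt (true, e)))) - b (π (ρ (pt (false, e)))))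
       = m * ((Nat.factorial N : ℝ) * (2 * N * (∑ i, d i * b (π i)) - 2 * (∑ i, d i) * ∑ i, b i)) := by
      simp only [s1]; simp
    rw [← Finset.mul_sum] at s3
    set U := ∑ e : Fin m, ∑ ρ : Equiv.Perm (Fin N), (d (ρ (pt (true, e))) - d (ρ (pt (false, e)))) * (b (π (ρ (pt (true, e)))) - b (π (ρ (pt (false, e)))))
    have : l * (n2 N / (2 * N * m)) * U = l / (2 * N * m) * (n2 N * U) := by ring
    rw [this, s3]
    field_simp
  simp only [key]
  refine avg_bound g _ fun ρ => ?_
  refine sym_lin pt hpt _ b _ fun ω => ?_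
  have pc : ∀ s : Bool, ∑ e, d (ρ (pt (s, e))) ^ 2 ≤ ∑ i, d i ^ 2 := fun s =>
    inj_sum_le (fun e => ρ (pt (s, e))) (fun f f' h => by simpa using hpt (ρ.injective h)) (fun i => d i ^ 2) (fun _ => sq_nonneg _)
  have β0 : 0 ≤ β := (abs_nonneg _).trans (hb ⟨0, hN⟩)
  have hθ2 : θ ^ 2 ≤ 16 := by nlinarith
  calc _ ≤ (∑ e, (64 * l ^ 2 * β ^ 2) * (2 * d (ρ (pt (true, e))) ^ 2 + 2 * d (ρ (pt (false, e))) ^ 2)) / 2 := by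
        gcongr with e
        have h1 : (b (ω (pt (true, e))) - b (ω (pt (false, e)))) ^ 2 ≤ 4 * β ^ 2 := by
          have a1 := abs_le.1 (hb (ω (pt (true, e))))
          have a2 := abs_le.1 (hb (ω (pt (false, e))))
          nlinarith
        have h2 : (d (ρ (pt (true, e))) - d (ρ (pt (false, e)))) ^ 2 ≤ 2 * d (ρ (pt (true, e))) ^ 2 + 2 * d (ρ (pt (false, e))) ^ 2 := by
          nlinarith [sq_nonneg (d (ρ (pt (true, e))) + d (ρ (pt (false, e))))]
        calc _ = l ^ 2 * θ ^ 2 * (d (ρ (pt (true, e))) - d (ρ (pt (false, e)))) ^ 2 * (b (ω (pt (true, e))) - b (ω (pt (false, e)))) ^ 2 := by ring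
          _ ≤ l ^ 2 * 16 * (2 * d (ρ (pt (true, e))) ^ 2 + 2 * d (ρ (pt (false, e))) ^ 2) * (4 * β ^ 2) := by gcongr
          _ = _ := by ring
    _ = 64 * l ^ 2 * β ^ 2 * (∑ e, d (ρ (pt (true, e))) ^ 2 + ∑ e, d (ρ (pt (false, e))) ^ 2) := by
        rw [← Finset.mul_sum, Finset.sum_add_distrib, ← Finset.mul_sum, ← Finset.mul_sum]; ring
    _ ≤ 64 * l ^ 2 * β ^ 2 * (∑ i, d i ^ 2 + ∑ i, d i ^ 2) := by
        gcongr
        · exact pc true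
        · exact pc false
    _ = _ := by ring

/-- The symmetrised chaos. -/
noncomputable def chaosG {N m : ℕ} (pt : Bool × Bool × Fin m → Fin N) (C A : Matrix (Fin N) (Fin N) ℝ)
    (ω ρ : Equiv.Perm (Fin N)) : ℝ :=
  ∑ e, ∑ f, dd C (ρ (pt (false, true, e))) (ρ (pt (false, false, e))) (ρ (pt (true, true, f))) (ρ (pt (true, false, f)))
      * dd A (ω (pt (false, true, e))) (ω (pt (false, false, e))) (ω (pt (true, true, f))) (ω (pt (true, false, f)))

lemma chaosG_avg {N m : ℕ} (pt : Bool × Bool × Fin m → Fin N) (hpt : Function.Injective pt)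
    (C A : Matrix (Fin N) (Fin N) ℝ) (π : Equiv.Perm (Fin N)) :
    n4 N * permExp N (fun ρ => chaosG pt C A (π * ρ) ρ) = (m:ℝ) ^ 2 *
      ∑ i, ∑ i', ∑ j, ∑ j', if dst i i' j j' then dd C i i' j j' * dd (fun i j => A (π i) (π j)) i i' j j' else 0 := by
  set Z := ∑ i, ∑ i', ∑ j, ∑ j', if dst i i' j j' then dd C i i' j j' * dd (fun i j => A (π i) (π j)) i i' j j' else 0 with hZ
  have hf := fact_pos' N
  have s1 : ∀ e f, n4 N * permExp N (fun ρ => dd C (ρ (pt (false, true, e))) (ρ (pt (false, false, e))) (ρ (pt (true, true, f))) (ρ (pt (true, false, f)))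
      * dd A ((π * ρ) (pt (false, true, e))) ((π * ρ) (pt (false, false, e))) ((π * ρ) (pt (true, true, f))) ((π * ρ) (pt (true, false, f)))) = Z := by
    intro e f
    have hd : dst (pt (false, true, e)) (pt (false, false, e)) (pt (true, true, f)) (pt (true, false, f)) := by
      refine ⟨?_, ?_, ?_, ?_, ?_, ?_⟩ <;> intro h <;> simpa using hpt h
    have := sum_perm_tuple (fun i i' j j' => dd C i i' j j' * dd (fun i j => A (π i) (π j)) i i' j j') _ _ _ _ hd
    rw [← hZ] at this
    unfold permExp
    rw [← mul_div_assoc, div_eq_iff hf.ne', mul_comm Z, ← this]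
    rfl
  unfold chaosG
  rw [permExp_sum, Finset.mul_sum]
  have s2 : ∀ e : Fin m, n4 N * permExp N (fun ρ => ∑ f, dd C (ρ (pt (false, true, e))) (ρ (pt (false, false, e))) (ρ (pt (true, true, f))) (ρ (pt (true, false, f)))
      * dd A ((π * ρ) (pt (false, true, e))) ((π * ρ) (pt (false, false, e))) ((π * ρ) (pt (true, true, f))) ((π * ρ) (pt (true, false, f)))) = m * Z := by
    intro e
    rw [permExp_sum, Finset.mul_sum]
    simp only [s1]; simp
  simp only [s2]; simp; ring

lemma chaosG_mgf {N m : ℕ} (pt : Bool × Bool × Fin m → Fin N) (hpt : Function.Injective pt)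
    (C A : Matrix (Fin N) (Fin N) ℝ) (hA : ∀ i j, A i j ^ 2 ≤ 1) (M μ : ℝ)
    (hM : ∀ σ : Equiv.Perm (Fin N), opNorm (Matrix.hadamard C (A.submatrix σ σ)) ≤ M)
    (hμ : 512 * (μ ^ 2 * M ^ 2) ≤ 1) :
    permExp N (fun π => Real.exp (μ * permExp N (fun ρ => chaosG pt C A (π * ρ) ρ)))
      ≤ Real.exp (256 * μ ^ 2 * ∑ i, ∑ j, C i j ^ 2) := by
  simp only [← permExp_mul]
  refine avg_bound (fun ω ρ => μ * chaosG pt C A ω ρ) _ fun ρ => ?_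
  have := sym_chaos pt hpt (fun e f => μ * dd C (ρ (pt (false, true, e))) (ρ (pt (false, false, e))) (ρ (pt (true, true, f))) (ρ (pt (true, false, f))))
    A (256 * μ ^ 2 * ∑ i, ∑ j, C i j ^ 2) (fun ω e f => dd A (ω (pt (false, true, e))) (ω (pt (false, false, e))) (ω (pt (true, true, f))) (ω (pt (true, false, f))))
    (fun _ _ _ => rfl) (fun ω x => ?_) (fun ω => ?_)
  · refine le_trans (le_of_eq ?_) this
    congr 1; funext ω; congr 1
    simp only [chaosG, Finset.mul_sum, mul_assoc]
  · have h := op_full pt hpt C A M hM ρ ω x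
    have hx : 0 ≤ ∑ f, x f ^ 2 := Finset.sum_nonneg fun _ _ => sq_nonneg _
    simp only [mul_assoc, ← Finset.mul_sum, mul_pow] at h ⊢
    nlinarith [mul_le_mul_of_nonneg_left h (sq_nonneg μ), mul_le_mul_of_nonneg_right hμ hx]
  · have h := frob_full pt hpt C A hA ρ ω
    have := mul_le_mul_of_nonneg_left h (sq_nonneg μ)
    refine le_trans (le_of_eq ?_) (this.trans (le_of_eq (by ring)))
    simp only [Finset.mul_sum]
    exact Finset.sum_congr rfl fun e _ => Finset.sum_congr rfl fun f _ => by ring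

lemma exp_three (x y z : ℝ) : Real.exp (x + y + z) ≤ (1/3) * Real.exp (3 * x) + ((1/3) * Real.exp (3 * y) + (1/3) * Real.exp (3 * z)) := by
  have h := convexOn_exp.map_sum_le (t := Finset.univ) (w := fun _ : Fin 3 => (1/3 : ℝ)) (p := ![3*x, 3*y, 3*z])
    (fun _ _ => by norm_num) (by simp) (fun _ _ => trivial)
  simp only [Fin.sum_univ_three, smul_eq_mul] at h
  simp at h
  linarith

lemma permExp_three {N : ℕ} (f g h : Equiv.Perm (Fin N) → ℝ) :
    permExp N (fun π => (1/3) * f π + ((1/3) * g π + (1/3) * h π))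
      = (1/3) * permExp N f + ((1/3) * permExp N g + (1/3) * permExp N h) := by
  simp only [permExp, Finset.sum_add_distrib, ← Finset.mul_sum]
  ring

lemma main_mgf {N : ℕ} (hN : 20 ≤ N) (C A : Matrix (Fin N) (Fin N) ℝ)
    (hc : ∀ k, ∑ i, C i k = 0) (hr : ∀ k, ∑ j, C k j = 0) (hA : ∀ i j, |A i j| ≤ 1) (M : ℝ) (M0 : 0 ≤ M)
    (hM : ∀ σ : Equiv.Perm (Fin N), opNorm (Matrix.hadamard C (A.submatrix σ σ)) ≤ M) :
    ∃ k : ℝ, ∀ l : ℝ, |l| * M ≤ 1 / 2000 →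
      permExp N (fun π => Real.exp (l * ((∑ i, ∑ j, C i j * A (π i) (π j)) - k)))
        ≤ Real.exp (1200000 * l ^ 2 * ∑ i, ∑ j, C i j ^ 2) := by
  have hA2 : ∀ i j, A i j ^ 2 ≤ 1 := fun i j => by
    rw [← sq_abs]; exact pow_le_one₀ (abs_nonneg _) (hA i j)
  obtain ⟨m, hm1, hm2⟩ : ∃ m, 4 * m ≤ N ∧ N ≤ 8 * m := ⟨N / 4, by omega, by omega⟩
  obtain ⟨pt⟩ : Nonempty (Bool × Bool × Fin m ↪ Fin N) := by
    apply Function.Embedding.nonempty_of_card_le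
    simp; omega
  have hpt := pt.injective
  set n : ℝ := (N:ℝ) with hn
  have hn20 : (20:ℝ) ≤ n := by rw [hn]; exact_mod_cast hN
  have hm' : n ≤ 8 * m := by rw [hn]; exact_mod_cast hm2
  have hm0 : (0:ℝ) < m := by linarith
  set q : ℝ := 4 * n ^ 2 - 12 * n + 4 with hq
  have q3 : 3 * n ^ 2 ≤ q := by rw [hq]; nlinarith
  have q0 : 0 < q := by nlinarith
  set V := ∑ i, ∑ j, C i j ^ 2 with hV
  have V0 : 0 ≤ V := Finset.sum_nonneg fun _ _ => Finset.sum_nonneg fun _ _ => sq_nonneg _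
  set θ : ℝ := n4 N / (m ^ 2 * q) with hθ
  have θ0 : 0 ≤ θ := div_nonneg (n4_nonneg N) (by positivity)
  have θ22 : θ ≤ 22 := by
    rw [hθ, div_le_iff₀ (by positivity)]
    have h1 := n4_le N
    rw [← hn] at h1
    have h2 : n ^ 2 ≤ 64 * m ^ 2 := by nlinarith
    have h3 : n ^ 2 * (3 * n ^ 2) ≤ 64 * m ^ 2 * q := mul_le_mul h2 q3 (by positivity) (by positivity)
    nlinarith [mul_pos (pow_pos hm0 2) q0]
  let G : Equiv.Perm (Fin N) → ℝ := fun π => permExp N (fun ρ => chaosG pt C A (π * ρ) ρ)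
  let Y : Equiv.Perm (Fin N) → ℝ := fun π => -(4 / q) * ∑ i, ∑ j, C i j * A (π j) (π i)
  let b : Fin N → ℝ := fun p => -((4 * n - 4 * n^2) * A p p + (4 * n - 4) * (∑ j, A p j + ∑ j, A j p)) / q
  let d : Fin N → ℝ := fun i => C i i
  let K0 : ℝ := -(4 * (∑ i, C i i) * (∑ i, A i i - ∑ i, ∑ j, A i j)) / q
  have dec : ∀ π : Equiv.Perm (Fin N), ∑ i, ∑ j, C i j * A (π i) (π j) = θ * G π + Y π + ∑ i, d i * b (π i) + K0 := by
    intro π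
    have h1 := chaosG_avg pt hpt C A π
    rw [dst_sum C (fun i j => A (π i) (π j)) hc hr] at h1
    have t1 : ∑ i, A (π i) (π i) = ∑ i, A i i := Equiv.sum_comp π (fun i => A i i)
    have t2 : ∀ p, ∑ j, A p (π j) = ∑ j, A p j := fun p => Equiv.sum_comp π (fun j => A p j)
    have t3 : ∀ p, ∑ j, A (π j) p = ∑ j, A j p := fun p => Equiv.sum_comp π (fun j => A j p)
    have t4 : ∑ i, ∑ j, A (π i) j = ∑ i, ∑ j, A i j := Equiv.sum_comp π (fun i => ∑ j, A i j)
    simp only [t1, t2, t3, t4] at h1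
    rw [← hn, ← hq] at h1
    have t5 : ∑ i, d i * b (π i) = -(∑ i, C i i * ((4 * n - 4 * n^2) * A (π i) (π i) + (4 * n - 4) * (∑ j, A (π i) j + ∑ j, A j (π i)))) / q := by
      rw [neg_div, Finset.sum_div, ← Finset.sum_neg_distrib]
      exact Finset.sum_congr rfl fun i _ => by simp only [d, b]; ring
    rw [t5]
    simp only [Y, K0, G]
    have t6 : θ * permExp N (fun ρ => chaosG pt C A (π * ρ) ρ) = (n4 N * permExp N (fun ρ => chaosG pt C A (π * ρ) ρ)) / (m ^ 2 * q) := by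
      rw [hθ]; ring
    rw [t6, h1]
    field_simp
    ring
  have hb : ∀ p, |b p| ≤ 4 := by
    intro p
    simp only [b]
    rw [abs_div, abs_of_pos q0, div_le_iff₀ q0, abs_neg]
    have r1 : |∑ j, A p j| ≤ n := by
      refine (Finset.abs_sum_le_sum_abs _ _).trans ((Finset.sum_le_sum fun j _ => hA p j).trans (by simp [hn]))
    have r2 : |∑ j, A j p| ≤ n := by
      refine (Finset.abs_sum_le_sum_abs _ _).trans ((Finset.sum_le_sum fun j _ => hA j p).trans (by simp [hn]))
    calc _ ≤ |(4 * n - 4 * n^2) * A p p| + |(4 * n - 4) * (∑ j, A p j + ∑ j, A j p)| := abs_add_le _ _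
      _ ≤ (4 * n ^ 2 - 4 * n) * 1 + (4 * n - 4) * (n + n) := by
          rw [abs_mul, abs_mul]
          have u1 : |4 * n - 4 * n ^ 2| = 4 * n ^ 2 - 4 * n := by rw [abs_of_nonpos (by nlinarith)]; ring
          have u2 : |4 * n - 4| = 4 * n - 4 := abs_of_nonneg (by linarith)
          rw [u1, u2]
          have u3 : 0 ≤ 4 * n ^ 2 - 4 * n := by nlinarith
          have u4 : 0 ≤ 4 * n - 4 := by linarith
          gcongr
          · exact hA p p
          · exact (abs_add_le _ _).trans (add_le_add r1 r2)
      _ ≤ 4 * q := by rw [hq]; nlinarith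
  have hY : ∀ π, Y π ^ 2 ≤ V := by
    intro π
    have cs : (∑ i, ∑ j, C i j * A (π j) (π i)) ^ 2 ≤ V * n ^ 2 := by
      have := Finset.sum_mul_sq_le_sq_mul_sq (Finset.univ : Finset (Fin N × Fin N)) (fun k => C k.1 k.2) (fun k => A (π k.2) (π k.1))
      simp only [Fintype.sum_prod_type] at this
      refine this.trans ?_
      gcongr
      calc ∑ i, ∑ j, A (π j) (π i) ^ 2 ≤ ∑ i : Fin N, ∑ j : Fin N, (1:ℝ) := by
            gcongr; exact hA2 _ _
        _ = n ^ 2 := by simp [hn]; ring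
    simp only [Y]
    rw [mul_pow, neg_sq, div_pow]
    have : (4:ℝ)^2 / q ^ 2 * (V * n ^ 2) ≤ V := by
      rw [div_mul_eq_mul_div, div_le_iff₀ (by positivity)]
      have h1 : 4 * n ≤ q := by nlinarith
      have h2 : (4 * n) ^ 2 ≤ q ^ 2 := by gcongr
      nlinarith
    refine le_trans ?_ this
    gcongr
  have hd : ∑ i, d i ^ 2 ≤ V := by
    refine Finset.sum_le_sum fun i _ => ?_
    exact Finset.single_le_sum (f := fun j => C i j ^ 2) (fun j _ => sq_nonneg _) (Finset.mem_univ i)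
  refine ⟨permExp N Y + (∑ i, d i) * (∑ i, b i) / N + K0, fun l hl => ?_⟩
  have hl2 : l ^ 2 * M ^ 2 ≤ 1 / 4000000 := by
    have := pow_le_pow_left₀ (by positivity) hl 2
    rw [mul_pow, sq_abs] at this
    linarith
  have hlV : 0 ≤ l ^ 2 * V := by positivity
  have hθ2 : θ ^ 2 ≤ 484 := by nlinarith
  have b1 : permExp N (fun π => Real.exp (3 * (l * (θ * G π)))) ≤ Real.exp (1200000 * l ^ 2 * V) := by
    have := chaosG_mgf pt hpt C A hA2 M (3 * l * θ) hM (by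
      have : (3 * l * θ) ^ 2 * M ^ 2 = 9 * (θ ^ 2 * (l ^ 2 * M ^ 2)) := by ring
      rw [this]
      have : θ ^ 2 * (l ^ 2 * M ^ 2) ≤ 484 * (1 / 4000000) := by gcongr
      linarith)
    have e : ∀ π, 3 * (l * (θ * G π)) = 3 * l * θ * permExp N (fun ρ => chaosG pt C A (π * ρ) ρ) := fun π => by
      simp only [G]; ring
    simp only [e]
    refine this.trans (Real.exp_le_exp.2 ?_)
    rw [← hV]
    nlinarith [mul_le_mul_of_nonneg_right hθ2 hlV]
  have b2 : permExp N (fun π => Real.exp (3 * (l * (Y π - permExp N Y)))) ≤ Real.exp (1200000 * l ^ 2 * V) := by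
    have := bdd_mgf Y V (3 * l) hY
    simp only [mul_assoc] at this ⊢
    refine this.trans (Real.exp_le_exp.2 ?_)
    nlinarith
  have b3 : permExp N (fun π => Real.exp (3 * (l * (∑ i, d i * b (π i) - (∑ i, d i) * (∑ i, b i) / N)))) ≤ Real.exp (1200000 * l ^ 2 * V) := by
    have := lin_mgf (fun k : Bool × Fin m => pt (false, k)) (fun k k' h => by simpa using hpt h) (by omega) hm2 d b 4 (3 * l) hb
    simp only [← mul_assoc] at this ⊢
    refine this.trans (Real.exp_le_exp.2 ?_)
    nlinarith [mul_le_mul_of_nonneg_left hd (sq_nonneg l)]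
  calc _ ≤ permExp N (fun π => (1/3) * Real.exp (3 * (l * (θ * G π))) + ((1/3) * Real.exp (3 * (l * (Y π - permExp N Y)))
          + (1/3) * Real.exp (3 * (l * (∑ i, d i * b (π i) - (∑ i, d i) * (∑ i, b i) / N))))) := by
        refine permExp_mono fun π => ?_
        refine le_trans (le_of_eq ?_) (exp_three _ _ _)
        rw [dec π]; congr 1; ring
    _ ≤ _ := by
        refine (permExp_three (fun π => Real.exp (3 * (l * (θ * G π)))) (fun π => Real.exp (3 * (l * (Y π - permExp N Y))))
          (fun π => Real.exp (3 * (l * (∑ i, d i * b (π i) - (∑ i, d i) * (∑ i, b i) / N))))).le.trans ?_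
        linarith [b1, b2, b3]

/-- A combinatorial Hanson–Wright-type inequality (general `A`). -/
theorem combinatorial_hanson_wright :
    ∃ K : ℝ, 0 < K ∧
      ∀ (N : ℕ), 20 ≤ N →
      ∀ (C A : Matrix (Fin N) (Fin N) ℝ),
        (∀ k, ∑ i, C i k = 0) →
        (∀ k, ∑ j, C k j = 0) →
        (∀ i j, A i j ∈ Set.Icc (-1 : ℝ) 1) →
        ∀ t : ℝ, 0 < t →
          permProb N (fun σ =>
              (∑ i, ∑ j, C i j * A (σ i) (σ j))
                - permExp N (fun σ' => ∑ i, ∑ j, C i j * A (σ' i) (σ' j)) ≥ t)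
            ≤ Real.exp (-(K * t ^ 2 /
                ((frobNorm C) ^ 2 +
                  (opNorm C +
                    Finset.univ.sup' ⟨1, Finset.mem_univ 1⟩
                      (fun σ : Equiv.Perm (Fin N) =>
                        opNorm (Matrix.hadamard C (A.submatrix σ σ)))) * t))) := by
  refine ⟨1 / 9600000, by norm_num, ?_⟩
  intro N hN C A hc hr hA t ht
  set M := Finset.univ.sup' ⟨1, Finset.mem_univ 1⟩
    (fun σ : Equiv.Perm (Fin N) => opNorm (Matrix.hadamard C (A.submatrix σ σ))) with hMdef
  have hM : ∀ σ : Equiv.Perm (Fin N), opNorm (Matrix.hadamard C (A.submatrix σ σ)) ≤ M := fun σ =>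
    Finset.le_sup' (fun σ : Equiv.Perm (Fin N) => opNorm (Matrix.hadamard C (A.submatrix σ σ))) (Finset.mem_univ σ)
  have M0 : 0 ≤ M := le_trans (norm_nonneg _) (hM 1)
  have O0 : 0 ≤ opNorm C := norm_nonneg _
  have V0 : 0 ≤ ∑ i, ∑ j, C i j ^ 2 := Finset.sum_nonneg fun _ _ => Finset.sum_nonneg fun _ _ => sq_nonneg _
  have hF : frobNorm C ^ 2 = ∑ i, ∑ j, C i j ^ 2 := Real.sq_sqrt V0
  rw [hF]
  obtain ⟨k, hk⟩ := main_mgf hN C A hc hr (fun i j => abs_le.2 (hA i j)) M M0 hM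
  set V := ∑ i, ∑ j, C i j ^ 2
  set W := V + (opNorm C + M) * t with hW
  have W0 : 0 ≤ W := by positivity
  set X : Equiv.Perm (Fin N) → ℝ := fun σ => ∑ i, ∑ j, C i j * A (σ i) (σ j) with hX
  set l : ℝ := 1 / 4800000 * (t / W) with hl
  have l0 : 0 ≤ l := by positivity
  have r1 : t / W * M ≤ 1 := by
    rw [div_mul_eq_mul_div]
    refine div_le_one_of_le₀ ?_ W0
    nlinarith [mul_nonneg O0 ht.le]
  have r2 : V / W ≤ 1 := div_le_one_of_le₀ (by nlinarith [mul_nonneg O0 ht.le, mul_nonneg M0 ht.le]) W0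
  have hlM : |l| * M ≤ 1 / 2000 := by
    rw [abs_of_nonneg l0, hl, mul_assoc]; linarith
  have mg := center_bound X k l _ (hk l hlM) (by
    have := hk (-l) (by rwa [abs_neg])
    rwa [neg_sq] at this)
  have ch : permProb N (fun σ => X σ - permExp N X ≥ t) * Real.exp (l * t) ≤ permExp N (fun π => Real.exp (l * (X π - permExp N X))) := by
    unfold permProb permExp
    rw [div_mul_eq_mul_div]
    have := fact_pos' N
    gcongr
    rw [← nsmul_eq_mul, ← Finset.sum_const]
    refine (Finset.sum_le_sum (g := fun π => Real.exp (l * (X π - permExp N X))) fun σ hσ => ?_).trans ?_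
    · have := (Finset.mem_filter.1 hσ).2
      rw [Real.exp_le_exp]
      exact mul_le_mul_of_nonneg_left this l0
    · exact Finset.sum_le_sum_of_subset_of_nonneg (Finset.filter_subset _ _) fun _ _ _ => (Real.exp_pos _).le
  have fin := ch.trans mg
  rw [← le_div_iff₀ (Real.exp_pos _), ← Real.exp_sub] at fin
  refine fin.trans (Real.exp_le_exp.2 ?_)
  have q1 : l * t = 1 / 4800000 * (t ^ 2 / W) := by rw [hl]; ring
  have q2 : l ^ 2 * V = (1 / 4800000) ^ 2 * (t ^ 2 / W) * (V / W) := by rw [hl]; ring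
  have q3 : 1 / 9600000 * t ^ 2 / W = 1 / 9600000 * (t ^ 2 / W) := by ring
  have q4 : 0 ≤ t ^ 2 / W := by positivity
  rw [q1, q3, mul_assoc 1200000, q2]
  nlinarith [mul_le_mul_of_nonneg_left r2 q4]
end

section
/- There exists a universal constant K > 0 such that the following holds. Let N ≥ 20, let C = [c_{ij}] ∈ R^{N×N} be doubly centered, and let A = [a_{ij}] ∈ R^{N×N} be symmetric positive semidefinite with all entries in [−1,1]. Let Q_QF := Σ_{i,j∈[N]} c_{ij} a_{π(i)π(j)}. Then for every t > 0, P( Q_QF − E[Q_QF] ≥ t ) ≤ exp( − K t² / ( ‖C‖_F² + ‖C‖_op t ) ). -/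
open scoped BigOperators Classical

section HW
variable {N : ℕ}

/-- quadratic form -/
noncomputable def hwq (S : Matrix (Fin N) (Fin N) ℝ) (w : Fin N → EuclideanSpace ℝ (Fin N)) : ℝ :=
  ∑ i, ∑ j, S i j * inner ℝ (w i) (w j)

noncomputable def hwu (S : Matrix (Fin N) (Fin N) ℝ) (w : Fin N → EuclideanSpace ℝ (Fin N)) (i : Fin N) :
    EuclideanSpace ℝ (Fin N) := ∑ j, S i j • w j

noncomputable def hwr (S : Matrix (Fin N) (Fin N) ℝ) (w : Fin N → EuclideanSpace ℝ (Fin N)) : ℝ :=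
  ∑ i, ‖hwu S w i‖ ^ 2

noncomputable def hwF (S : Matrix (Fin N) (Fin N) ℝ) : ℝ := ∑ i, ∑ j, S i j ^ 2

noncomputable def hwh (w : Fin N → EuclideanSpace ℝ (Fin N)) (i : Fin N) : ℝ :=
  ∑ j, ‖w j - w i‖ ^ 2

noncomputable def hwl (S : Matrix (Fin N) (Fin N) ℝ) (w : Fin N → EuclideanSpace ℝ (Fin N)) : ℝ :=
  ∑ i, S i i * hwh w i

lemma hwq_eq (S : Matrix (Fin N) (Fin N) ℝ) (w : Fin N → EuclideanSpace ℝ (Fin N)) :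
    hwq S w = ∑ i, inner ℝ (hwu S w i) (w i) := by
  unfold hwq hwu
  refine Finset.sum_congr rfl fun i _ => ?_
  rw [sum_inner]
  refine Finset.sum_congr rfl fun j _ => ?_
  rw [real_inner_smul_left, real_inner_comm]

lemma hw_swap_vec (w : Fin N → EuclideanSpace ℝ (Fin N)) (i j k : Fin N) :
    w (Equiv.swap i j k) = w k + ((if k = i then (1:ℝ) else 0) - (if k = j then 1 else 0)) • (w j - w i) := by
  by_cases hi : k = i
  · subst hi
    by_cases hj : k = j
    · subst hj; simp
    · simp [hj]
  · by_cases hj : k = j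
    · subst hj; simp [hi]
    · simp [hi, hj, Equiv.swap_apply_of_ne_of_ne hi hj]

lemma hw_swapQ (S : Matrix (Fin N) (Fin N) ℝ) (hS : ∀ i j, S i j = S j i)
    (w : Fin N → EuclideanSpace ℝ (Fin N)) (i j : Fin N) :
    hwq S (fun k => w (Equiv.swap i j k)) = hwq S w + 2 * inner ℝ (hwu S w i - hwu S w j) (w j - w i)
      + (S i i + S j j - 2 * S i j) * ‖w j - w i‖ ^ 2 := by
  set d := w j - w i with hd
  set e : Fin N → ℝ := fun k => (if k = i then (1:ℝ) else 0) - (if k = j then 1 else 0) with he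
  have h1 : hwq S (fun k => w (Equiv.swap i j k)) = hwq S w + 2 * ∑ k, e k * inner ℝ (hwu S w k) d
      + (∑ k, ∑ l, e k * S k l * e l) * ‖d‖ ^ 2 := by
    have hA : ∀ k l, S k l * inner ℝ (w (Equiv.swap i j k)) (w (Equiv.swap i j l)) =
        S k l * inner ℝ (w k) (w l) + e k * (S k l * inner ℝ d (w l)) + e l * (S k l * inner ℝ (w k) d)
         + e k * S k l * e l * ‖d‖ ^ 2 := by
      intro k l
      rw [hw_swap_vec w i j k, hw_swap_vec w i j l]
      simp only [inner_add_left, inner_add_right, real_inner_smul_left, real_inner_smul_right,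
        ← real_inner_self_eq_norm_sq]
      simp only [he, ← hd]
      ring
    have hu : ∀ k, inner ℝ (hwu S w k) d = ∑ l, S k l * inner ℝ d (w l) := by
      intro k
      unfold hwu
      rw [sum_inner]
      refine Finset.sum_congr rfl fun j _ => ?_
      rw [real_inner_smul_left, real_inner_comm]
    unfold hwq
    simp only [hA, Finset.sum_add_distrib]
    have e1 : ∑ k, ∑ l, e l * (S k l * inner ℝ (w k) d) = ∑ k, e k * inner ℝ (hwu S w k) d := by
      rw [Finset.sum_comm]
      refine Finset.sum_congr rfl fun k _ => ?_
      rw [hu, Finset.mul_sum]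
      refine Finset.sum_congr rfl fun l _ => ?_
      rw [hS l k, real_inner_comm]
    have e2 : ∑ k, ∑ l, e k * (S k l * inner ℝ d (w l)) = ∑ k, e k * inner ℝ (hwu S w k) d := by
      refine Finset.sum_congr rfl fun k _ => ?_
      rw [hu, Finset.mul_sum]
    rw [e1, e2]
    simp only [Finset.sum_mul]
    ring
  rw [h1]
  have e3 : ∑ k, e k * inner ℝ (hwu S w k) d = inner ℝ (hwu S w i - hwu S w j) d := by
    simp [he, sub_mul, Finset.sum_sub_distrib, inner_sub_left]
  have e4 : (∑ k, ∑ l, e k * S k l * e l) = S i i + S j j - 2 * S i j := by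
    simp [he, sub_mul, mul_sub, Finset.sum_sub_distrib]
    rw [hS j i]; ring
  rw [e3, e4]

lemma hwh_swap (w : Fin N → EuclideanSpace ℝ (Fin N)) (i j k : Fin N) :
    hwh (fun k => w (Equiv.swap i j k)) k = hwh w (Equiv.swap i j k) := by
  unfold hwh
  exact Equiv.sum_comp (Equiv.swap i j) (fun l => ‖w l - w (Equiv.swap i j k)‖ ^ 2)

lemma hw_swapL (S : Matrix (Fin N) (Fin N) ℝ)
    (w : Fin N → EuclideanSpace ℝ (Fin N)) (i j : Fin N) :
    hwl S (fun k => w (Equiv.swap i j k)) = hwl S w + (S i i - S j j) * (hwh w j - hwh w i) := by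
  unfold hwl
  simp only [hwh_swap]
  have : ∀ k, S k k * hwh w (Equiv.swap i j k) = S k k * hwh w k +
      (if k = i then S k k * (hwh w j - hwh w i) else 0) - (if k = j then S k k * (hwh w j - hwh w i) else 0) := by
    intro k
    by_cases hi : k = i
    · subst hi
      by_cases hj : k = j
      · subst hj; simp
      · simp [hj]; ring
    · by_cases hj : k = j
      · subst hj; simp [hi]; ring
      · simp [hi, hj, Equiv.swap_apply_of_ne_of_ne hi hj]
  simp only [this, Finset.sum_add_distrib, Finset.sum_sub_distrib]
  simp
  ring

/-- Stein identity -/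
lemma hw_stein (S : Matrix (Fin N) (Fin N) ℝ) (hN : 0 < N) (hS : ∀ i j, S i j = S j i)
    (h0 : ∀ i, ∑ j, S i j = 0)
    (w : Fin N → EuclideanSpace ℝ (Fin N)) :
    ∑ i, ∑ j, ((hwq S w + hwl S w / N) - (hwq S (fun k => w (Equiv.swap i j k))
       + hwl S (fun k => w (Equiv.swap i j k)) / N))
     = (4 * N - 4) * hwq S w - 2 * ((∑ i, S i i) * (∑ i, hwh w i) / N) := by
  have hN' : (N:ℝ) ≠ 0 := by positivity
  have h0' : ∀ j, ∑ i, S i j = 0 := fun j => by rw [← h0 j]; exact Finset.sum_congr rfl fun i _ => hS i j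
  have hu0 : ∑ i, hwu S w i = 0 := by
    unfold hwu
    rw [Finset.sum_comm]
    simp [← Finset.sum_smul, h0']
  have hterm : ∀ i j, ((hwq S w + hwl S w / N) - (hwq S (fun k => w (Equiv.swap i j k))
       + hwl S (fun k => w (Equiv.swap i j k)) / N)) =
       2 * inner ℝ (hwu S w i) (w i) + 2 * inner ℝ (hwu S w j) (w j) - 2 * inner ℝ (hwu S w i) (w j)
        - 2 * inner ℝ (hwu S w j) (w i)
       - S i i * ‖w j - w i‖ ^ 2 - S j j * ‖w i - w j‖ ^ 2 + 2 * (S i j * ‖w j - w i‖ ^ 2)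
       + (S i i * hwh w i + S j j * hwh w j - S i i * hwh w j - S j j * hwh w i) / N := by
    intro i j
    rw [hw_swapQ S hS, hw_swapL]
    rw [norm_sub_rev (w i) (w j)]
    simp only [inner_sub_left, inner_sub_right]
    field_simp
    ring
  simp only [hterm]
  have a1 : ∑ i, ∑ j, (inner ℝ (hwu S w i) (w j) : ℝ) = 0 := by
    rw [Finset.sum_comm]
    simp [← sum_inner, hu0]
  have a2 : ∑ i, ∑ j, (inner ℝ (hwu S w j) (w i) : ℝ) = 0 := by
    rw [Finset.sum_comm]; exact a1
  have a3 : ∑ i, ∑ j, S i i * ‖w j - w i‖ ^ 2 = hwl S w := by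
    unfold hwl hwh
    simp [Finset.mul_sum]
  have a4 : ∑ i, ∑ j, S j j * ‖w i - w j‖ ^ 2 = hwl S w := by
    rw [Finset.sum_comm]; exact a3
  have a5 : ∑ i, ∑ j, S i j * ‖w j - w i‖ ^ 2 = - 2 * hwq S w := by
    have : ∀ i j, S i j * ‖w j - w i‖ ^ 2 = S i j * ‖w i‖^2 + S i j * ‖w j‖^2
       - 2 * (S i j * inner ℝ (w i) (w j)) := by
      intro i j
      rw [norm_sub_sq_real, real_inner_comm]; ring
    simp only [this, Finset.sum_add_distrib, Finset.sum_sub_distrib, ← Finset.mul_sum]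
    have b1 : ∑ i, ∑ j, S i j * ‖w i‖^2 = 0 := by
      simp [← Finset.sum_mul, h0]
    have b2 : ∑ i, ∑ j, S i j * ‖w j‖^2 = 0 := by
      rw [Finset.sum_comm]
      simp [← Finset.sum_mul, h0']
    rw [b1, b2]; unfold hwq; ring
  have a6 : ∑ i, ∑ j : Fin N, (inner ℝ (hwu S w i) (w i) : ℝ) = N * hwq S w := by
    simp [hwq_eq, Finset.mul_sum]
  have a7 : ∑ i : Fin N, ∑ j, (inner ℝ (hwu S w j) (w j) : ℝ) = N * hwq S w := by
    rw [Finset.sum_comm]; exact a6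
  have a8 : ∑ i, ∑ j : Fin N, S i i * hwh w i = N * hwl S w := by
    simp [hwl, Finset.mul_sum]
  have a9 : ∑ i : Fin N, ∑ j : Fin N, S j j * hwh w j = N * hwl S w := by
    rw [Finset.sum_comm]; exact a8
  have a10 : ∑ i, ∑ j, S i i * hwh w j = (∑ i, S i i) * (∑ i, hwh w i) := by
    rw [Finset.sum_mul_sum]
  have a11 : ∑ i, ∑ j, S j j * hwh w i = (∑ i, S i i) * (∑ i, hwh w i) := by
    rw [Finset.sum_comm]; exact a10
  simp only [Finset.sum_add_distrib, Finset.sum_sub_distrib, ← Finset.mul_sum, ← Finset.sum_div,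
    ] 
  simp only [Finset.mul_sum] at *
  simp only [← Finset.mul_sum] at *
  simp only [a1, a2, a3, a4, a5, a6, a7, a8, a9, a10, a11]
  field_simp
  ring

lemma hw_Qsq (S : Matrix (Fin N) (Fin N) ℝ) (hS : ∀ i j, S i j = S j i)
    (w : Fin N → EuclideanSpace ℝ (Fin N)) (hw : ∀ i j, ‖w i - w j‖ ^ 2 ≤ 4) (i j : Fin N) :
    (hwq S w - hwq S (fun k => w (Equiv.swap i j k))) ^ 2 ≤
      64 * ‖hwu S w i‖ ^ 2 + 64 * ‖hwu S w j‖ ^ 2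
       + 96 * S i i ^ 2 + 96 * S j j ^ 2 + 384 * S i j ^ 2 := by
  rw [hw_swapQ S hS]
  have h1 : (inner ℝ (hwu S w i - hwu S w j) (w j - w i)) ^ 2
      ≤ (2 * ‖hwu S w i‖ ^ 2 + 2 * ‖hwu S w j‖ ^ 2) * 4 := by
    have c := abs_real_inner_le_norm (hwu S w i - hwu S w j) (w j - w i)
    have c2 := norm_sub_le (hwu S w i) (hwu S w j)
    have c3 : ‖hwu S w i - hwu S w j‖ ^ 2 ≤ 2 * ‖hwu S w i‖ ^ 2 + 2 * ‖hwu S w j‖ ^ 2 := by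
      have := pow_le_pow_left₀ (norm_nonneg _) c2 2
      nlinarith [sq_nonneg (‖hwu S w i‖ - ‖hwu S w j‖)]
    calc (inner ℝ (hwu S w i - hwu S w j) (w j - w i)) ^ 2
        = |inner ℝ (hwu S w i - hwu S w j) (w j - w i)| ^ 2 := (sq_abs _).symm
      _ ≤ (‖hwu S w i - hwu S w j‖ * ‖w j - w i‖) ^ 2 := pow_le_pow_left₀ (abs_nonneg _) c 2
      _ = ‖hwu S w i - hwu S w j‖ ^ 2 * ‖w j - w i‖ ^ 2 := by ring
      _ ≤ _ := mul_le_mul c3 (hw j i) (by positivity) (by positivity)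
  set a := (inner ℝ (hwu S w i - hwu S w j) (w j - w i) : ℝ)
  set n := ‖w j - w i‖ ^ 2 with hn
  have hn0 : 0 ≤ n := by positivity
  have hn4 : n ≤ 4 := hw j i
  set s := S i i + S j j - 2 * S i j
  have h2 : s ^ 2 ≤ 3 * (S i i ^ 2 + S j j ^ 2 + 4 * S i j ^ 2) := by
    nlinarith [sq_nonneg (S i i - S j j), sq_nonneg (S i i + 2 * S i j), sq_nonneg (S j j + 2 * S i j)]
  have h3 : (s * n) ^ 2 ≤ 16 * s ^ 2 := by
    have : n ^ 2 ≤ 16 := by nlinarith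
    rw [mul_pow]; nlinarith [sq_nonneg s]
  have h4 : (hwq S w - (hwq S w + 2 * a + s * n)) ^ 2 ≤ 2 * (4 * a ^ 2) + 2 * (s * n) ^ 2 := by
    nlinarith [sq_nonneg (2 * a - s * n)]
  nlinarith

lemma hwh_bd (w : Fin N → EuclideanSpace ℝ (Fin N)) (hw : ∀ i j, ‖w i - w j‖ ^ 2 ≤ 4) (i : Fin N) :
    0 ≤ hwh w i ∧ hwh w i ≤ 4 * N := by
  unfold hwh
  refine ⟨Finset.sum_nonneg fun j _ => by positivity, ?_⟩
  calc ∑ j, ‖w j - w i‖ ^ 2 ≤ ∑ j : Fin N, (4:ℝ) := Finset.sum_le_sum fun j _ => hw j i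
    _ = 4 * N := by simp [mul_comm]

lemma hw_Lsq (S : Matrix (Fin N) (Fin N) ℝ) (hN : 0 < N)
    (w : Fin N → EuclideanSpace ℝ (Fin N)) (hw : ∀ i j, ‖w i - w j‖ ^ 2 ≤ 4) (i j : Fin N) :
    (hwl S w / N - hwl S (fun k => w (Equiv.swap i j k)) / N) ^ 2 ≤ 32 * S i i ^ 2 + 32 * S j j ^ 2 := by
  rw [hw_swapL]
  have hN' : (0:ℝ) < N := by positivity
  set x := (hwh w j - hwh w i) / N with hx
  have e : hwl S w / N - (hwl S w + (S i i - S j j) * (hwh w j - hwh w i)) / N = - (S i i - S j j) * x := by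
    rw [hx]; field_simp; ring
  rw [e]
  have h1 := hwh_bd w hw i
  have h2 := hwh_bd w hw j
  have x1 : x ≤ 4 := by rw [hx, div_le_iff₀ hN']; linarith
  have x2 : -4 ≤ x := by rw [hx, le_div_iff₀ hN']; linarith
  have x3 : x ^ 2 ≤ 16 := by nlinarith
  have : (-(S i i - S j j) * x) ^ 2 = (S i i - S j j) ^ 2 * x ^ 2 := by ring
  rw [this]
  have h3 : (S i i - S j j) ^ 2 * x ^ 2 ≤ (S i i - S j j) ^ 2 * 16 := by gcongr
  nlinarith [sq_nonneg (S i i + S j j)]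

lemma hw_diag (S : Matrix (Fin N) (Fin N) ℝ) : ∑ i, S i i ^ 2 ≤ hwF S := by
  unfold hwF
  refine Finset.sum_le_sum fun i _ => ?_
  exact Finset.single_le_sum (f := fun j => S i j ^ 2) (fun j _ => sq_nonneg _) (Finset.mem_univ i)

lemma hw_var (S : Matrix (Fin N) (Fin N) ℝ) (hN : 20 ≤ N) (hS : ∀ i j, S i j = S j i)
    (w : Fin N → EuclideanSpace ℝ (Fin N)) (hw : ∀ i j, ‖w i - w j‖ ^ 2 ≤ 4) :
    ∑ i, ∑ j, |(hwq S w + hwl S w / N) - (hwq S (fun k => w (Equiv.swap i j k))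
       + hwl S (fun k => w (Equiv.swap i j k)) / N)| * |hwq S w - hwq S (fun k => w (Equiv.swap i j k))|
     ≤ 500 * N * (hwr S w + hwF S) := by
  have hterm : ∀ i j, |(hwq S w + hwl S w / N) - (hwq S (fun k => w (Equiv.swap i j k))
       + hwl S (fun k => w (Equiv.swap i j k)) / N)| * |hwq S w - hwq S (fun k => w (Equiv.swap i j k))|
     ≤ 96 * ‖hwu S w i‖ ^ 2 + 96 * ‖hwu S w j‖ ^ 2
       + 160 * S i i ^ 2 + 160 * S j j ^ 2 + 576 * S i j ^ 2 := by
    intro i j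
    have h1 := hw_Qsq S hS w hw i j
    have h2 := hw_Lsq S (by omega) w hw i j
    set a := hwq S w - hwq S (fun k => w (Equiv.swap i j k)) with ha
    set b := hwl S w / N - hwl S (fun k => w (Equiv.swap i j k)) / N with hb
    have e : (hwq S w + hwl S w / N) - (hwq S (fun k => w (Equiv.swap i j k))
       + hwl S (fun k => w (Equiv.swap i j k)) / N) = a + b := by rw [ha, hb]; ring
    rw [e, ← abs_mul]
    have : |(a + b) * a| ≤ 3/2 * a ^ 2 + 1/2 * b ^ 2 := by
      rw [abs_le]; constructor <;> nlinarith [sq_nonneg (a - b), sq_nonneg (a + b), sq_nonneg a]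
    nlinarith [sq_nonneg (S i i), sq_nonneg (S j j)]
  refine (Finset.sum_le_sum fun i _ => Finset.sum_le_sum fun j _ => hterm i j).trans ?_
  simp only [Finset.sum_add_distrib, ← Finset.mul_sum, Finset.sum_const, Finset.card_univ, Fintype.card_fin,
    nsmul_eq_mul]
  have hd := hw_diag S
  have hF : ∑ i, ∑ j, S i j ^ 2 = hwF S := rfl
  have hr : ∑ i, ‖hwu S w i‖ ^ 2 = hwr S w := rfl
  have hd0 : 0 ≤ hwF S := by unfold hwF; positivity
  have hr0 : 0 ≤ hwr S w := by unfold hwr; positivity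
  rw [hF, hr]
  have hN' : (20:ℝ) ≤ N := by exact_mod_cast hN
  have k1 : (N:ℝ) * ∑ i, S i i ^ 2 ≤ N * hwF S := by gcongr
  have k2 : 20 * hwF S ≤ N * hwF S := by gcongr
  have k3 : 0 ≤ (N:ℝ) * hwr S w := by positivity
  nlinarith

lemma hw_exp (x y : ℝ) : |Real.exp x - Real.exp y| ≤ |x - y| * (Real.exp x + Real.exp y) := by
  have key : ∀ a b : ℝ, b ≤ a → |Real.exp a - Real.exp b| ≤ |a - b| * (Real.exp a + Real.exp b) := by
    intro a b h
    rw [abs_of_nonneg (sub_nonneg.2 (Real.exp_le_exp.2 h)), abs_of_nonneg (sub_nonneg.2 h)]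
    have h1 := Real.add_one_le_exp (b - a)
    have h2 : Real.exp b = Real.exp a * Real.exp (b - a) := by rw [← Real.exp_add]; ring_nf
    have h3 := Real.exp_pos a
    have h4 := Real.exp_pos b
    have h5 : Real.exp a * (b - a + 1) ≤ Real.exp b := by rw [h2]; gcongr
    have h6 : 0 ≤ (a - b) * Real.exp b := mul_nonneg (sub_nonneg.2 h) h4.le
    nlinarith
  rcases le_total y x with h | h
  · exact key x y h
  · have := key y x h
    rw [abs_sub_comm, abs_sub_comm x y, add_comm]; exact this

/-- exchangeable pair core -/
lemma hw_core (S : Matrix (Fin N) (Fin N) ℝ) (hN : 20 ≤ N) (hS : ∀ i j, S i j = S j i)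
    (h0 : ∀ i, ∑ j, S i j = 0)
    (v : Fin N → EuclideanSpace ℝ (Fin N)) (hv : ∀ i j, ‖v i - v j‖ ^ 2 ≤ 4) :
    ∃ μ : ℝ, (∑ σ : Equiv.Perm (Fin N), (hwq S (fun k => v (σ k)) - μ) = 0) ∧
      (4 * N - 4) * μ = 2 * ((∑ i, S i i) * (∑ i, hwh v i) / N) ∧
      ∀ θ : ℝ, 0 ≤ θ →
        ∑ σ : Equiv.Perm (Fin N), (hwq S (fun k => v (σ k)) - μ) * Real.exp (θ * (hwq S (fun k => v (σ k)) - μ))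
         ≤ 250 * θ * ∑ σ : Equiv.Perm (Fin N), (hwr S (fun k => v (σ k)) + hwF S) *
            Real.exp (θ * (hwq S (fun k => v (σ k)) - μ)) := by
  have hN' : (20:ℝ) ≤ N := by exact_mod_cast hN
  set T := 2 * ((∑ i, S i i) * (∑ i, hwh v i) / N) with hT
  set μ := T / (4 * N - 4) with hμ
  have hμ' : (4 * N - 4) * μ = T := by
    rw [hμ]; exact mul_div_cancel₀ T (show (4 * (N:ℝ) - 4) ≠ 0 by nlinarith)
  set q : Equiv.Perm (Fin N) → ℝ := fun σ => hwq S (fun k => v (σ k)) with hq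
  set P : Equiv.Perm (Fin N) → ℝ := fun σ => hwq S (fun k => v (σ k)) + hwl S (fun k => v (σ k)) / N with hP
  have stein : ∀ σ, ∑ i, ∑ j, (P σ - P (σ * Equiv.swap i j)) = (4 * N - 4) * (q σ - μ) := by
    intro σ
    have := hw_stein S (by omega) hS h0 (fun k => v (σ k))
    have e : ∑ i, hwh (fun k => v (σ k)) i = ∑ i, hwh v i := by
      rw [← Equiv.sum_comp σ (fun i => hwh v i)]
      refine Finset.sum_congr rfl fun i _ => ?_
      unfold hwh
      exact Equiv.sum_comp σ (fun l => ‖v l - v (σ i)‖ ^ 2)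
    rw [e] at this
    simp only [hP, Equiv.Perm.mul_apply]
    rw [this, mul_sub, hμ']
  -- antisymmetry
  have anti : ∀ g : Equiv.Perm (Fin N) → ℝ, ∑ σ, (4 * N - 4) * (q σ - μ) * g σ =
      (1/2) * ∑ σ, ∑ i, ∑ j, (P σ - P (σ * Equiv.swap i j)) * (g σ - g (σ * Equiv.swap i j)) := by
    intro g
    have e1 : ∑ σ, (4 * N - 4) * (q σ - μ) * g σ = ∑ i, ∑ j, ∑ σ, (P σ - P (σ * Equiv.swap i j)) * g σ := by
      simp only [← stein, Finset.sum_mul]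
      rw [Finset.sum_comm]
      refine Finset.sum_congr rfl fun i _ => ?_
      rw [Finset.sum_comm]
    have e2 : ∀ i j, ∑ σ, (P σ - P (σ * Equiv.swap i j)) * g (σ * Equiv.swap i j)
        = - ∑ σ, (P σ - P (σ * Equiv.swap i j)) * g σ := by
      intro i j
      rw [← Equiv.sum_comp (Equiv.mulRight (Equiv.swap i j)) (fun σ => (P σ - P (σ * Equiv.swap i j)) * g σ),
        ← Finset.sum_neg_distrib]
      refine Finset.sum_congr rfl fun σ _ => ?_
      simp [mul_assoc]
      ring
    have e3 : ∑ σ, ∑ i, ∑ j, (P σ - P (σ * Equiv.swap i j)) * (g σ - g (σ * Equiv.swap i j))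
        = ∑ i, ∑ j, ∑ σ, (P σ - P (σ * Equiv.swap i j)) * (g σ - g (σ * Equiv.swap i j)) := by
      rw [Finset.sum_comm]
      refine Finset.sum_congr rfl fun i _ => ?_
      rw [Finset.sum_comm]
    rw [e1, e3, Finset.mul_sum]
    refine Finset.sum_congr rfl fun i _ => ?_
    rw [Finset.mul_sum]
    refine Finset.sum_congr rfl fun j _ => ?_
    have e4 : ∑ σ, (P σ - P (σ * Equiv.swap i j)) * (g σ - g (σ * Equiv.swap i j)) =
        ∑ σ, (P σ - P (σ * Equiv.swap i j)) * g σ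
        - ∑ σ, (P σ - P (σ * Equiv.swap i j)) * g (σ * Equiv.swap i j) := by
      rw [← Finset.sum_sub_distrib]
      exact Finset.sum_congr rfl fun σ _ => by ring
    rw [e4, e2]
    ring
  refine ⟨μ, ?_, hμ', ?_⟩
  · have := anti (fun _ => 1)
    simp only [sub_self, mul_zero, Finset.sum_const_zero, mul_one] at this
    rw [← Finset.mul_sum] at this
    rcases mul_eq_zero.1 this with h | h
    · nlinarith
    · exact h
  · intro θ hθ
    set g : Equiv.Perm (Fin N) → ℝ := fun σ => Real.exp (θ * (q σ - μ)) with hg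
    have hA := anti g
    have hB : ∑ σ, ∑ i, ∑ j, (P σ - P (σ * Equiv.swap i j)) * (g σ - g (σ * Equiv.swap i j)) ≤
        ∑ σ, ∑ i, ∑ j, θ * (|P σ - P (σ * Equiv.swap i j)| * |q σ - q (σ * Equiv.swap i j)| *
          (g σ + g (σ * Equiv.swap i j))) := by
      refine Finset.sum_le_sum fun σ _ => Finset.sum_le_sum fun i _ => Finset.sum_le_sum fun j _ => ?_
      refine (le_abs_self _).trans ?_
      rw [abs_mul]
      have := hw_exp (θ * (q σ - μ)) (θ * (q (σ * Equiv.swap i j) - μ))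
      have e : θ * (q σ - μ) - θ * (q (σ * Equiv.swap i j) - μ) = θ * (q σ - q (σ * Equiv.swap i j)) := by ring
      rw [e, abs_mul, abs_of_nonneg hθ] at this
      calc |P σ - P (σ * Equiv.swap i j)| * |g σ - g (σ * Equiv.swap i j)|
          ≤ |P σ - P (σ * Equiv.swap i j)| * (θ * |q σ - q (σ * Equiv.swap i j)| * (g σ + g (σ * Equiv.swap i j))) := by
            gcongr
        _ = _ := by ring
    have hC : ∑ σ, ∑ i, ∑ j, θ * (|P σ - P (σ * Equiv.swap i j)| * |q σ - q (σ * Equiv.swap i j)| *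
          (g σ + g (σ * Equiv.swap i j))) = 2 * θ * ∑ σ, (∑ i, ∑ j, |P σ - P (σ * Equiv.swap i j)| * |q σ - q (σ * Equiv.swap i j)|) * g σ := by
      have c1 : ∀ i j, ∑ σ, |P σ - P (σ * Equiv.swap i j)| * |q σ - q (σ * Equiv.swap i j)| * g (σ * Equiv.swap i j)
          = ∑ σ, |P σ - P (σ * Equiv.swap i j)| * |q σ - q (σ * Equiv.swap i j)| * g σ := by
        intro i j
        rw [← Equiv.sum_comp (Equiv.mulRight (Equiv.swap i j)) (fun σ => |P σ - P (σ * Equiv.swap i j)| * |q σ - q (σ * Equiv.swap i j)| * g σ)]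
        refine Finset.sum_congr rfl fun σ _ => ?_
        simp [mul_assoc]
        rw [abs_sub_comm (P σ), abs_sub_comm (q σ)]
      have c2 : ∀ G : Equiv.Perm (Fin N) → Fin N → Fin N → ℝ, ∑ σ, ∑ i, ∑ j, G σ i j = ∑ i, ∑ j, ∑ σ, G σ i j := by
        intro G
        rw [Finset.sum_comm]
        refine Finset.sum_congr rfl fun i _ => ?_
        rw [Finset.sum_comm]
      simp only [Finset.sum_mul]
      rw [c2, c2, Finset.mul_sum]
      refine Finset.sum_congr rfl fun i _ => ?_
      rw [Finset.mul_sum]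
      refine Finset.sum_congr rfl fun j _ => ?_
      rw [← Finset.mul_sum]
      simp only [mul_add, Finset.sum_add_distrib]
      rw [c1]; ring
    have hD : ∑ σ, (∑ i, ∑ j, |P σ - P (σ * Equiv.swap i j)| * |q σ - q (σ * Equiv.swap i j)|) * g σ ≤
        ∑ σ, 500 * N * ((hwr S (fun k => v (σ k)) + hwF S) * g σ) := by
      refine Finset.sum_le_sum fun σ _ => ?_
      have := hw_var S hN hS (fun k => v (σ k)) (fun i j => hv _ _)
      rw [← mul_assoc]
      exact mul_le_mul_of_nonneg_right this (Real.exp_pos _).le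
    rw [← Finset.mul_sum] at hD
    simp only [mul_assoc (4 * (N:ℝ) - 4)] at hA
    rw [← Finset.mul_sum] at hA
    have hW : 0 ≤ ∑ σ : Equiv.Perm (Fin N), (hwr S (fun k => v (σ k)) + hwF S) * g σ := by
      refine Finset.sum_nonneg fun σ _ => mul_nonneg ?_ (Real.exp_pos _).le
      unfold hwr hwF; positivity
    set W := ∑ σ : Equiv.Perm (Fin N), (hwr S (fun k => v (σ k)) + hwF S) * g σ
    set X := ∑ σ, (q σ - μ) * g σ
    show X ≤ 250 * θ * W
    have h1 : (4 * N - 4) * X ≤ θ * (500 * N * W) := by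
      rw [hA]
      have := mul_le_mul_of_nonneg_left hD hθ
      linarith
    have h2 : (4 * N - 4) * X ≤ (4 * N - 4) * (250 * θ * W) := by
      have : 0 ≤ θ * W := mul_nonneg hθ hW
      nlinarith
    exact le_of_mul_le_mul_left h2 (by linarith)

lemma hw_ode {Ω : Type*} [Fintype Ω] (f : Ω → ℝ) (K θ₀ : ℝ) (hθ : 0 ≤ θ₀)
    (h : ∀ θ, 0 ≤ θ → θ ≤ θ₀ → ∑ x, f x * Real.exp (θ * f x) ≤ 2 * K * θ * ∑ x, Real.exp (θ * f x)) :
    ∑ x, Real.exp (θ₀ * f x) ≤ Fintype.card Ω * Real.exp (K * θ₀ ^ 2) := by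
  set g : ℝ → ℝ := fun θ => (∑ x, Real.exp (θ * f x)) * Real.exp (-(K * θ ^ 2)) with hg
  have hd : ∀ θ, HasDerivAt g ((∑ x, f x * Real.exp (θ * f x)) * Real.exp (-(K * θ ^ 2)) +
      (∑ x, Real.exp (θ * f x)) * (Real.exp (-(K * θ ^ 2)) * (-(2 * K * θ)))) θ := by
    intro θ
    have h1 : HasDerivAt (fun θ => ∑ x, Real.exp (θ * f x)) (∑ x, f x * Real.exp (θ * f x)) θ := by
      refine HasDerivAt.fun_sum fun x _ => ?_
      have := ((hasDerivAt_id θ).mul_const (f x)).exp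
      simpa [mul_comm] using this
    have h2 : HasDerivAt (fun θ : ℝ => Real.exp (-(K * θ ^ 2))) (Real.exp (-(K * θ ^ 2)) * (-(2 * K * θ))) θ := by
      have h3 : HasDerivAt (fun θ : ℝ => -(K * θ ^ 2)) (-(2 * K * θ)) θ := by
        have := ((hasDerivAt_pow 2 θ).const_mul K).fun_neg
        refine this.congr_deriv ?_
        push_cast
        ring
      exact h3.exp
    exact h1.mul h2
  have hanti : AntitoneOn g (Set.Icc 0 θ₀) := by
    refine antitoneOn_of_deriv_nonpos (convex_Icc _ _) (fun x _ => (hd x).continuousAt.continuousWithinAt)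
      (fun x _ => (hd x).differentiableAt.differentiableWithinAt) fun x hx => ?_
    rw [interior_Icc] at hx
    rw [(hd x).deriv]
    have := h x hx.1.le hx.2.le
    have e := Real.exp_pos (-(K * x ^ 2))
    have := mul_le_mul_of_nonneg_right this e.le
    linarith
  have := hanti (Set.left_mem_Icc.2 hθ) (Set.right_mem_Icc.2 hθ) hθ
  simp only [hg] at this
  simp only [zero_mul, Real.exp_zero, Finset.sum_const, Finset.card_univ, nsmul_eq_mul, mul_one] at this
  norm_num at this
  rw [Real.exp_neg, ← div_eq_mul_inv, div_le_iff₀ (Real.exp_pos _)] at this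
  exact this

lemma hwr_eq (S : Matrix (Fin N) (Fin N) ℝ) (hS : ∀ i j, S i j = S j i)
    (w : Fin N → EuclideanSpace ℝ (Fin N)) : hwr S w = hwq (S * S) w := by
  unfold hwr hwq
  have : ∀ i, ‖hwu S w i‖ ^ 2 = ∑ j, ∑ k, S j i * S i k * inner ℝ (w j) (w k) := by
    intro i
    rw [← real_inner_self_eq_norm_sq]
    unfold hwu
    rw [sum_inner]
    refine Finset.sum_congr rfl fun j _ => ?_
    rw [inner_sum]
    refine Finset.sum_congr rfl fun k _ => ?_
    rw [real_inner_smul_left, real_inner_smul_right, hS j i]; ring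
  simp only [this, Matrix.mul_apply, Finset.sum_mul]
  rw [Finset.sum_comm]
  refine Finset.sum_congr rfl fun j _ => ?_
  rw [Finset.sum_comm]

lemma hwu_mul (S : Matrix (Fin N) (Fin N) ℝ) (w : Fin N → EuclideanSpace ℝ (Fin N)) (i : Fin N) :
    hwu (S * S) w i = hwu S (hwu S w) i := by
  unfold hwu
  simp only [Matrix.mul_apply, Finset.sum_smul, Finset.smul_sum, smul_smul]
  rw [Finset.sum_comm]

lemma hwr_le (S : Matrix (Fin N) (Fin N) ℝ) (L : ℝ)
    (hL : ∀ x : Fin N → ℝ, ∑ i, (∑ j, S i j * x j) ^ 2 ≤ L ^ 2 * ∑ j, x j ^ 2)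
    (w : Fin N → EuclideanSpace ℝ (Fin N)) : hwr S w ≤ L ^ 2 * ∑ j, ‖w j‖ ^ 2 := by
  unfold hwr
  simp only [EuclideanSpace.real_norm_sq_eq]
  rw [Finset.sum_comm, Finset.sum_comm (s := Finset.univ) (f := fun j i => (w j) i ^ 2), Finset.mul_sum]
  refine Finset.sum_le_sum fun c _ => ?_
  have := hL (fun j => w j c)
  simpa [hwu] using this

lemma hwr_sq_le (S : Matrix (Fin N) (Fin N) ℝ) (L : ℝ)
    (hL : ∀ x : Fin N → ℝ, ∑ i, (∑ j, S i j * x j) ^ 2 ≤ L ^ 2 * ∑ j, x j ^ 2)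
    (w : Fin N → EuclideanSpace ℝ (Fin N)) : hwr (S * S) w ≤ L ^ 2 * hwr S w := by
  have := hwr_le S L hL (hwu S w)
  unfold hwr at *
  simpa only [hwu_mul] using this

lemma hwF_sq_le (S : Matrix (Fin N) (Fin N) ℝ) (L : ℝ)
    (hL : ∀ x : Fin N → ℝ, ∑ i, (∑ j, S i j * x j) ^ 2 ≤ L ^ 2 * ∑ j, x j ^ 2) :
    hwF (S * S) ≤ L ^ 2 * hwF S := by
  unfold hwF
  rw [Finset.sum_comm, Finset.sum_comm (s := Finset.univ) (f := fun j i => S j i ^ 2), Finset.mul_sum]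
  refine Finset.sum_le_sum fun c _ => ?_
  simpa [Matrix.mul_apply] using hL (fun j => S j c)

lemma hw_card : (Fintype.card (Equiv.Perm (Fin N)) : ℝ) = (Nat.factorial N : ℝ) := by
  rw [Fintype.card_perm, Fintype.card_fin]

lemma hw_R (S : Matrix (Fin N) (Fin N) ℝ) (hN : 20 ≤ N) (hS : ∀ i j, S i j = S j i)
    (h0 : ∀ i, ∑ j, S i j = 0)
    (v : Fin N → EuclideanSpace ℝ (Fin N)) (hv : ∀ i j, ‖v i - v j‖ ^ 2 ≤ 4) (L : ℝ) (hL0 : 0 < L)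
    (hL : ∀ x : Fin N → ℝ, ∑ i, (∑ j, S i j * x j) ^ 2 ≤ L ^ 2 * ∑ j, x j ^ 2)
    (η : ℝ) (hη : η = 1 / (500 * L ^ 2)) :
    ∑ σ : Equiv.Perm (Fin N), Real.exp (η * hwr S (fun k => v (σ k))) ≤
      (Fintype.card (Equiv.Perm (Fin N)) : ℝ) * Real.exp (7 * η * hwF S) := by
  have hN' : (20:ℝ) ≤ N := by exact_mod_cast hN
  have hS2 : ∀ i j, (S * S) i j = (S * S) j i := by
    intro i j
    simp only [Matrix.mul_apply]
    exact Finset.sum_congr rfl fun k _ => by rw [hS i k, hS k j]; ring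
  have h02 : ∀ i, ∑ j, (S * S) i j = 0 := by
    intro i
    simp only [Matrix.mul_apply]
    rw [Finset.sum_comm]
    simp [← Finset.mul_sum, h0]
  obtain ⟨μ, -, hμ, hc⟩ := hw_core (S * S) hN hS2 h02 v hv
  simp only [← hwr_eq S hS] at hc
  have htr : ∑ i, (S * S) i i = hwF S := by
    unfold hwF
    simp only [Matrix.mul_apply]
    exact Finset.sum_congr rfl fun i _ => Finset.sum_congr rfl fun k _ => by rw [hS k i]; ring
  rw [htr] at hμ
  have hF0 : 0 ≤ hwF S := by unfold hwF; positivity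
  set F := hwF S with hF
  have hH : 0 ≤ (∑ i, hwh v i) / N ∧ (∑ i, hwh v i) / N ≤ 4 * N := by
    refine ⟨div_nonneg (Finset.sum_nonneg fun i _ => (hwh_bd v hv i).1) (by linarith), ?_⟩
    rw [div_le_iff₀ (by linarith)]
    calc ∑ i, hwh v i ≤ ∑ i : Fin N, (4 * N : ℝ) := Finset.sum_le_sum fun i _ => (hwh_bd v hv i).2
      _ = 4 * N * N := by simp; ring
  rw [mul_div_assoc] at hμ
  set H := (∑ i, hwh v i) / N
  have hFH : F * H ≤ F * (4 * N) := mul_le_mul_of_nonneg_left hH.2 hF0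
  have hFH0 : 0 ≤ F * H := mul_nonneg hF0 hH.1
  have hμ0 : 0 ≤ μ := by
    by_contra hneg
    push Not at hneg
    nlinarith
  have hμ4 : μ ≤ 4 * F := by
    have : (4 * N - 4) * μ ≤ (4 * N - 4) * (4 * F) := by nlinarith
    exact le_of_mul_le_mul_left this (by linarith)
  have hη0 : 0 < η := by rw [hη]; positivity
  have hηL : 250 * η * L ^ 2 = 1 / 2 := by rw [hη]; field_simp; norm_num
  have key := hw_ode (fun σ : Equiv.Perm (Fin N) => hwr S (fun k => v (σ k)) - μ) (250 * L ^ 2 * (μ + F)) η hη0.le (by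
    intro θ h1 h2
    have hc1 := hc θ h1
    set g : Equiv.Perm (Fin N) → ℝ := fun σ => Real.exp (θ * (hwr S (fun k => v (σ k)) - μ)) with hg
    set X := ∑ σ : Equiv.Perm (Fin N), (hwr S (fun k => v (σ k)) - μ) * g σ with hX
    set m := ∑ σ : Equiv.Perm (Fin N), g σ with hm
    have hm0 : 0 ≤ m := Finset.sum_nonneg fun σ _ => (Real.exp_pos _).le
    have hb : ∑ σ : Equiv.Perm (Fin N), (hwr (S * S) (fun k => v (σ k)) + hwF (S * S)) * g σ ≤
        L ^ 2 * (X + (μ + F) * m) := by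
      calc _ ≤ ∑ σ : Equiv.Perm (Fin N), (L ^ 2 * (hwr S (fun k => v (σ k)) + F)) * g σ := by
            refine Finset.sum_le_sum fun σ _ => mul_le_mul_of_nonneg_right ?_ (Real.exp_pos _).le
            have := hwr_sq_le S L hL (fun k => v (σ k))
            have := hwF_sq_le S L hL
            linarith
        _ = _ := by
            rw [hX, hm, Finset.mul_sum, ← Finset.sum_add_distrib, Finset.mul_sum]
            exact Finset.sum_congr rfl fun σ _ => by ring
    have hX1 : X ≤ 250 * θ * (L ^ 2 * (X + (μ + F) * m)) :=
      hc1.trans (mul_le_mul_of_nonneg_left hb (by positivity))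
    show X ≤ 2 * (250 * L ^ 2 * (μ + F)) * θ * m
    have hp : 0 ≤ 250 * L ^ 2 * (μ + F) * θ * m := by positivity
    rcases le_total X 0 with hx | hx
    · linarith
    · have : 250 * θ * L ^ 2 * X ≤ 1 / 2 * X := by
        refine mul_le_mul_of_nonneg_right ?_ hx
        rw [← hηL]; gcongr
      linarith)
  have e1 : ∑ σ : Equiv.Perm (Fin N), Real.exp (η * hwr S (fun k => v (σ k))) =
     Real.exp (η * μ) * ∑ σ : Equiv.Perm (Fin N), Real.exp (η * (hwr S (fun k => v (σ k)) - μ)) := by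
    rw [Finset.mul_sum]
    refine Finset.sum_congr rfl fun σ _ => ?_
    rw [← Real.exp_add]; ring_nf
  rw [e1]
  calc _ ≤ Real.exp (η * μ) * (Fintype.card (Equiv.Perm (Fin N)) * Real.exp (250 * L ^ 2 * (μ + F) * η ^ 2)) := by
        gcongr
    _ = Fintype.card (Equiv.Perm (Fin N)) * Real.exp (η * μ + 250 * L ^ 2 * (μ + F) * η ^ 2) := by
        rw [Real.exp_add]; ring
    _ ≤ _ := by
        gcongr
        have : 250 * L ^ 2 * (μ + F) * η ^ 2 = 1 / 2 * (μ + F) * η := by rw [← hηL]; ring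
        rw [this]
        nlinarith

lemma hw_mgf (S : Matrix (Fin N) (Fin N) ℝ) (hN : 20 ≤ N) (hS : ∀ i j, S i j = S j i)
    (h0 : ∀ i, ∑ j, S i j = 0)
    (v : Fin N → EuclideanSpace ℝ (Fin N)) (hv : ∀ i j, ‖v i - v j‖ ^ 2 ≤ 4) (L : ℝ) (hL0 : 0 < L)
    (hL : ∀ x : Fin N → ℝ, ∑ i, (∑ j, S i j * x j) ^ 2 ≤ L ^ 2 * ∑ j, x j ^ 2) :
    ∃ μ : ℝ, (∑ σ : Equiv.Perm (Fin N), (hwq S (fun k => v (σ k)) - μ) = 0) ∧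
    ∀ θ₀ : ℝ, 0 ≤ θ₀ → θ₀ ≤ 1 / (500 * L) →
    ∑ σ : Equiv.Perm (Fin N), Real.exp (θ₀ * (hwq S (fun k => v (σ k)) - μ)) ≤
      (Fintype.card (Equiv.Perm (Fin N)) : ℝ) * Real.exp (2000 * hwF S * θ₀ ^ 2) := by
  obtain ⟨μ, hμ, -, hc⟩ := hw_core S hN hS h0 v hv
  refine ⟨μ, hμ, fun θ₀ hθ0 hθ1 => ?_⟩
  obtain ⟨η, hη⟩ : ∃ η : ℝ, η = 1 / (500 * L ^ 2) := ⟨_, rfl⟩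
  have hR := hw_R S hN hS h0 v hv L hL0 hL η hη
  have hη0 : 0 < η := by rw [hη]; positivity
  have hF0 : 0 ≤ hwF S := by unfold hwF; positivity
  refine hw_ode (fun σ : Equiv.Perm (Fin N) => hwq S (fun k => v (σ k)) - μ) (2000 * hwF S) θ₀ hθ0 ?_
  intro θ h1 h2
  have hc1 := hc θ h1
  have hM : (0:ℝ) < Fintype.card (Equiv.Perm (Fin N)) := by exact_mod_cast Fintype.card_pos
  set M : ℝ := ((Fintype.card (Equiv.Perm (Fin N)) : ℕ) : ℝ) with hMdef
  set F := hwF S with hF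
  set f : Equiv.Perm (Fin N) → ℝ := fun σ => hwq S (fun k => v (σ k)) - μ with hf
  set R : Equiv.Perm (Fin N) → ℝ := fun σ => hwr S (fun k => v (σ k)) with hRdef
  set X := ∑ σ, f σ * Real.exp (θ * f σ) with hX
  set m := ∑ σ, Real.exp (θ * f σ) with hm
  set Y := ∑ σ, R σ * Real.exp (θ * f σ) with hY
  have hmM : M ≤ m := by
    have : ∑ σ, (θ * f σ + 1) ≤ m := Finset.sum_le_sum fun σ _ => Real.add_one_le_exp _
    rw [Finset.sum_add_distrib, ← Finset.mul_sum, hμ] at this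
    simpa using this
  have hm0 : 0 < m := lt_of_lt_of_le hM hmM
  have hX1 : X ≤ 250 * θ * (Y + F * m) := by
    refine hc1.trans (le_of_eq ?_)
    congr 1
    rw [hY, hm, Finset.mul_sum, ← Finset.sum_add_distrib]
    exact Finset.sum_congr rfl fun σ _ => by simp only [hRdef, hf]; ring
  -- entropy duality
  have hent : η * Y ≤ θ * X + 7 * η * F * m := by
    set ℓ := Real.log (m / M) with hℓ
    have hℓ0 : 0 ≤ ℓ := Real.log_nonneg (by rw [le_div_iff₀ hM]; linarith)
    have hpt : ∀ σ, Real.exp (θ * f σ) * (η * R σ - 7 * η * F + ℓ) ≤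
        θ * f σ * Real.exp (θ * f σ) - Real.exp (θ * f σ) + Real.exp (η * R σ - 7 * η * F + ℓ) := by
      intro σ
      set a := θ * f σ
      set y := η * R σ - 7 * η * F + ℓ
      have k1 := Real.add_one_le_exp (y - a)
      have k2 : Real.exp y = Real.exp a * Real.exp (y - a) := by rw [← Real.exp_add]; ring_nf
      have k3 := mul_le_mul_of_nonneg_left k1 (Real.exp_pos a).le
      rw [k2]; linarith
    have hsum := Finset.sum_le_sum (s := Finset.univ) fun σ _ => hpt σ
    have s1 : ∑ σ, Real.exp (θ * f σ) * (η * R σ - 7 * η * F + ℓ) = η * Y - 7 * η * F * m + ℓ * m := by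
      rw [hY, hm, Finset.mul_sum, Finset.mul_sum, Finset.mul_sum, ← Finset.sum_sub_distrib, ← Finset.sum_add_distrib]
      exact Finset.sum_congr rfl fun σ _ => by ring
    have s2 : ∑ σ, (θ * f σ * Real.exp (θ * f σ) - Real.exp (θ * f σ) + Real.exp (η * R σ - 7 * η * F + ℓ))
        = θ * X - m + ∑ σ, Real.exp (η * R σ - 7 * η * F + ℓ) := by
      rw [Finset.sum_add_distrib, Finset.sum_sub_distrib, hX, Finset.mul_sum]
      simp only [mul_assoc, hm]
    have s3 : ∑ σ, Real.exp (η * R σ - 7 * η * F + ℓ) ≤ m := by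
      have : ∀ σ, Real.exp (η * R σ - 7 * η * F + ℓ) = Real.exp (η * R σ) * ((m / M) / Real.exp (7 * η * F)) := by
        intro σ
        rw [Real.exp_add, Real.exp_sub, hℓ, Real.exp_log (div_pos hm0 hM)]; ring
      simp only [this]
      rw [← Finset.sum_mul]
      calc _ ≤ (M * Real.exp (7 * η * F)) * ((m / M) / Real.exp (7 * η * F)) := by
            refine mul_le_mul_of_nonneg_right hR (by positivity)
        _ = m := by
            have := (Real.exp_pos (7 * η * F)).ne'
            field_simp
    rw [s1, s2] at hsum
    have := mul_nonneg hℓ0 hm0.le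
    linarith
  show X ≤ 2 * (2000 * F) * θ * m
  have hp : 0 ≤ F * θ * m := by positivity
  rcases le_total X 0 with hx | hx
  · linarith
  · have hθL : θ * L ≤ 1 / 500 := by
      have : θ ≤ 1 / (500 * L) := h2.trans hθ1
      rw [le_div_iff₀ (by positivity)] at this
      linarith
    have hY2 : Y ≤ 500 * L ^ 2 * θ * X + 7 * F * m := by
      have e : η * (500 * L ^ 2 * θ * X + 7 * F * m) = θ * X + 7 * η * F * m := by
        rw [hη]; field_simp
      rw [← e] at hent
      exact le_of_mul_le_mul_left hent hη0
    have h3 : (θ * L) ^ 2 ≤ (1 / 500) ^ 2 := pow_le_pow_left₀ (by positivity) hθL 2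
    have h4 : 250 * θ * Y ≤ 250 * θ * (500 * L ^ 2 * θ * X + 7 * F * m) := by gcongr
    have h5 : (θ * L) ^ 2 * X ≤ (1 / 500) ^ 2 * X := by gcongr
    nlinarith

lemma hw_transp (C : Matrix (Fin N) (Fin N) ℝ) (L : ℝ)
    (hL : ∀ x : Fin N → ℝ, ∑ i, (∑ j, C i j * x j) ^ 2 ≤ L ^ 2 * ∑ j, x j ^ 2)
    (x : Fin N → ℝ) : ∑ i, (∑ j, C j i * x j) ^ 2 ≤ L ^ 2 * ∑ j, x j ^ 2 := by
  set y : Fin N → ℝ := fun i => ∑ j, C j i * x j with hy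
  have h1 : ∑ i, y i ^ 2 = ∑ j, x j * ∑ i, C j i * y i := by
    have : ∀ i, y i ^ 2 = ∑ j, x j * (C j i * y i) := by
      intro i
      rw [sq]; nth_rewrite 1 [hy]
      simp only [Finset.sum_mul]
      exact Finset.sum_congr rfl fun j _ => by ring
    simp only [this, Finset.mul_sum]
    rw [Finset.sum_comm]
  have h2 : (∑ i, y i ^ 2) ^ 2 ≤ (∑ j, x j ^ 2) * (L ^ 2 * ∑ i, y i ^ 2) := by
    nth_rewrite 1 [h1]
    refine (Finset.sum_mul_sq_le_sq_mul_sq _ _ _).trans ?_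
    exact mul_le_mul_of_nonneg_left (hL y) (by positivity)
  have h3 : 0 ≤ ∑ i, y i ^ 2 := by positivity
  show ∑ i, y i ^ 2 ≤ _
  rcases h3.eq_or_lt with h | h
  · rw [← h]; positivity
  · have : (∑ i, y i ^ 2) * (∑ i, y i ^ 2) ≤ (∑ i, y i ^ 2) * (L ^ 2 * ∑ j, x j ^ 2) := by
      nlinarith
    exact le_of_mul_le_mul_left this h

lemma hw_op (C : Matrix (Fin N) (Fin N) ℝ) (x : Fin N → ℝ) :
    ∑ i, (∑ j, C i j * x j) ^ 2 ≤ (opNorm C) ^ 2 * ∑ j, x j ^ 2 := by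
  have h := (LinearMap.toContinuousLinearMap (Matrix.toEuclideanLin C)).le_opNorm (WithLp.toLp 2 x)
  have h2 := pow_le_pow_left₀ (norm_nonneg _) h 2
  rw [mul_pow, EuclideanSpace.real_norm_sq_eq, EuclideanSpace.real_norm_sq_eq] at h2
  unfold opNorm
  simpa [Matrix.toLpLin_apply, Matrix.mulVec, dotProduct] using h2

lemma hw_gram (A : Matrix (Fin N) (Fin N) ℝ) (hA : A.PosSemidef) :
    ∃ v : Fin N → EuclideanSpace ℝ (Fin N), ∀ i j, inner ℝ (v i) (v j) = A i j := by
  obtain ⟨B, hB⟩ : ∃ B : Matrix (Fin N) (Fin N) ℝ, A = Matrix.conjTranspose B * B := by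
    open scoped MatrixOrder Matrix.Norms.L2Operator in
    exact CStarAlgebra.nonneg_iff_eq_star_mul_self.mp hA.nonneg
  refine ⟨fun i => WithLp.toLp 2 (fun k => B k i), fun i j => ?_⟩
  rw [hB]
  simp [Matrix.mul_apply, PiLp.inner_apply, mul_comm]

lemma hw_tail (f : Equiv.Perm (Fin N) → ℝ) (θ t B : ℝ) (hθ : 0 ≤ θ)
    (h : ∑ σ, Real.exp (θ * f σ) ≤ (Fintype.card (Equiv.Perm (Fin N)) : ℝ) * Real.exp B) :
    permProb N (fun σ => f σ ≥ t) ≤ Real.exp (B - θ * t) := by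
  unfold permProb
  have hM : (0:ℝ) < (Nat.factorial N : ℝ) := by exact_mod_cast Nat.factorial_pos N
  rw [hw_card] at h
  rw [div_le_iff₀ hM, Real.exp_sub, div_mul_eq_mul_div, le_div_iff₀ (Real.exp_pos _)]
  calc ((Finset.univ.filter fun σ => f σ ≥ t).card : ℝ) * Real.exp (θ * t)
      = ∑ σ ∈ Finset.univ.filter (fun σ => f σ ≥ t), Real.exp (θ * t) := by simp
    _ ≤ ∑ σ ∈ Finset.univ.filter (fun σ => f σ ≥ t), Real.exp (θ * f σ) := by
        refine Finset.sum_le_sum fun σ hσ => Real.exp_le_exp.2 ?_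
        exact mul_le_mul_of_nonneg_left (Finset.mem_filter.1 hσ).2 hθ
    _ ≤ ∑ σ, Real.exp (θ * f σ) :=
        Finset.sum_le_sum_of_subset_of_nonneg (Finset.filter_subset _ _) fun _ _ _ => (Real.exp_pos _).le
    _ ≤ _ := by rw [mul_comm (Real.exp B)]; exact h

end HW

/-- A combinatorial Hanson–Wright-type inequality, `A` positive semidefinite. -/
theorem combinatorial_hanson_wright_psd :
    ∃ K : ℝ, 0 < K ∧
      ∀ (N : ℕ), 20 ≤ N →
      ∀ (C A : Matrix (Fin N) (Fin N) ℝ),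
        (∀ k, ∑ i, C i k = 0) →
        (∀ k, ∑ j, C k j = 0) →
        A.PosSemidef →
        (∀ i j, A i j ∈ Set.Icc (-1 : ℝ) 1) →
        ∀ t : ℝ, 0 < t →
          permProb N (fun σ =>
              (∑ i, ∑ j, C i j * A (σ i) (σ j))
                - permExp N (fun σ' => ∑ i, ∑ j, C i j * A (σ' i) (σ' j)) ≥ t)
            ≤ Real.exp (-(K * t ^ 2 /
                ((frobNorm C) ^ 2 + opNorm C * t))) := by
  refine ⟨1 / 8000, by norm_num, ?_⟩
  intro N hN C A hcol hrow hA hent t ht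
  obtain ⟨v, hv⟩ := hw_gram A hA
  have hFC : (frobNorm C) ^ 2 = hwF C := by
    unfold frobNorm hwF
    exact Real.sq_sqrt (by positivity)
  have hF0 : 0 ≤ hwF C := by unfold hwF; positivity
  rw [hFC]
  set L := opNorm C with hLdef
  have hLn : 0 ≤ L := norm_nonneg _
  rcases hLn.eq_or_lt with hL0 | hL0
  · -- degenerate case
    have hz : hwF C = 0 := by
      have : ∀ j, ∑ i, C i j ^ 2 = 0 := by
        intro j
        have h1 := hw_op C (fun k => if k = j then 1 else 0)
        rw [← hLdef, ← hL0] at h1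
        simp only [mul_ite, mul_one, mul_zero, Finset.sum_ite_eq', Finset.mem_univ, if_true] at h1
        refine le_antisymm (by simpa using h1) (by positivity)
      unfold hwF
      rw [Finset.sum_comm]
      simp [this]
    rw [hz, ← hL0]
    simp only [zero_mul, add_zero, div_zero, neg_zero, Real.exp_zero]
    unfold permProb
    rw [div_le_one (by exact_mod_cast Nat.factorial_pos N), ← hw_card]
    exact_mod_cast Finset.card_le_univ _
  set S : Matrix (Fin N) (Fin N) ℝ := fun i j => (C i j + C j i) / 2 with hSdef
  have hS : ∀ i j, S i j = S j i := fun i j => by simp only [hSdef]; ring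
  have h0 : ∀ i, ∑ j, S i j = 0 := by
    intro i
    simp only [hSdef, ← Finset.sum_div, Finset.sum_add_distrib, hcol, hrow]
    simp
  have hL : ∀ x : Fin N → ℝ, ∑ i, (∑ j, S i j * x j) ^ 2 ≤ L ^ 2 * ∑ j, x j ^ 2 := by
    intro x
    have h1 := hw_op C x
    have h2 := hw_transp C L (hw_op C) x
    rw [← hLdef] at h1
    have h3 : ∑ i, (∑ j, S i j * x j) ^ 2 ≤
        ∑ i, (1 / 2 * (∑ j, C i j * x j) ^ 2 + 1 / 2 * (∑ j, C j i * x j) ^ 2) := by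
      refine Finset.sum_le_sum fun i _ => ?_
      have e : ∑ j, S i j * x j = ((∑ j, C i j * x j) + ∑ j, C j i * x j) / 2 := by
        rw [← Finset.sum_add_distrib, Finset.sum_div]
        exact Finset.sum_congr rfl fun j _ => by simp only [hSdef]; ring
      rw [e]
      nlinarith [sq_nonneg ((∑ j, C i j * x j) - ∑ j, C j i * x j)]
    rw [Finset.sum_add_distrib, ← Finset.mul_sum, ← Finset.mul_sum] at h3
    linarith
  have hFS : hwF S ≤ hwF C := by
    have h3 : hwF S ≤ ∑ i, ∑ j, (1 / 2 * C i j ^ 2 + 1 / 2 * C j i ^ 2) := by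
      refine Finset.sum_le_sum fun i _ => Finset.sum_le_sum fun j _ => ?_
      simp only [hSdef]
      nlinarith [sq_nonneg (C i j - C j i)]
    refine h3.trans (le_of_eq ?_)
    simp only [Finset.sum_add_distrib, ← Finset.mul_sum]
    rw [Finset.sum_comm (f := fun i j => C j i ^ 2)]
    unfold hwF; ring
  have hvb : ∀ i j, ‖v i - v j‖ ^ 2 ≤ 4 := by
    intro i j
    rw [norm_sub_sq_real, ← real_inner_self_eq_norm_sq, ← real_inner_self_eq_norm_sq, hv, hv, hv]
    have a1 := (hent i i).2
    have a2 := (hent j j).2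
    have a3 := (hent i j).1
    linarith
  have hq : ∀ σ : Equiv.Perm (Fin N), ∑ i, ∑ j, C i j * A (σ i) (σ j) = hwq S (fun k => v (σ k)) := by
    intro σ
    unfold hwq
    have e : ∀ i j, S i j * inner ℝ (v (σ i)) (v (σ j)) =
        1 / 2 * (C i j * A (σ i) (σ j)) + 1 / 2 * (C j i * A (σ j) (σ i)) := by
      intro i j
      rw [hv, show A (σ j) (σ i) = A (σ i) (σ j) by rw [← hv, ← hv, real_inner_comm]]
      simp only [hSdef]; ring
    simp only [e, Finset.sum_add_distrib, ← Finset.mul_sum]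
    rw [Finset.sum_comm (f := fun i j => C j i * A (σ j) (σ i))]
    ring
  simp only [hq]
  obtain ⟨μ, hμ, hmgf⟩ := hw_mgf S hN hS h0 v hvb L hL0 hL
  have hE : permExp N (fun σ' => hwq S (fun k => v (σ' k))) = μ := by
    unfold permExp
    rw [Finset.sum_sub_distrib] at hμ
    rw [sub_eq_zero.1 hμ]
    simp only [Finset.sum_const, Finset.card_univ, nsmul_eq_mul]
    rw [hw_card]
    have : (Nat.factorial N : ℝ) ≠ 0 := by exact_mod_cast Nat.factorial_ne_zero N
    field_simp
  rw [hE]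
  have hden : 0 < 4000 * hwF C + 500 * L * t := by positivity
  obtain ⟨θ, hθ⟩ : ∃ θ : ℝ, θ = t / (4000 * hwF C + 500 * L * t) := ⟨_, rfl⟩
  have hθ0 : 0 ≤ θ := by rw [hθ]; positivity
  have hθ1 : θ ≤ 1 / (500 * L) := by
    rw [hθ, div_le_div_iff₀ hden (by positivity)]
    nlinarith
  have hθ2 : θ * (4000 * hwF C + 500 * L * t) = t := by
    rw [hθ]; field_simp
  refine (hw_tail _ θ t _ hθ0 (hmgf θ hθ0 hθ1)).trans (Real.exp_le_exp.2 ?_)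
  have k1 : 2000 * hwF S * θ ^ 2 ≤ 2000 * hwF C * θ ^ 2 := by gcongr
  have k2 : 2000 * hwF C * θ ^ 2 ≤ θ * t / 2 := by
    have : 0 ≤ θ * (θ * (500 * L * t)) := by positivity
    have e : θ * t = θ * (θ * (4000 * hwF C + 500 * L * t)) := by rw [hθ2]
    rw [e]; nlinarith
  have k3 : 1 / 8000 * t ^ 2 / (hwF C + L * t) ≤ θ * t / 2 := by
    have hd2 : 0 < hwF C + L * t := by positivity
    rw [div_le_iff₀ hd2]
    have : t * t = t * (θ * (4000 * hwF C + 500 * L * t)) := by rw [hθ2]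
    have k4 : 0 ≤ t * θ * (L * t) := by positivity
    nlinarith
  linarith
end

section
/- There exists a universal constant K > 0 such that the following holds. Let N be a positive integer, let C = [c_{ij}] ∈ R^{N×N} be doubly centered with all diagonal entries zero, and let A = [a_{ij}] ∈ R^{N×N} be arbitrary. Let Q_QF := Σ_{i,j∈[N]} c_{ij} a_{π(i)π(j)} and define ν := max over i,j ∈ [N] and σ, σ̃ ∈ S_N of | Σ_{k=1}^{⌊N/2⌋} c_{iσ(k)} a_{jσ̃(k)} |, and assume ν > 0. Then for every t ≥ 0, P( Q_QF − E[Q_QF] ≥ t ) ≤ exp( − (t / (K ν)) · log( 1 + N ν t / ( K ‖C‖_op² ‖A‖_F² ) ) ). -/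
open scoped BigOperators Classical

theorem cb_sinh_le {a y : ℝ} (ha : 0 ≤ a) (ha1 : a ≤ 1) (hy : 0 ≤ y) :
    Real.sinh (a * y) ≤ a * Real.sinh y := by
  have hc : ConvexOn ℝ (Set.Ici (0:ℝ)) Real.sinh := by
    apply convexOn_of_deriv2_nonneg (convex_Ici 0) Real.continuous_sinh.continuousOn
    · exact Real.differentiable_sinh.differentiableOn
    · simp only [Real.deriv_sinh]
      exact Real.differentiable_cosh.differentiableOn
    · intro x hx
      simp at hx
      simp [Real.deriv_sinh, Real.deriv_cosh, Real.sinh_nonneg_iff, hx.le]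
  have := hc.2 (x := y) (y := 0) hy (by simp) ha (sub_nonneg.2 ha1) (by ring)
  simpa using this

theorem cb_cosh_le {x s : ℝ} (h : |x| ≤ s) (hs : 0 < s) :
    Real.cosh x ≤ 1 + (Real.cosh s - 1) / s ^ 2 * x ^ 2 := by
  have h1 : ∀ z : ℝ, Real.cosh z = 1 + 2 * Real.sinh (z / 2) ^ 2 := by
    intro z
    have := Real.cosh_two_mul (z / 2)
    rw [show 2 * (z / 2) = z by ring] at this
    rw [this, Real.cosh_sq]; ring
  have h2 := cb_sinh_le (a := |x| / s) (y := s / 2) (by positivity)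
    (by rw [div_le_one hs]; exact h) (by positivity)
  rw [show |x| / s * (s / 2) = |x| / 2 by field_simp] at h2
  have h0 : 0 ≤ Real.sinh (|x| / 2) := Real.sinh_nonneg_iff.2 (by positivity)
  have h3 := pow_le_pow_left₀ h0 h2 2
  rw [← Real.cosh_abs, h1 |x|, h1 s, ← sq_abs x]
  have : (1 + 2 * Real.sinh (s / 2) ^ 2 - 1) / s ^ 2 * |x| ^ 2
     = 2 * (|x| / s * Real.sinh (s / 2)) ^ 2 := by field_simp; ring
  rw [this]; linarith

theorem cb_sum_mul {N : ℕ} (τ : Equiv.Perm (Fin N)) (g : Equiv.Perm (Fin N) → ℝ) :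
    ∑ σ, g (σ * τ) = ∑ σ, g σ := Equiv.sum_comp (Equiv.mulRight τ) g

theorem cb_key_step {N : ℕ} (H T : Equiv.Perm (Fin N) → ℝ) (hH0 : ∀ σ, 0 ≤ H σ)
    (x x' : Fin N) (F : Finset (Fin N)) (hx : x ∈ F) (hx' : x' ∈ F)
    (hH : ∀ σ, ∀ z ∈ F, ∀ w ∈ F, H (σ * Equiv.swap z w) = H σ)
    (θ G : ℝ) (hG : 0 ≤ G)
    (hT : ∀ σ, T (σ * Equiv.swap x x') = - T σ)
    (hc : ∀ σ, Real.cosh (θ * T σ) ≤ 1 + G * T σ ^ 2)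
    (u : Equiv.Perm (Fin N) → Fin N → ℝ) (hu0 : ∀ σ l, 0 ≤ u σ l)
    (hu : ∀ σ, ∀ z ∈ F, ∀ w ∈ F, u (σ * Equiv.swap z w) = u σ)
    (hTu : ∀ σ, T σ ^ 2 ≤ u σ (σ x) + u σ (σ x')) (c : ℝ) (hcc : 2 * G / F.card ≤ c) :
    ∑ σ, H σ * Real.exp (θ * T σ) ≤ ∑ σ, H σ * Real.exp (c * ∑ l, u σ l) := by
  have hF : (0:ℝ) < F.card := by exact_mod_cast Finset.card_pos.2 ⟨x, hx⟩
  have e1 : ∑ σ, H σ * Real.exp (θ * T σ) = ∑ σ, H σ * Real.cosh (θ * T σ) := by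
    have := cb_sum_mul (Equiv.swap x x') (fun σ => H σ * Real.exp (θ * T σ))
    simp only [hT, hH _ x hx x' hx'] at this
    have e2 : ∀ σ, H σ * Real.cosh (θ * T σ) =
        (H σ * Real.exp (θ * T σ) + H σ * Real.exp (θ * -T σ)) / 2 := by
      intro σ; rw [Real.cosh_eq, mul_neg]; ring
    simp only [e2]
    rw [← Finset.sum_div, Finset.sum_add_distrib, this]; ring
  have e3 : ∀ v ∈ F, ∑ σ, H σ * u σ (σ v) ≤ (∑ σ, H σ * ∑ l, u σ l) / F.card := by
    intro v hv
    rw [le_div_iff₀ hF]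
    have : ∀ z ∈ F, ∑ σ, H σ * u σ (σ z) = ∑ σ, H σ * u σ (σ v) := by
      intro z hz
      have := cb_sum_mul (Equiv.swap v z) (fun σ => H σ * u σ (σ z))
      simp only [hH _ v hv z hz, hu _ v hv z hz] at this
      rw [← this]; simp
    have h2 : ∑ z ∈ F, ∑ σ, H σ * u σ (σ z) = (∑ σ, H σ * u σ (σ v)) * F.card := by
      rw [Finset.sum_congr rfl this]; simp [mul_comm]
    rw [← h2, Finset.sum_comm]
    apply Finset.sum_le_sum
    intro σ _
    rw [← Finset.mul_sum]
    apply mul_le_mul_of_nonneg_left _ (hH0 σ)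
    calc ∑ z ∈ F, u σ (σ z) ≤ ∑ z, u σ (σ z) :=
          Finset.sum_le_sum_of_subset_of_nonneg (Finset.subset_univ _) (fun _ _ _ => hu0 _ _)
      _ = _ := Equiv.sum_comp σ (u σ)
  rw [e1]
  have e4 : ∑ σ, H σ * Real.cosh (θ * T σ) ≤
      ∑ σ, H σ + G * (∑ σ, H σ * u σ (σ x)) + G * (∑ σ, H σ * u σ (σ x')) := by
    rw [Finset.mul_sum, Finset.mul_sum, ← Finset.sum_add_distrib, ← Finset.sum_add_distrib]
    apply Finset.sum_le_sum
    intro σ _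
    have := mul_le_mul_of_nonneg_left (hc σ) (hH0 σ)
    have h5 := mul_le_mul_of_nonneg_left (hTu σ) (mul_nonneg (hH0 σ) hG)
    nlinarith
  have e5 : ∑ σ, H σ + 2 * G / F.card * (∑ σ, H σ * ∑ l, u σ l) ≤
      ∑ σ, H σ * Real.exp (c * ∑ l, u σ l) := by
    rw [Finset.mul_sum, ← Finset.sum_add_distrib]
    apply Finset.sum_le_sum
    intro σ _
    have hU : 0 ≤ ∑ l, u σ l := Finset.sum_nonneg (fun _ _ => hu0 _ _)
    have h6 := Real.add_one_le_exp (c * ∑ l, u σ l)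
    have h7 := mul_le_mul_of_nonneg_right hcc hU
    have h8 := mul_le_mul_of_nonneg_left (h7.trans (by linarith : _ ≤ Real.exp (c * ∑ l, u σ l) - 1)) (hH0 σ)
    linarith
  refine e4.trans (le_trans ?_ e5)
  have h1 := mul_le_mul_of_nonneg_left (e3 x hx) hG
  have h2 := mul_le_mul_of_nonneg_left (e3 x' hx') hG
  have : 2 * G / F.card * (∑ σ, H σ * ∑ l, u σ l) = 2 * (G * ((∑ σ, H σ * ∑ l, u σ l) / F.card)) := by
    ring
  linarith

/-- combinatorial average identity -/
theorem cb_avg {N : ℕ} (hN : 3 ≤ N) (C B : Matrix (Fin N) (Fin N) ℝ)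
    (hcol : ∀ k, ∑ i, C i k = 0) (hd : ∀ i, C i i = 0)
    (x x' y : Fin N) (hxx : x ≠ x') (hxy : x ≠ y) (hx'y : x' ≠ y) :
    (N:ℝ) * (N - 2) * ∑ ρ : Equiv.Perm (Fin N),
      (C (ρ x) (ρ y) - C (ρ x') (ρ y)) * (B (ρ x) (ρ y) - B (ρ x') (ρ y))
    = 2 * N.factorial * ∑ i, ∑ j, C i j * B i j := by
  set S1 : Fin N → Fin N → ℝ := fun x y => ∑ ρ : Equiv.Perm (Fin N), C (ρ x) (ρ y) * B (ρ x) (ρ y) with hS1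
  set S2 : Fin N → Fin N → ℝ := fun x x' => ∑ ρ : Equiv.Perm (Fin N), C (ρ x) (ρ y) * B (ρ x') (ρ y) with hS2
  have a1 : ∀ v w, v ≠ y → w ≠ y → S1 v y = S1 w y := by
    intro v w hv hw
    simp only [hS1]
    rw [← cb_sum_mul (Equiv.swap v w)]
    simp [Equiv.swap_apply_of_ne_of_ne hv.symm hw.symm]
  have hNr : (3:ℝ) ≤ N := by exact_mod_cast hN
  have cardE : ((Finset.univ.erase y).card : ℝ) = N - 1 := by
    rw [Finset.card_erase_of_mem (Finset.mem_univ _)]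
    simp
    rw [Nat.cast_sub (by omega)]; simp
  have cardE2 : (((Finset.univ.erase y).erase x').card : ℝ) = N - 2 := by
    rw [Finset.card_erase_of_mem (by simp [hx'y]), Finset.card_erase_of_mem (Finset.mem_univ _)]
    simp
    rw [Nat.sub_sub, Nat.cast_sub (by omega)]; simp
  have a2 : (N - 1 : ℝ) * S1 x y = ∑ ρ : Equiv.Perm (Fin N), ∑ i, C i (ρ y) * B i (ρ y) := by
    have h1 : ∑ v ∈ Finset.univ.erase y, S1 v y = (N - 1 : ℝ) * S1 x y := by
      rw [Finset.sum_congr rfl (fun v hv => a1 v x (Finset.ne_of_mem_erase hv) hxy)]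
      rw [Finset.sum_const, nsmul_eq_mul, cardE]
    rw [← h1, Finset.sum_erase _ (by simp [hS1, hd])]
    simp only [hS1]
    rw [Finset.sum_comm]
    exact Finset.sum_congr rfl (fun ρ _ => Equiv.sum_comp ρ (fun i => C i (ρ y) * B i (ρ y)))
  have a3 : (N : ℝ) * ∑ ρ : Equiv.Perm (Fin N), ∑ i, C i (ρ y) * B i (ρ y)
      = N.factorial * ∑ i, ∑ j, C i j * B i j := by
    have h1 : ∀ w : Fin N, ∑ ρ : Equiv.Perm (Fin N), ∑ i, C i (ρ w) * B i (ρ w) =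
        ∑ ρ : Equiv.Perm (Fin N), ∑ i, C i (ρ y) * B i (ρ y) := by
      intro w
      rw [← cb_sum_mul (Equiv.swap w y)]; simp
    have h2 : ∑ w : Fin N, ∑ ρ : Equiv.Perm (Fin N), ∑ i, C i (ρ w) * B i (ρ w) =
        (N : ℝ) * ∑ ρ : Equiv.Perm (Fin N), ∑ i, C i (ρ y) * B i (ρ y) := by
      rw [Finset.sum_congr rfl (fun w _ => h1 w)]; simp
    rw [← h2, Finset.sum_comm]
    have h3 : ∀ ρ : Equiv.Perm (Fin N), ∑ w, ∑ i, C i (ρ w) * B i (ρ w) = ∑ i, ∑ j, C i j * B i j := by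
      intro ρ
      rw [Equiv.sum_comp ρ (fun j => ∑ i, C i j * B i j), Finset.sum_comm]
    rw [Finset.sum_congr rfl (fun ρ _ => h3 ρ)]
    simp [Fintype.card_perm]
  have a4 : ∀ v, v ≠ y → v ≠ x' → S2 v x' = S2 x x' := by
    intro v hv hw
    simp only [hS2]
    rw [← cb_sum_mul (Equiv.swap v x)]
    simp [Equiv.swap_apply_of_ne_of_ne hv.symm hxy.symm, Equiv.swap_apply_of_ne_of_ne hw.symm hxx.symm]
  have a5 : (N - 2 : ℝ) * S2 x x' = - S1 x y := by
    have h1 : ∑ v ∈ (Finset.univ.erase y).erase x', S2 v x' = (N - 2 : ℝ) * S2 x x' := by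
      rw [Finset.sum_congr rfl (fun v hv => a4 v (Finset.ne_of_mem_erase (Finset.mem_of_mem_erase hv)) (Finset.ne_of_mem_erase hv))]
      rw [Finset.sum_const, nsmul_eq_mul, cardE2]
    have h2 := Finset.add_sum_erase (Finset.univ.erase y) (fun v => S2 v x') (a := x') (by simp [hx'y])
    have h3 : ∑ v ∈ Finset.univ.erase y, S2 v x' = 0 := by
      rw [Finset.sum_erase _ (by simp [hS2, hd])]
      simp only [hS2]
      rw [Finset.sum_comm]
      apply Finset.sum_eq_zero
      intro ρ _
      rw [← Finset.sum_mul, Equiv.sum_comp ρ (fun i => C i (ρ y)), hcol, zero_mul]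
    have h4 : S2 x' x' = S1 x y := by
      rw [a1 x x' hxy hx'y]
    rw [h1, h3] at h2
    simp only [h4] at h2
    linarith
  have a6 : S2 x' x = S2 x x' := by
    simp only [hS2]
    rw [← cb_sum_mul (Equiv.swap x x')]
    simp [Equiv.swap_apply_of_ne_of_ne hxy.symm hx'y.symm]
  have a7 : ∑ ρ : Equiv.Perm (Fin N),
      (C (ρ x) (ρ y) - C (ρ x') (ρ y)) * (B (ρ x) (ρ y) - B (ρ x') (ρ y)) =
      S1 x y + S1 x' y - S2 x x' - S2 x' x := by
    simp only [hS1, hS2]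
    rw [← Finset.sum_add_distrib, ← Finset.sum_sub_distrib, ← Finset.sum_sub_distrib]
    exact Finset.sum_congr rfl (fun ρ _ => by ring)
  rw [a7, a6, a1 x' x hx'y hxy, mul_assoc 2, ← a3, ← a2]
  linear_combination (-2 * (N:ℝ)) * a5

noncomputable def cbT {N : ℕ} (D : Equiv.Perm (Fin N) → Fin N → Fin N → ℝ) (x x' : Fin N)
    (σ : Equiv.Perm (Fin N)) : ℝ :=
  (D σ x (σ x) - D σ x (σ x') - D σ x' (σ x) + D σ x' (σ x')) / 2

theorem cb_mgf {N : ℕ} (D : Equiv.Perm (Fin N) → Fin N → Fin N → ℝ) (m : ℕ)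
    (hD : ∀ σ τ : Equiv.Perm (Fin N), (∀ z : Fin N, (z:ℕ) < m → σ z = τ z) → D σ = D τ)
    (ν : ℝ) (hν : ∀ σ x l, |D σ x l| ≤ ν) (hν0 : 0 < ν) (r : ℕ) (X X' : ℕ → Fin N)
    (hX : ∀ p < r, (X p : ℕ) = m + 2 * p) (hX' : ∀ p < r, (X' p : ℕ) = m + 2 * p + 1)
    (θ : ℝ) (hθ : 0 < θ) (c : ℝ)
    (hc : ∀ p < r, 2 * ((Real.cosh (2 * θ * ν) - 1) / (2 * ν) ^ 2) / ((N - (m + 2 * p) : ℕ) : ℝ) ≤ c)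
    (k : ℕ) (hk : k ≤ r) : ∀ (H : Equiv.Perm (Fin N) → ℝ), (∀ σ, 0 ≤ H σ) →
    (∀ σ τ : Equiv.Perm (Fin N), (∀ z : Fin N, (z:ℕ) < m → σ z = τ z) → H σ = H τ) →
    ∑ σ, H σ * Real.exp (θ * ∑ p ∈ Finset.range k, cbT D (X p) (X' p) σ) ≤
    ∑ σ, H σ * Real.exp (c * ∑ p ∈ Finset.range k, ∑ l, (D σ (X p) l ^ 2 + D σ (X' p) l ^ 2)) := by
  induction k with
  | zero => intro H _ _; simp
  | succ k ih =>
    intro H hH0 hH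
    have hkr : k < r := hk
    have hXk := hX k hkr
    have hXk' := hX' k hkr
    have hne : X k ≠ X' k := by
      intro h; rw [h] at hXk; omega
    have hmem' : X' k ∈ Finset.Ici (X k) := Finset.mem_Ici.2 (Fin.le_def.2 (by omega))
    have swapfix : ∀ z ∈ Finset.Ici (X k), ∀ w ∈ Finset.Ici (X k), ∀ v : Fin N, (v:ℕ) < m + 2 * k →
        Equiv.swap z w v = v := by
      intro z hz w hw v hv
      simp only [Finset.mem_Ici, Fin.le_def] at hz hw
      apply Equiv.swap_apply_of_ne_of_ne <;> (intro h; subst h; omega)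
    have Dinv : ∀ σ : Equiv.Perm (Fin N), ∀ z ∈ Finset.Ici (X k), ∀ w ∈ Finset.Ici (X k),
        D (σ * Equiv.swap z w) = D σ := by
      intro σ z hz w hw
      apply hD
      intro v hv
      simp [swapfix z hz w hw v (by omega)]
    have step := cb_key_step
      (fun σ => H σ * Real.exp (θ * ∑ p ∈ Finset.range k, cbT D (X p) (X' p) σ))
      (cbT D (X k) (X' k)) (fun σ => mul_nonneg (hH0 σ) (Real.exp_pos _).le)
      (X k) (X' k) (Finset.Ici (X k)) (by simp) hmem'
      (by
        intro σ z hz w hw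
        have h1 : H (σ * Equiv.swap z w) = H σ := by
          apply hH
          intro v hv
          simp [swapfix z hz w hw v (by omega)]
        have h2 : ∀ p ∈ Finset.range k, cbT D (X p) (X' p) (σ * Equiv.swap z w) = cbT D (X p) (X' p) σ := by
          intro p hp
          have hp := Finset.mem_range.1 hp
          have q1 := hX p (by omega)
          have q2 := hX' p (by omega)
          unfold cbT
          rw [Dinv σ z hz w hw]
          simp [swapfix z hz w hw (X p) (by omega), swapfix z hz w hw (X' p) (by omega)]
        simp only [h1]
        rw [Finset.sum_congr rfl h2])
      θ ((Real.cosh (2 * θ * ν) - 1) / (2 * ν) ^ 2)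
      (div_nonneg (by linarith [Real.one_le_cosh (2 * θ * ν)]) (by positivity))
      (by
        intro σ
        unfold cbT
        rw [Dinv σ (X k) (by simp) (X' k) hmem']
        simp
        ring)
      (by
        intro σ
        have hb : |θ * cbT D (X k) (X' k) σ| ≤ 2 * θ * ν := by
          rw [abs_mul, abs_of_pos hθ]
          have : |cbT D (X k) (X' k) σ| ≤ 2 * ν := by
            unfold cbT
            have b1 := abs_le.1 (hν σ (X k) (σ (X k)))
            have b2 := abs_le.1 (hν σ (X k) (σ (X' k)))
            have b3 := abs_le.1 (hν σ (X' k) (σ (X k)))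
            have b4 := abs_le.1 (hν σ (X' k) (σ (X' k)))
            rw [abs_le]
            constructor <;> linarith [b1.1, b1.2, b2.1, b2.2, b3.1, b3.2, b4.1, b4.2]
          nlinarith
        have := cb_cosh_le hb (by positivity)
        refine this.trans (le_of_eq ?_)
        field_simp)
      (fun σ l => D σ (X k) l ^ 2 + D σ (X' k) l ^ 2) (fun σ l => by positivity)
      (by
        intro σ z hz w hw
        simp only [Dinv σ z hz w hw])
      (by
        intro σ
        unfold cbT
        set a := D σ (X k) (σ (X k))
        set b := D σ (X k) (σ (X' k))
        set d := D σ (X' k) (σ (X k))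
        set e := D σ (X' k) (σ (X' k))
        nlinarith [sq_nonneg (a + b), sq_nonneg (a + d), sq_nonneg (a - e), sq_nonneg (b - d), sq_nonneg (b + e), sq_nonneg (d + e)])
      c (by
        rw [Fin.card_Ici, hXk]; exact hc k hkr)
    have e1 : ∀ σ, H σ * Real.exp (θ * ∑ p ∈ Finset.range (k+1), cbT D (X p) (X' p) σ) =
        H σ * Real.exp (θ * ∑ p ∈ Finset.range k, cbT D (X p) (X' p) σ) *
          Real.exp (θ * cbT D (X k) (X' k) σ) := by
      intro σ
      rw [Finset.sum_range_succ, mul_add, Real.exp_add]; ring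
    simp only [e1]
    refine step.trans ?_
    have := ih (by omega) (fun σ => H σ * Real.exp (c * ∑ l, (D σ (X k) l ^ 2 + D σ (X' k) l ^ 2)))
      (fun σ => mul_nonneg (hH0 σ) (Real.exp_pos _).le)
      (by
        intro σ τ h
        simp only [hH σ τ h, hD σ τ h])
    refine le_trans (le_of_eq ?_) (this.trans (le_of_eq ?_))
    · exact Finset.sum_congr rfl (fun σ _ => by ring)
    · refine Finset.sum_congr rfl (fun σ _ => ?_)
      rw [Finset.sum_range_succ, mul_add c, Real.exp_add]; ring

theorem cb_op {N : ℕ} (C : Matrix (Fin N) (Fin N) ℝ) (w : Fin N → ℝ) :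
    ∑ i, (∑ j, C i j * w j) ^ 2 ≤ opNorm C ^ 2 * ∑ j, w j ^ 2 := by
  have h := (LinearMap.toContinuousLinearMap (Matrix.toEuclideanLin C)).le_opNorm (WithLp.toLp 2 w)
  have h2 := pow_le_pow_left₀ (norm_nonneg _) h 2
  rw [mul_pow, EuclideanSpace.norm_sq_eq, EuclideanSpace.norm_sq_eq] at h2
  simpa [opNorm, Matrix.mulVec, dotProduct] using h2

noncomputable def cbD {N : ℕ} (C A : Matrix (Fin N) (Fin N) ℝ) (m : ℕ) (ρ : Equiv.Perm (Fin N))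
    (σ : Equiv.Perm (Fin N)) (x l : Fin N) : ℝ :=
  ∑ y ∈ Finset.univ.filter (fun y : Fin N => (y : ℕ) < m), C (ρ x) (ρ y) * A l (σ y)

theorem cb_sumD {N : ℕ} (C A : Matrix (Fin N) (Fin N) ℝ) (m : ℕ) (ρ σ : Equiv.Perm (Fin N)) :
    ∑ x, ∑ l, cbD C A m ρ σ x l ^ 2 ≤ opNorm C ^ 2 * frobNorm A ^ 2 := by
  rw [Finset.sum_comm]
  have hf : frobNorm A ^ 2 = ∑ l, ∑ j, A l j ^ 2 :=
    Real.sq_sqrt (Finset.sum_nonneg fun _ _ => Finset.sum_nonneg fun _ _ => sq_nonneg _)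
  rw [hf, Finset.mul_sum]
  apply Finset.sum_le_sum
  intro l _
  have h := cb_op C (fun j => if ((ρ⁻¹ j : Fin N) : ℕ) < m then A l (σ (ρ⁻¹ j)) else 0)
  have e : ∀ x, cbD C A m ρ σ x l =
      ∑ j, C (ρ x) j * (if ((ρ⁻¹ j : Fin N) : ℕ) < m then A l (σ (ρ⁻¹ j)) else 0) := by
    intro x
    rw [← Equiv.sum_comp ρ]
    unfold cbD
    rw [Finset.sum_filter]
    apply Finset.sum_congr rfl
    intro y _
    simp
  simp only [e]
  rw [Equiv.sum_comp ρ (fun i => (∑ j, C i j * (if ((ρ⁻¹ j : Fin N) : ℕ) < m then A l (σ (ρ⁻¹ j)) else 0)) ^ 2)]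
  refine h.trans (mul_le_mul_of_nonneg_left ?_ (sq_nonneg _))
  calc _ ≤ ∑ j, (A l (σ (ρ⁻¹ j))) ^ 2 := by
        apply Finset.sum_le_sum
        intro j _
        split_ifs
        · exact le_rfl
        · simp; positivity
    _ = _ := by
        rw [← Equiv.sum_comp (σ * ρ⁻¹) (fun j => A l j ^ 2)]; rfl

theorem cb_sum_inj {N r : ℕ} (X : ℕ → Fin N) (hX : Set.InjOn X (Finset.range r)) (g : Fin N → ℝ)
    (hg : ∀ x, 0 ≤ g x) : ∑ p ∈ Finset.range r, g (X p) ≤ ∑ x, g x := by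
  rw [← Finset.sum_image (f := g) hX]
  exact Finset.sum_le_sum_of_subset_of_nonneg (Finset.subset_univ _) (fun _ _ _ => hg _)

/-- Exponential moment bound. -/
theorem cb_exp {N : ℕ} (hN : 3 ≤ N) (C A : Matrix (Fin N) (Fin N) ℝ)
    (hcol : ∀ k, ∑ i, C i k = 0) (hd : ∀ i, C i i = 0) (ν : ℝ) (hν0 : 0 < ν)
    (hν : ∀ (i j : Fin N) (ρ σ : Equiv.Perm (Fin N)),
      |∑ k ∈ Finset.univ.filter (fun k : Fin N => (k : ℕ) < N / 2), C i (ρ k) * A j (σ k)| ≤ ν)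
    (θ : ℝ) (hθ : 0 < θ) :
    ∃ κ : ℝ, 1 / 16 ≤ κ ∧
    ∑ π : Equiv.Perm (Fin N), Real.exp (κ * θ * ∑ i, ∑ j, C i j * A (π i) (π j)) ≤
      N.factorial * Real.exp (4 * (opNorm C ^ 2 * frobNorm A ^ 2 / (N * ν ^ 2)) *
        (Real.cosh (2 * θ * ν) - 1)) := by
  obtain ⟨m, hm⟩ : ∃ m, m = N / 2 := ⟨_, rfl⟩
  obtain ⟨r, hr⟩ : ∃ r, r = (N - m + 3) / 4 := ⟨_, rfl⟩
  have hNr : (3:ℝ) ≤ N := by exact_mod_cast hN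
  have : NeZero N := ⟨by omega⟩
  set X : ℕ → Fin N := fun p => Fin.ofNat N (m + 2 * p) with hXdef
  set X' : ℕ → Fin N := fun p => Fin.ofNat N (m + 2 * p + 1) with hXdef'
  have hX : ∀ p < r, (X p : ℕ) = m + 2 * p := by
    intro p hp
    simp only [hXdef, Fin.val_ofNat]
    exact Nat.mod_eq_of_lt (by omega)
  have hX' : ∀ p < r, (X' p : ℕ) = m + 2 * p + 1 := by
    intro p hp
    simp only [hXdef', Fin.val_ofNat]
    exact Nat.mod_eq_of_lt (by omega)
  rw [← hm] at hν
  set Tt : Equiv.Perm (Fin N) → Equiv.Perm (Fin N) → ℝ := fun ρ σ =>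
    ∑ p ∈ Finset.range r, cbT (cbD C A m ρ) (X p) (X' p) σ with hTt
  have fpos : (0:ℝ) < N.factorial := by exact_mod_cast N.factorial_pos
  -- average
  have havg : ∀ π : Equiv.Perm (Fin N), ∑ ρ, Tt ρ (π * ρ) =
      N.factorial * ((r * m : ℝ) / (N * (N - 2)) * ∑ i, ∑ j, C i j * A (π i) (π j)) := by
    intro π
    have e1 : ∀ ρ, Tt ρ (π * ρ) = ∑ p ∈ Finset.range r,
        ∑ y ∈ Finset.univ.filter (fun y : Fin N => (y : ℕ) < m),
        ((C (ρ (X p)) (ρ y) - C (ρ (X' p)) (ρ y)) *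
          (A (π (ρ (X p))) (π (ρ y)) - A (π (ρ (X' p))) (π (ρ y)))) / 2 := by
      intro ρ
      simp only [hTt]
      refine Finset.sum_congr rfl fun p _ => ?_
      unfold cbT cbD
      rw [← Finset.sum_sub_distrib, ← Finset.sum_sub_distrib, ← Finset.sum_add_distrib, Finset.sum_div]
      refine Finset.sum_congr rfl fun y _ => ?_
      simp only [Equiv.Perm.mul_apply]
      ring
    simp only [e1]
    rw [Finset.sum_comm]
    have e2 : ∀ p ∈ Finset.range r, ∑ ρ : Equiv.Perm (Fin N),
        ∑ y ∈ Finset.univ.filter (fun y : Fin N => (y : ℕ) < m),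
        ((C (ρ (X p)) (ρ y) - C (ρ (X' p)) (ρ y)) *
          (A (π (ρ (X p))) (π (ρ y)) - A (π (ρ (X' p))) (π (ρ y)))) / 2 =
        m * (N.factorial / (N * (N - 2)) * ∑ i, ∑ j, C i j * A (π i) (π j)) := by
      intro p hp
      have hp := Finset.mem_range.1 hp
      have q1 := hX p hp
      have q2 := hX' p hp
      rw [Finset.sum_comm]
      have e3 : ∀ y ∈ Finset.univ.filter (fun y : Fin N => (y : ℕ) < m), ∑ ρ : Equiv.Perm (Fin N),
        ((C (ρ (X p)) (ρ y) - C (ρ (X' p)) (ρ y)) *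
          (A (π (ρ (X p))) (π (ρ y)) - A (π (ρ (X' p))) (π (ρ y)))) / 2 =
          N.factorial / (N * (N - 2)) * ∑ i, ∑ j, C i j * A (π i) (π j) := by
        intro y hy
        simp only [Finset.mem_filter, Finset.mem_univ, true_and] at hy
        have h := cb_avg hN C (fun i j => A (π i) (π j)) hcol hd (X p) (X' p) y
          (by intro h; rw [h] at q1; omega) (by intro h; rw [h] at q1; omega)
          (by intro h; rw [h] at q2; omega)
        rw [← Finset.sum_div]
        have : (N:ℝ) * (N - 2) ≠ 0 := by
          apply mul_ne_zero <;> linarith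
        have h9 : (N:ℝ) - 2 ≠ 0 := by linarith
        field_simp
        linarith
      rw [Finset.sum_congr rfl e3, Finset.sum_const, nsmul_eq_mul]
      congr 2
      have := Fin.card_filter_val_lt (n := N) (m := m)
      rw [min_eq_right (by omega)] at this
      convert this
    rw [Finset.sum_congr rfl e2]
    simp
    ring
  refine ⟨(r * m : ℝ) / (N * (N - 2)), ?_, ?_⟩
  · have h1 : (N:ℝ) ≤ 8 * r := by
      have : N ≤ 8 * r := by omega
      exact_mod_cast this
    have h2 : (N:ℝ) ≤ 2 * m + 1 := by
      have : N ≤ 2 * m + 1 := by omega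
      exact_mod_cast this
    rw [le_div_iff₀ (by nlinarith)]
    nlinarith
  set S := opNorm C ^ 2 * frobNorm A ^ 2 with hS
  have hS0 : 0 ≤ S := by positivity
  set G := (Real.cosh (2 * θ * ν) - 1) / (2 * ν) ^ 2 with hG
  have hG0 : 0 ≤ G := div_nonneg (by linarith [Real.one_le_cosh (2 * θ * ν)]) (by positivity)
  -- fixed rho
  have hfix : ∀ ρ, ∑ σ, Real.exp (θ * Tt ρ σ) ≤ N.factorial * Real.exp (8 * G / N * (2 * S)) := by
    intro ρ
    have h := cb_mgf (cbD C A m ρ) m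
      (by
        intro σ τ h
        funext x l
        unfold cbD
        refine Finset.sum_congr rfl fun y hy => ?_
        simp only [Finset.mem_filter, Finset.mem_univ, true_and] at hy
        rw [h y hy]) ν (fun σ x l => hν _ _ _ _) hν0 r X X' hX hX' θ hθ (8 * G / N)
      (by
        intro p hp
        have h1 : N ≤ 4 * (N - (m + 2 * p)) := by omega
        have h2 : (N:ℝ) ≤ 4 * ((N - (m + 2 * p) : ℕ) : ℝ) := by exact_mod_cast h1
        rw [← hG, div_le_div_iff₀ (by linarith) (by linarith)]
        nlinarith)
      r le_rfl (fun _ => 1) (fun _ => zero_le_one) (fun _ _ _ => rfl)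
    simp only [one_mul] at h
    refine h.trans ?_
    have hb : ∀ σ : Equiv.Perm (Fin N), Real.exp (8 * G / N * ∑ p ∈ Finset.range r,
        ∑ l, (cbD C A m ρ σ (X p) l ^ 2 + cbD C A m ρ σ (X' p) l ^ 2)) ≤ Real.exp (8 * G / N * (2 * S)) := by
      intro σ
      apply Real.exp_le_exp.2
      apply mul_le_mul_of_nonneg_left _ (by positivity)
      simp only [Finset.sum_add_distrib]
      have hs := cb_sumD C A m ρ σ
      have i1 := cb_sum_inj (r := r) X (by
        intro a ha b hb hab
        have ha : a < r := by simpa using ha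
        have hb : b < r := by simpa using hb
        have q1 := hX a ha
        have q2 := hX b hb
        rw [hab] at q1; omega) (fun x => ∑ l, cbD C A m ρ σ x l ^ 2)
        (fun x => Finset.sum_nonneg fun _ _ => sq_nonneg _)
      have i2 := cb_sum_inj (r := r) X' (by
        intro a ha b hb hab
        have ha : a < r := by simpa using ha
        have hb : b < r := by simpa using hb
        have q1 := hX' a ha
        have q2 := hX' b hb
        rw [hab] at q1; omega) (fun x => ∑ l, cbD C A m ρ σ x l ^ 2)
        (fun x => Finset.sum_nonneg fun _ _ => sq_nonneg _)
      linarith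
    refine (Finset.sum_le_sum fun σ _ => hb σ).trans (le_of_eq ?_)
    simp [Fintype.card_perm]
  -- Jensen
  have hJ : ∀ π : Equiv.Perm (Fin N),
      N.factorial * Real.exp ((r * m : ℝ) / (N * (N - 2)) * θ * ∑ i, ∑ j, C i j * A (π i) (π j)) ≤
      ∑ ρ, Real.exp (θ * Tt ρ (π * ρ)) := by
    intro π
    set q := (r * m : ℝ) / (N * (N - 2)) * θ * ∑ i, ∑ j, C i j * A (π i) (π j) with hq
    have h1 : ∀ ρ, Real.exp q * (1 + (θ * Tt ρ (π * ρ) - q)) ≤ Real.exp (θ * Tt ρ (π * ρ)) := by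
      intro ρ
      have := Real.add_one_le_exp (θ * Tt ρ (π * ρ) - q)
      calc _ ≤ Real.exp q * Real.exp (θ * Tt ρ (π * ρ) - q) :=
            mul_le_mul_of_nonneg_left (by linarith) (Real.exp_pos _).le
        _ = _ := by rw [← Real.exp_add]; congr 1; ring
    refine le_trans (le_of_eq ?_) (Finset.sum_le_sum fun ρ _ => h1 ρ)
    rw [← Finset.mul_sum, Finset.sum_add_distrib, Finset.sum_sub_distrib, ← Finset.mul_sum, havg]
    simp only [Finset.sum_const, Finset.card_univ, Fintype.card_perm, Fintype.card_fin, nsmul_eq_mul]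
    rw [hq]; ring
  have hfin : N.factorial * ∑ π : Equiv.Perm (Fin N),
      Real.exp ((r * m : ℝ) / (N * (N - 2)) * θ * ∑ i, ∑ j, C i j * A (π i) (π j)) ≤
      N.factorial * (N.factorial * Real.exp (8 * G / N * (2 * S))) := by
    rw [Finset.mul_sum]
    refine (Finset.sum_le_sum fun π _ => hJ π).trans ?_
    rw [Finset.sum_comm]
    have : ∀ ρ, ∑ π : Equiv.Perm (Fin N), Real.exp (θ * Tt ρ (π * ρ)) ≤
        N.factorial * Real.exp (8 * G / N * (2 * S)) := by
      intro ρ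
      rw [cb_sum_mul ρ (fun σ => Real.exp (θ * Tt ρ σ))]
      exact hfix ρ
    refine (Finset.sum_le_sum fun ρ _ => this ρ).trans (le_of_eq ?_)
    simp [Fintype.card_perm]
  have := le_of_mul_le_mul_left hfin fpos
  refine this.trans (le_of_eq ?_)
  congr 2
  rw [hG]
  field_simp
  ring

theorem cb_mean {N : ℕ} (C A : Matrix (Fin N) (Fin N) ℝ)
    (hrow : ∀ k, ∑ j, C k j = 0) (hd : ∀ i, C i i = 0) :
    ∑ σ : Equiv.Perm (Fin N), ∑ i, ∑ j, C i j * A (σ i) (σ j) = 0 := by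
  rw [Finset.sum_comm]
  apply Finset.sum_eq_zero
  intro i _
  rw [Finset.sum_comm]
  simp only [← Finset.mul_sum]
  by_cases h : ∃ j0, j0 ≠ i
  · obtain ⟨j0, hj0⟩ := h
    have : ∀ j ∈ Finset.univ, C i j * ∑ σ : Equiv.Perm (Fin N), A (σ i) (σ j) =
        C i j * ∑ σ : Equiv.Perm (Fin N), A (σ i) (σ j0) := by
      intro j _
      by_cases hj : j = i
      · subst hj; simp [hd]
      · congr 1
        rw [← cb_sum_mul (Equiv.swap j j0)]
        simp [Equiv.swap_apply_of_ne_of_ne (Ne.symm hj) hj0.symm]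
    rw [Finset.sum_congr rfl this, ← Finset.sum_mul, hrow, zero_mul]
  · push Not at h
    apply Finset.sum_eq_zero
    intro j _
    rw [h j, hd, zero_mul]

theorem cb_small {N : ℕ} (hN : N < 3) (C : Matrix (Fin N) (Fin N) ℝ)
    (hrow : ∀ k, ∑ j, C k j = 0) (hd : ∀ i, C i i = 0) : C = 0 := by
  ext i j
  interval_cases N
  · exact i.elim0
  · fin_cases i; fin_cases j; exact hd 0
  · have h0 := hrow 0
    have h1 := hrow 1
    rw [Fin.sum_univ_two] at h0 h1
    have d0 := hd 0
    have d1 := hd 1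
    fin_cases i <;> fin_cases j <;> simp <;> linarith

/-- A combinatorial Bennett-type inequality. -/
theorem combinatorial_bennett :
    ∃ K : ℝ, 0 < K ∧
      ∀ (N : ℕ) (hN : 0 < N)
        (C A : Matrix (Fin N) (Fin N) ℝ),
        (∀ k, ∑ i, C i k = 0) →
        (∀ k, ∑ j, C k j = 0) →
        (∀ i, C i i = 0) →
        ∀ ν : ℝ,
          ν = Finset.univ.sup'
              ⟨((⟨0, hN⟩, ⟨0, hN⟩), (1, 1)), Finset.mem_univ _⟩
              (fun p : (Fin N × Fin N) × Equiv.Perm (Fin N) × Equiv.Perm (Fin N) =>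
                |∑ k ∈ Finset.univ.filter (fun k : Fin N => (k : ℕ) < N / 2),
                    C p.1.1 (p.2.1 k) * A p.1.2 (p.2.2 k)|) →
          0 < ν →
          ∀ t : ℝ, 0 ≤ t →
            permProb N (fun σ =>
                (∑ i, ∑ j, C i j * A (σ i) (σ j))
                  - permExp N (fun σ' => ∑ i, ∑ j, C i j * A (σ' i) (σ' j)) ≥ t)
              ≤ Real.exp (-(t / (K * ν)) *
                  Real.log (1 + (N : ℝ) * ν * t /
                    (K * (opNorm C) ^ 2 * (frobNorm A) ^ 2))) := by
  refine ⟨96, by norm_num, ?_⟩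
  intro N hN C A hcol hrow hd ν hνdef hν0 t ht
  have fpos : (0:ℝ) < N.factorial := by exact_mod_cast N.factorial_pos
  have hν : ∀ (i j : Fin N) (ρ σ : Equiv.Perm (Fin N)),
      |∑ k ∈ Finset.univ.filter (fun k : Fin N => (k : ℕ) < N / 2), C i (ρ k) * A j (σ k)| ≤ ν := by
    intro i j ρ σ
    rw [hνdef]
    exact Finset.le_sup' (fun p : (Fin N × Fin N) × Equiv.Perm (Fin N) × Equiv.Perm (Fin N) =>
                |∑ k ∈ Finset.univ.filter (fun k : Fin N => (k : ℕ) < N / 2),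
                    C p.1.1 (p.2.1 k) * A p.1.2 (p.2.2 k)|) (Finset.mem_univ ((i, j), (ρ, σ)))
  have hN3 : 3 ≤ N := by
    by_contra h
    have hC := cb_small (by omega) C hrow hd
    have : ν ≤ 0 := by
      rw [hνdef]
      apply Finset.sup'_le
      intro p _
      simp [hC]
    linarith
  have hNr : (3:ℝ) ≤ N := by exact_mod_cast hN3
  have hmean : permExp N (fun σ' => ∑ i, ∑ j, C i j * A (σ' i) (σ' j)) = 0 := by
    unfold permExp
    rw [cb_mean C A hrow hd, zero_div]
  simp only [hmean, sub_zero]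
  have hle1 : ∀ P : Equiv.Perm (Fin N) → Prop, permProb N P ≤ 1 := by
    intro P
    unfold permProb
    rw [div_le_one fpos]
    have := Finset.card_filter_le (Finset.univ : Finset (Equiv.Perm (Fin N))) P
    rw [Finset.card_univ, Fintype.card_perm, Fintype.card_fin] at this
    exact_mod_cast this
  by_cases hS : opNorm C ^ 2 * frobNorm A ^ 2 = 0
  · rw [mul_assoc 96, hS]
    simpa using hle1 _
  rcases ht.eq_or_lt with rfl | ht
  · simpa using hle1 _
  have hSp : 0 < opNorm C ^ 2 * frobNorm A ^ 2 := lt_of_le_of_ne (by positivity) (Ne.symm hS)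
  set S := opNorm C ^ 2 * frobNorm A ^ 2 with hSdef
  have hw : (N : ℝ) * ν * t / (96 * opNorm C ^ 2 * frobNorm A ^ 2) = N * ν * t / (96 * S) := by
    rw [hSdef, mul_assoc 96]
  rw [hw]
  set w := N * ν * t / (96 * S) with hwdef
  have hwp : 0 < w := by positivity
  set s := Real.log (1 + w) with hs
  have hsp : 0 < s := Real.log_pos (by linarith)
  obtain ⟨κ, hκ, hE⟩ := cb_exp hN3 C A hcol hd ν hν0 hν (s / (2 * ν)) (by positivity)
  have hκp : 0 < κ := by linarith
  rw [show 2 * (s / (2 * ν)) * ν = s by field_simp] at hE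
  have hcosh : Real.cosh s - 1 = w ^ 2 / (2 * (1 + w)) := by
    rw [Real.cosh_eq, Real.exp_neg, hs, Real.exp_log (by linarith)]
    field_simp
    ring
  have hsw : w / (1 + w) ≤ s := by
    have := Real.one_sub_inv_le_log_of_pos (x := 1 + w) (by linarith)
    refine le_trans (le_of_eq ?_) this
    field_simp
    ring
  set B := S / (N * ν ^ 2) with hB
  have hBp : 0 < B := by positivity
  have hBt : t = 96 * B * w * ν := by
    rw [hB, hwdef]; field_simp
  have markov : permProb N (fun σ => (∑ i, ∑ j, C i j * A (σ i) (σ j)) ≥ t) ≤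
      Real.exp (-(κ * (s / (2 * ν)) * t)) * Real.exp (4 * B * (Real.cosh s - 1)) := by
    unfold permProb
    rw [div_le_iff₀ fpos]
    have h1 : ((Finset.univ.filter (fun σ : Equiv.Perm (Fin N) => (∑ i, ∑ j, C i j * A (σ i) (σ j)) ≥ t)).card : ℝ) ≤
        ∑ σ : Equiv.Perm (Fin N), Real.exp (-(κ * (s / (2 * ν)) * t)) *
          Real.exp (κ * (s / (2 * ν)) * ∑ i, ∑ j, C i j * A (σ i) (σ j)) := by
      rw [Finset.card_filter]
      push_cast
      apply Finset.sum_le_sum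
      intro σ _
      split_ifs with h
      · rw [← Real.exp_add]
        apply Real.one_le_exp
        have : 0 ≤ κ * (s / (2 * ν)) := by positivity
        nlinarith
      · positivity
    rw [← Finset.mul_sum] at h1
    have h2 := mul_le_mul_of_nonneg_left hE (Real.exp_pos (-(κ * (s / (2 * ν)) * t))).le
    calc _ ≤ _ := h1
      _ ≤ _ := h2
      _ = _ := by ring
  refine markov.trans ?_
  rw [← Real.exp_add]
  apply Real.exp_le_exp.2
  have h1 : 4 * B * (Real.cosh s - 1) ≤ 2 * B * w * s := by
    rw [hcosh]
    calc _ = 2 * B * w * (w / (1 + w)) := by field_simp; ring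
      _ ≤ _ := mul_le_mul_of_nonneg_left hsw (by positivity)
  have h2 : κ * (s / (2 * ν)) * t = κ * (48 * B * w * s) := by
    rw [hBt]; field_simp; ring
  have h3 : -(t / (96 * ν)) * s = -(B * w * s) := by
    rw [hBt]; field_simp
  rw [h2, h3]
  have h4 : 0 < B * w * s := by positivity
  nlinarith [mul_le_mul_of_nonneg_right hκ h4.le]
end
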